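/- arXiv:2403.11436 — 4 statements merged into one kernel-verified Lean document; each statement's English description precedes it below -/
import Mathlib

section
/- Let q = 2^m ≥ 8 and k = q − 3. Then u ∈ 𝔽_q^q is a deep hole of TRS_{q-3}(𝔽_q, θ) if and only if either (a) u = u_{a x^{q-3} + g} for some a ∈ 𝔽_q with a ≠ 0 and g ∈ S_{q-3,θ}, or (b) m is odd and u = u_{a (x^{q-2} + θ^{-1} x^{q-3}) + g} for some a ∈ 𝔽_q with a ≠ 0 and g ∈ S_{q-3,θ}. -/
/-!
The sums `∑ x, x ^ n` over `𝔽_q` vanish unless `n` is a positive multiple of `q - 1`. Hence the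
syndrome `∑ j, u j • (1, α j, α j ^ 2 + θ α j ^ 3)` of the word of a polynomial with coefficients
`c` equals `(c_{q-1}, c_{q-2}, c_{q-3} + θ c_{q-4})` (`syn_eval`). Its kernel is the code
(`mem_TRS_iff`), and the distance of `u` to the code is the least number of columns
`(1, a, a ^ 2 + θ a ^ 3)` that span the syndrome of `u` (`distTo_le_iff`). Three columns always
suffice and `(0, 0, 1)` needs three, so the covering radius is `3` and the deep holes are the words
whose syndrome `(s₀, s₁, s₂)` is not a combination of two columns.

Two columns suffice except in the two listed families (`secant_span_iff`):

* If `s₀ ≠ 0`, the point `(s₁ / s₀, s₂ / s₀)` has to lie on a secant of the cubic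
  `y = x ^ 2 + θ x ^ 3`. After a translation this is `x y (c + θ (x + y)) = h` with `x ≠ y`. For
  `c ≠ 0` there are explicit solutions, obtained from the `S₃`-symmetry of this plane cubic and,
  when it is singular, from its rational parametrization. For `c = 0` the existence follows by
  summing `κ w ^ 3` modulo the index-two subgroup `{z ^ 2 + z}` (`exists_cubic_form`).
* If `s₀ = 0` and `s₁ ≠ 0`, the ratio `s₂ / s₁` has to be the slope of a chord of the cubic. Every
  slope other than `θ⁻¹` occurs, and `θ⁻¹` occurs exactly when `𝔽_q` contains a primitive cube root
  of unity, that is when `m` is even.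
* If `s₀ = s₁ = 0`, only the zero syndrome is a combination of two columns.
-/

open Polynomial Finset

/-- The set `S_{k,θ}` of twisted polynomials
`Σ_{i=0}^{k-2} f_i x^i + f_{k-1}(x^{k-1} + θ x^k)`. -/
def Sset (F : Type*) [Field F] (k : ℕ) (θ : F) : Set (Polynomial F) :=
  {p | ∃ f : ℕ → F, p = (∑ i ∈ Finset.range (k - 1), Polynomial.C (f i) * Polynomial.X ^ i)
        + Polynomial.C (f (k - 1)) * (Polynomial.X ^ (k - 1) + Polynomial.C θ * Polynomial.X ^ k)}

/-- The twisted Reed–Solomon code `TRS_k(A, θ)` for the evaluation sequence `α`. -/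
def TRS {F : Type*} [Field F] {n : ℕ} (α : Fin n → F) (k : ℕ) (θ : F) : Set (Fin n → F) :=
  {v | ∃ p ∈ Sset F k θ, v = fun j => p.eval (α j)}

/-- The (Hamming) error distance `d(u, C)` from a word `u` to a code `C`. -/
noncomputable def distTo {F : Type*} [DecidableEq F] {n : ℕ} (u : Fin n → F)
    (C : Set (Fin n → F)) : ℕ :=
  sInf {d | ∃ c ∈ C, hammingDist u c = d}

/-- The covering radius `ρ(C) = max_u d(u, C)` of a code `C`. -/
noncomputable def covRad {F : Type*} [DecidableEq F] {n : ℕ} (C : Set (Fin n → F)) : ℕ :=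
  sSup {d | ∃ u, distTo u C = d}

/-- `u` is a deep hole of `C` if `d(u, C) = ρ(C)`. -/
def IsDeepHole {F : Type*} [DecidableEq F] {n : ℕ} (C : Set (Fin n → F)) (u : Fin n → F) :
    Prop :=
  distTo u C = covRad C

/-- The column vector `c_{r,θ}(a) = (1, a, …, a^{r-2}, a^{r-1} - θ a^r)ᵀ ∈ 𝔽_q^r`. -/
def crv (F : Type*) [Field F] (r : ℕ) (θ a : F) : Fin r → F :=
  fun i => if (i : ℕ) = r - 1 then a ^ (r - 1) - θ * a ^ r else a ^ (i : ℕ)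

/-- The parity-check matrix `H` whose `j`-th column is `c_{r,θ}(α_j)`. -/
def Hmat {F : Type*} [Field F] {n : ℕ} (r : ℕ) (θ : F) (α : Fin n → F) :
    Matrix (Fin r) (Fin n) F :=
  Matrix.of fun i j => crv F r θ (α j) i

/-! ### Chords and secants of the curve `y = x ^ 2 + θ x ^ 3` in characteristic two -/

section Alg
variable {F : Type*} [Field F] [CharP F 2]

/-- For `c ≠ 0` the equation is `x y z = h / θ` with `x + y + z = c / θ`, a plane cubic
invariant under permuting the three coordinates. It contains the diagonal point
`(r, r, c / θ)` with `r ^ 2 = h / c`, and swapping coordinates gives a point with `x ≠ y`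
unless `r = c / θ`. In that remaining case the cubic is singular and has a rational
parametrization by `t`. -/
theorem secant_sq_case {θ h c : F} (hθ : θ ≠ 0) (hc : c ≠ 0) (hs : ∀ x : F, ∃ y, y ^ 2 = x)
    (ht : ∃ t : F, t ≠ 0 ∧ t ≠ 1 ∧ t ^ 3 ≠ 1) :
    ∃ x y : F, x ≠ y ∧ x * y * (c + θ * (x + y)) = h := by
  obtain ⟨r, hr⟩ := hs (h / c)
  have h2 : (2 : F) = 0 := CharTwo.two_eq_zero
  by_cases hrc : r = c / θ
  · obtain ⟨t, h0, h1, h3⟩ := ht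
    have h1' : t + 1 ≠ 0 := by grind
    refine ⟨c / θ * (1 / (t * (t + 1))), c / θ * (t ^ 2 / (t + 1)), ?_, ?_⟩
    · field_simp
      grind
    · field_simp at *
      grind
  · refine ⟨r, c / θ, hrc, ?_⟩
    field_simp at *
    grind

/-- The slope of the chord of `x ^ 2 + θ x ^ 3` through `a ≠ b` takes every value
`t ≠ θ⁻¹`. With one end at `θ⁻¹` and the other at `θ⁻¹ + s` the slope is `θ s ^ 2 + θ⁻¹`. -/
theorem exists_chord_of_slope {θ t : F} (hθ : θ ≠ 0) (ht : t ≠ θ⁻¹)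
    (hs : ∀ x : F, ∃ y, y ^ 2 = x) :
    ∃ a b : F, a ≠ b ∧ (a + b) + θ * (a ^ 2 + a * b + b ^ 2) = t := by
  have h2 : (2 : F) = 0 := CharTwo.two_eq_zero
  obtain ⟨s, hs⟩ := hs ((t * θ + 1) / θ ^ 2)
  refine ⟨θ⁻¹, θ⁻¹ + s, ?_, ?_⟩
  · field_simp at *
    grind
  · field_simp at *
    grind

/-- The exceptional slope `θ⁻¹` is attained exactly when there is a primitive cube root of
unity; a chord yields `ω = a / (a + b) + 1 / (θ (a + b))`. -/
theorem special_dir_iff {θ : F} (hθ : θ ≠ 0) :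
    (∃ a b : F, a ≠ b ∧ (a + b) + θ * (a ^ 2 + a * b + b ^ 2) = θ⁻¹) ↔
      ∃ ω : F, ω ^ 2 + ω + 1 = 0 := by
  have h2 : (2 : F) = 0 := CharTwo.two_eq_zero
  constructor
  · rintro ⟨a, b, hab, h⟩
    have : a + b ≠ 0 := by grind
    refine ⟨a / (a + b) + 1 / (θ * (a + b)), ?_⟩
    field_simp at *
    grind
  · rintro ⟨ω, h⟩
    refine ⟨(ω + 1) / θ, ω / θ, ?_, ?_⟩
    · field_simp
      grind
    · field_simp
      grind
end Alg

/-! ### Secants when `c = 0`, and cube roots of unity -/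

section Alg
variable {F : Type*} [Field F] [CharP F 2]

/-- Elements outside a subgroup of index two sum into it exactly when their number is even. -/
theorem sum_mem_iff_even_card {G ι : Type*} [AddCommGroup G] (H : AddSubgroup G)
    (hH : H.index = 2) (s : Finset ι) (f : ι → G) (hf : ∀ i ∈ s, f i ∉ H) :
    ∑ i ∈ s, f i ∈ H ↔ Even s.card := by
  classical
  induction s using Finset.induction_on with
  | empty => simp
  | insert a s ha ih =>
    rw [Finset.sum_insert ha, AddSubgroup.add_mem_iff_of_index_two hH,
      ih (fun i hi => hf i (Finset.mem_insert_of_mem hi)), Finset.card_insert_of_notMem ha,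
      Nat.even_add_one]
    have := hf a (Finset.mem_insert_self a s)
    tauto

variable (F) in
/-- The Artin–Schreier map `z ↦ z ^ 2 + z` as an additive homomorphism in characteristic two. -/
def artinSchreier : F →+ F where
  toFun z := z ^ 2 + z
  map_zero' := by simp
  map_add' x y := by rw [CharTwo.add_sq]; ring

theorem artinSchreier_index [Fintype F] : (artinSchreier F).range.index = 2 := by
  have h1 := AddSubgroup.card_mul_index (artinSchreier F).ker
  have h2 := AddSubgroup.card_mul_index (artinSchreier F).range
  rw [AddSubgroup.index_ker] at h1
  have hk : Nat.card (artinSchreier F).ker = 2 := by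
    have : ((artinSchreier F).ker : Set F) = {0, 1} := by
      ext z
      have : z ^ 2 + z = 0 ↔ z = 0 ∨ z = 1 := by
        rw [show z ^ 2 + z = z * (z + 1) by ring, mul_eq_zero, CharTwo.add_eq_zero]
      simpa [AddMonoidHom.mem_ker, artinSchreier] using this
    rw [← SetLike.coe_sort_coe, this, Nat.card_coe_set_eq, Set.ncard_pair zero_ne_one]
  have hpos : 0 < Nat.card (artinSchreier F).range := Nat.card_pos
  rw [hk, ← h2, mul_comm] at h1
  exact (Nat.eq_of_mul_eq_mul_left hpos h1).symm

/-- The binary cubic form `x y (x + y)` represents every `κ ≠ 0`. With `x = 1 / w`, `y = z / w`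
this asks for `w ≠ 0` such that `κ w ^ 3` is of the form `z ^ 2 + z`. Were there none, the
`q - 1` values `κ w ^ 3`, an odd number of them, would all lie outside a subgroup of index
two, although their sum is `0`. -/
theorem exists_cubic_form [Fintype F] (hq8 : 8 ≤ Fintype.card F) (κ : F) (hκ : κ ≠ 0) :
    ∃ x y : F, x ≠ y ∧ x * y * (x + y) = κ := by
  classical
  have hcard : Odd (univ.erase (0 : F)).card := by
    rw [card_erase_of_mem (mem_univ _), card_univ]
    obtain ⟨n, -, hn⟩ := FiniteField.card F 2
    rw [hn]
    refine Nat.Even.sub_odd Nat.one_le_two_pow ?_ odd_one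
    exact (even_two).pow_of_ne_zero n.ne_zero
  have hsum : ∑ w ∈ univ.erase (0 : F), κ * w ^ 3 = 0 := by
    have h3 : ∑ w : F, w ^ 3 = 0 := FiniteField.sum_pow_lt_card_sub_one F 3 (by omega)
    rw [Finset.sum_erase univ (f := fun w : F => κ * w ^ 3) (by simp), ← mul_sum, h3, mul_zero]
  have : ∃ w : F, w ≠ 0 ∧ κ * w ^ 3 ∈ (artinSchreier F).range := by
    by_contra! hcon
    have := sum_mem_iff_even_card (artinSchreier F).range artinSchreier_index (univ.erase (0 : F))
      (fun w => κ * w ^ 3) (fun w hw => hcon w (Finset.ne_of_mem_erase hw))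
    rw [hsum] at this
    exact (Nat.not_even_iff_odd.2 hcard) (this.1 (zero_mem _))
  obtain ⟨w, hw, z, hz⟩ := this
  have hz : z ^ 2 + z = κ * w ^ 3 := hz
  refine ⟨1 / w, z / w, ?_, ?_⟩
  · have h2 : (2 : F) = 0 := CharTwo.two_eq_zero
    have := mul_ne_zero hκ (pow_ne_zero 3 hw)
    field_simp
    grind
  · field_simp
    grind

/-- Through every point off the curve there is a secant: after translating the
point to abscissa `0`, collinearity of `(0, h)` with the points of the curve
`c x ^ 2 + θ x ^ 3` at `x` and `y` is the displayed equation. The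
translated curve also has a linear term, but a shear fixing the vertical axis removes it. -/
theorem exists_secant [Fintype F] (hq8 : 8 ≤ Fintype.card F) {θ h c : F} (hθ : θ ≠ 0) (hh : h ≠ 0)
    (hs : ∀ x : F, ∃ y, y ^ 2 = x) :
    ∃ x y : F, x ≠ y ∧ x * y * (c + θ * (x + y)) = h := by
  by_cases hc : c = 0
  · obtain ⟨x, y, hxy, h⟩ := exists_cubic_form hq8 (h / θ) (div_ne_zero hh hθ)
    refine ⟨x, y, hxy, ?_⟩
    rw [hc, zero_add, mul_left_comm, h, mul_div_cancel₀ _ hθ]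
  -- `t ^ 4 ≠ t` excludes `0`, `1` and the primitive cube roots of unity.
  · have : ∃ t : F, (X ^ 4 - X : F[X]).eval t ≠ 0 := by
      have hd : (X ^ 4 - X : F[X]).natDegree = 4 := by compute_degree!
      apply Polynomial.exists_eval_ne_zero_of_natDegree_lt_card
      · intro h0
        simp [h0] at hd
      · simp [hd]; omega
    obtain ⟨t, ht⟩ := this
    simp only [eval_sub, eval_pow, eval_X] at ht
    refine secant_sq_case hθ hc hs ⟨t, ?_, ?_, ?_⟩
    · rintro rfl; simp at ht
    · rintro rfl; simp at ht
    · intro h3; apply ht; linear_combination t * h3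

/-- There is a primitive cube root of unity exactly when `3 ∣ 2 ^ m - 1`, that is for even `m`. -/
theorem exists_omega_iff [Fintype F] (m : ℕ) (hm : Fintype.card F = 2 ^ m) :
    (∃ ω : F, ω ^ 2 + ω + 1 = 0) ↔ ¬ Odd m := by
  classical
  have h2 : (2 : F) = 0 := CharTwo.two_eq_zero
  have hpow : 3 ∣ 2 ^ m - 1 ↔ ¬ Odd m := by
    rw [Nat.not_odd_iff_even]
    rcases Nat.even_or_odd' m with ⟨k, rfl | rfl⟩
    · have : 4 ^ k % 3 = 1 := by simp [Nat.pow_mod]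
      simp [pow_mul]; omega
    · have : 4 ^ k % 3 = 1 := by simp [Nat.pow_mod]
      have h : ¬ Even (2 * k + 1) := by simp
      simp only [h, iff_false, pow_succ, pow_mul]
      norm_num; omega
  rw [← hpow, ← hm, ← Fintype.card_units]
  have : Fact (Nat.Prime 3) := ⟨Nat.prime_three⟩
  constructor
  · rintro ⟨ω, h⟩
    have h0 : ω ≠ 0 := by rintro rfl; simp at h
    have ho : orderOf (Units.mk0 ω h0) = 3 := by
      apply orderOf_eq_prime
      · ext; simp; grind
      · intro h1
        have : ω = 1 := by simpa using congrArg Units.val h1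
        grind
    rw [← ho]
    exact orderOf_dvd_card
  · intro hd
    obtain ⟨x, hx⟩ := exists_prime_orderOf_dvd_card 3 hd
    refine ⟨x, ?_⟩
    have h3 : (x : F) ^ 3 = 1 := by
      have := pow_orderOf_eq_one x
      rw [hx] at this
      simpa using congrArg Units.val this
    have h1 : (x : F) ≠ 1 := by
      intro h
      have : x = 1 := by ext; simpa using h
      simp [this] at hx
    have : ((x : F) + 1) ≠ 0 := by grind
    apply mul_left_cancel₀ this
    grind
end Alg

/-! ### Syndromes -/

section Syn
variable {F : Type*} [Field F]

/-- The column `(1, a, a ^ 2 + θ a ^ 3)` of the parity-check matrix of `TRS_{q-3}(𝔽_q, θ)`; in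
characteristic two the sign in front of `θ` is immaterial. -/
def synCol (θ a : F) : F × F × F := (1, a, a ^ 2 + θ * a ^ 3)

/-- The syndrome map `u ↦ ∑ j, u j • synCol θ (α j)`. -/
def syn {n : ℕ} (θ : F) (α : Fin n → F) : (Fin n → F) →ₗ[F] F × F × F :=
  ∑ j, (LinearMap.proj j : (Fin n → F) →ₗ[F] F).smulRight (synCol θ (α j))

theorem syn_apply {n : ℕ} (θ : F) (α : Fin n → F) (u : Fin n → F) :
    syn θ α u = ∑ j, u j • synCol θ (α j) := by
  simp [syn, LinearMap.sum_apply]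

theorem syn_eq {n : ℕ} (θ : F) (α : Fin n → F) (u : Fin n → F) :
    syn θ α u = (∑ j, u j, ∑ j, u j * α j, ∑ j, u j * (α j ^ 2 + θ * α j ^ 3)) := by
  rw [syn_apply]
  ext <;> simp [synCol, Prod.fst_sum, Prod.snd_sum]

theorem syn_single {n : ℕ} [DecidableEq F] (θ : F) (α : Fin n → F) (i : Fin n) (c : F) :
    syn θ α (Pi.single i c) = c • synCol θ (α i) := by
  rw [syn_apply, Finset.sum_eq_single i]
  · simp
  · intro j _ hj; simp [hj]
  · simp

theorem sum_pow_eq [Fintype F] (n : ℕ) :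
    ∑ x : F, x ^ n = if 0 < n ∧ Fintype.card F - 1 ∣ n then -1 else 0 := by
  classical
  rcases Nat.eq_zero_or_pos n with rfl | hn
  · simp
  · have h := FiniteField.sum_pow_units F n
    simp only [hn, true_and]
    rw [← h, ← Finset.sum_erase univ (f := fun x : F => x ^ n) (a := 0) (by simp [hn.ne'])]
    symm
    refine Finset.sum_bij (fun x _ => (x : F)) (by simp) (fun a _ b _ h => Units.ext h) ?_ (by simp)
    intro b hb
    exact ⟨Units.mk0 b (Finset.ne_of_mem_erase hb), by simp, rfl⟩

variable [Fintype F]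

/-- Power sums over the field extract coefficients: for `i < q` and `j ≤ 3`, the sum of
`x ^ (i + j)` vanishes unless `i + j = q - 1`. -/
theorem sum_moment {q : ℕ} (hq : q = Fintype.card F) (hq8 : 8 ≤ q) {α : Fin q → F}
    (hα : Function.Bijective α) (c : ℕ → F) (j : ℕ) (hj : j ≤ 3) :
    ∑ x, (∑ i ∈ range q, c i * α x ^ i) * α x ^ j = - c (q - 1 - j) := by
  have h1 : ∀ i, ∑ x, α x ^ (i + j) = if 0 < i + j ∧ q - 1 ∣ i + j then (-1 : F) else 0 := by
    intro i
    have h := sum_pow_eq (F := F) (i + j)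
    rw [← hq] at h
    rw [← h]
    exact hα.sum_comp (fun x : F => x ^ (i + j))
  simp_rw [Finset.sum_mul]
  rw [Finset.sum_comm]
  simp_rw [mul_assoc, ← pow_add, ← Finset.mul_sum, h1]
  rw [Finset.sum_eq_single (q - 1 - j)]
  · rw [if_pos]
    · ring
    · have : q - 1 - j + j = q - 1 := by omega
      rw [this]; exact ⟨by omega, dvd_rfl⟩
  · intro i hi hij
    rw [mem_range] at hi
    rw [if_neg, mul_zero]
    rintro ⟨h0, d, hd⟩
    rcases d with _ | _ | d
    · omega
    · omega
    -- `i + j ≤ q + 2 < 2 (q - 1)`, so `i + j` cannot be a higher multiple of `q - 1`.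
    · have : (q - 1) * 2 ≤ (q - 1) * (d + 1 + 1) := Nat.mul_le_mul_left _ (by omega)
      omega
  · intro h; rw [mem_range] at h; omega

variable [CharP F 2]

theorem syn_eval {q : ℕ} (hq : q = Fintype.card F) (hq8 : 8 ≤ q) {α : Fin q → F}
    (hα : Function.Bijective α) (θ : F) (c : ℕ → F) :
    syn θ α (fun x => ∑ i ∈ range q, c i * α x ^ i)
      = (c (q - 1), c (q - 2), c (q - 3) + θ * c (q - 4)) := by
  have h := fun j hj => sum_moment hq hq8 hα c j hj
  simp only [CharTwo.neg_eq] at h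
  rw [syn_eq]
  refine Prod.ext ?_ (Prod.ext ?_ ?_)
  · simpa using h 0 (by omega)
  · simpa [show q - 1 - 1 = q - 2 by omega] using h 1 (by omega)
  · simp only [mul_add, mul_left_comm _ θ, Finset.sum_add_distrib, ← Finset.mul_sum]
    rw [h 2 (by omega), h 3 (by omega)]
    rfl

omit [Fintype F] [CharP F 2] in
theorem exists_coeffs {q : ℕ} (hq8 : 8 ≤ q) {α : Fin q → F}
    (hα : Function.Bijective α) (u : Fin q → F) :
    ∃ c : ℕ → F, u = fun x => ∑ i ∈ range q, c i * α x ^ i := by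
  classical
  refine ⟨(Lagrange.interpolate univ α u).coeff, ?_⟩
  funext x
  have hd : (Lagrange.interpolate univ α u).degree < (q : ℕ) := by
    simpa using Lagrange.degree_interpolate_lt u (s := univ) (hα.injective.injOn)
  have hd' : (Lagrange.interpolate univ α u).natDegree < q := by
    by_cases h : Lagrange.interpolate univ α u = 0
    · rw [h]; simp; omega
    · rwa [← Polynomial.natDegree_lt_iff_degree_lt h] at hd
  rw [← Polynomial.eval_eq_sum_range' hd',
    Lagrange.eval_interpolate_at_node u hα.injective.injOn (mem_univ x)]

theorem mem_TRS_iff {q : ℕ} (hq : q = Fintype.card F) (hq8 : 8 ≤ q) {α : Fin q → F}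
    (hα : Function.Bijective α) (θ : F) (u : Fin q → F) :
    u ∈ TRS α (q - 3) θ ↔ syn θ α u = 0 := by
  obtain ⟨p, rfl⟩ : ∃ p, q = p + 4 := ⟨q - 4, by omega⟩
  have e1 : p + 4 - 3 = p + 1 := rfl
  constructor
  · rintro ⟨_, ⟨f, rfl⟩, rfl⟩
    have := syn_eval hq hq8 hα θ
      (fun i => if i ≤ p then f i else if i = p + 1 then θ * f p else 0)
    convert this using 1
    · congr 1
      funext x
      rw [sum_range_succ, sum_range_succ, sum_range_succ, sum_range_succ]
      rw [Finset.sum_congr rfl (g := fun i => f i * α x ^ i) (fun i hi => by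
        rw [mem_range] at hi; rw [if_pos hi.le])]
      simp [e1, eval_finsetSum]
      ring
    · simp [e1, CharTwo.add_self_eq_zero, Prod.ext_iff]
  · intro h
    obtain ⟨c, rfl⟩ := exists_coeffs hq8 hα u
    rw [syn_eval hq hq8 hα] at h
    simp only [Prod.mk_eq_zero] at h
    obtain ⟨h1, h2, h3⟩ := h
    have h1 : c (p + 3) = 0 := h1
    have h2 : c (p + 2) = 0 := h2
    have h3 : c (p + 1) + θ * c p = 0 := h3
    rw [CharTwo.add_eq_zero] at h3
    refine ⟨_, ⟨c, rfl⟩, ?_⟩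
    funext x
    rw [sum_range_succ, sum_range_succ, sum_range_succ, sum_range_succ]
    simp [e1, eval_finsetSum, h1, h2, h3]
    ring

end Syn

/-! ### Distances and deep holes -/

section Deep
variable {F : Type*} [Field F] [Fintype F] [DecidableEq F] [CharP F 2]

/-- A syndrome `s` is a combination of at most two columns exactly when it is neither
`(0, 0, s₂)` with `s₂ ≠ 0` nor, for odd `m`, a nonzero multiple of `(0, 1, θ⁻¹)`. If `s₀ ≠ 0`
this says that the affine point `(s₁ / s₀, s₂ / s₀)` lies on a secant of the curve
`y = x ^ 2 + θ x ^ 3`; if `s₀ = 0` it says that `s₂ / s₁` is the slope of a chord. -/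
theorem secant_span_iff {m : ℕ} (hm : Fintype.card F = 2 ^ m) (hq8 : 8 ≤ Fintype.card F)
    {θ : F} (hθ : θ ≠ 0) (s : F × F × F) :
    (∃ a b x y : F, a ≠ b ∧ s = x • synCol θ a + y • synCol θ b) ↔
      ¬ (s.1 = 0 ∧ ((s.2.1 = 0 ∧ s.2.2 ≠ 0) ∨ (Odd m ∧ s.2.1 ≠ 0 ∧ s.2.2 = s.2.1 * θ⁻¹))) := by
  have h2 : (2 : F) = 0 := CharTwo.two_eq_zero
  have hs : ∀ x : F, ∃ y, y ^ 2 = x := fun x => by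
    obtain ⟨y, hy⟩ := FiniteField.isSquare_of_char_two (ringChar.eq_iff.2 ‹CharP F 2›) x
    exact ⟨y, by rw [hy, sq]⟩
  obtain ⟨s0, s1, s2⟩ := s
  simp only [synCol, Prod.smul_mk, Prod.mk_add_mk, Prod.mk.injEq, smul_eq_mul, mul_one]
  by_cases h0 : s0 = 0
  · subst h0
    by_cases h1 : s1 = 0
    · subst h1
      by_cases h2' : s2 = 0
      · subst h2'
        simp only [ne_eq, not_true_eq_false, and_false, false_and, or_self, not_false_eq_true,
          iff_true]
        exact ⟨0, 1, 0, 0, by simp⟩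
      · simp only [true_and, ne_eq, h2', not_false_eq_true, true_or, not_true_eq_false, iff_false]
        rintro ⟨a, b, x, y, hab, e0, e1, e2⟩
        have hxy : y = x := by grind
        have : x * (a + b) = 0 := by grind
        have hab' : a + b ≠ 0 := by grind
        have : x = 0 := by simpa [hab'] using this
        grind
    -- When `s₀ = 0` the two coefficients agree, so only the slope of the chord matters.
    · have key : (∃ a b x y : F, a ≠ b ∧ 0 = x + y ∧ s1 = x * a + y * b ∧
          s2 = x * (a ^ 2 + θ * a ^ 3) + y * (b ^ 2 + θ * b ^ 3)) ↔
          ∃ a b : F, a ≠ b ∧ (a + b) + θ * (a ^ 2 + a * b + b ^ 2) = s2 / s1 := by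
        constructor
        · rintro ⟨a, b, x, y, hab, e0, e1, e2⟩
          have hxy : y = x := by grind
          refine ⟨a, b, hab, ?_⟩
          field_simp
          grind
        · rintro ⟨a, b, hab, h⟩
          have hab' : a + b ≠ 0 := by grind
          refine ⟨a, b, s1 / (a + b), s1 / (a + b), hab, ?_, ?_, ?_⟩ <;> field_simp at * <;> grind
      rw [key]
      by_cases ht : s2 / s1 = θ⁻¹
      · have h2' : s2 = s1 * θ⁻¹ := by rw [← ht]; field_simp
        rw [ht, special_dir_iff hθ, exists_omega_iff m hm]
        simp [h1, h2']
      · have h2' : s2 ≠ s1 * θ⁻¹ := by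
          rintro rfl; apply ht; field_simp
        simp only [h1, h2', false_and, and_false, or_self, not_false_eq_true, iff_true]
        exact exists_chord_of_slope hθ ht hs
  · simp only [h0, false_and, not_false_eq_true, iff_true]
    -- `h` is the vertical distance from the point to the curve.
    set p := s1 / s0 with hp
    set h := s2 / s0 + p ^ 2 + θ * p ^ 3 with hh
    have e1 : s1 = s0 * p := by rw [hp]; field_simp
    have e2 : s2 = s0 * (h + p ^ 2 + θ * p ^ 3) := by
      have : h + p ^ 2 + θ * p ^ 3 = s2 / s0 := by rw [hh]; grind
      rw [this]; field_simp
    clear_value p h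
    by_cases hz : h = 0
    · refine ⟨p, p + 1, s0, 0, by simp, by simp, ?_, ?_⟩
      · rw [e1]; ring
      · rw [e2, hz]; ring
    · obtain ⟨x, y, hxy, hc⟩ := exists_secant hq8 (c := 1 + θ * p) hθ hz hs
      have hxy' : x + y ≠ 0 := by grind
      refine ⟨p + x, p + y, s0 * y / (x + y), s0 * x / (x + y), by simpa using hxy, ?_, ?_, ?_⟩
      · field_simp; grind
      · rw [e1]; field_simp; grind
      · rw [e2, ← hc]; field_simp; grind

/-- Every syndrome is a combination of three columns: if `s₀ = 0`, subtracting one column makes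
the first coordinate nonzero, so two further columns suffice. -/
theorem span_three {m : ℕ} (hm : Fintype.card F = 2 ^ m) (hq8 : 8 ≤ Fintype.card F)
    {θ : F} (hθ : θ ≠ 0) (s : F × F × F) :
    ∃ a b c x y z : F, s = x • synCol θ a + y • synCol θ b + z • synCol θ c := by
  by_cases h : s.1 = 0
  · obtain ⟨a, b, x, y, -, h⟩ := (secant_span_iff hm hq8 hθ (s - synCol θ 0)).2
      (fun h' => by simpa [synCol, h] using h'.1)
    exact ⟨a, b, 0, x, y, 1, by rw [← h, one_smul, sub_add_cancel]⟩
  · obtain ⟨a, b, x, y, -, h⟩ := (secant_span_iff hm hq8 hθ s).2 (fun h' => h h'.1)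
    exact ⟨a, b, 0, x, y, 0, by rw [← h, zero_smul, add_zero]⟩

omit [Fintype F] [CharP F 2] in
/-- Syndrome decoding: the distance to the code is the least weight of a word with the same
syndrome. -/
theorem distTo_le_iff {n d : ℕ} {θ : F} {α : Fin n → F} {k : ℕ}
    (hmem : ∀ v, v ∈ TRS α k θ ↔ syn θ α v = 0) (u : Fin n → F) :
    distTo u (TRS α k θ) ≤ d ↔ ∃ e : Fin n → F, hammingNorm e ≤ d ∧ syn θ α u = syn θ α e := by
  constructor
  · intro h
    have hne : {d | ∃ c ∈ TRS α k θ, hammingDist u c = d}.Nonempty :=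
      ⟨_, 0, (hmem 0).2 (map_zero _), rfl⟩
    obtain ⟨c, hc, hd⟩ := Nat.sInf_mem hne
    refine ⟨u - c, ?_, ?_⟩
    · rw [← neg_add_eq_sub, ← hammingDist_eq_hammingNorm, hammingDist_comm, hd]; exact h
    · rw [map_sub, (hmem c).1 hc, sub_zero]
  · rintro ⟨e, he, hs⟩
    refine le_trans (Nat.sInf_le ⟨u - e, (hmem _).2 (by rw [map_sub, hs, sub_self]), rfl⟩) ?_
    rw [hammingDist_comm, hammingDist_eq_hammingNorm]
    simpa using he

omit [Fintype F] [CharP F 2] in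
theorem hammingNorm_le_of_support {n : ℕ} (e : Fin n → F) (t : Finset (Fin n))
    (h : ∀ i, i ∉ t → e i = 0) : hammingNorm e ≤ t.card := by
  apply Finset.card_le_card
  intro i hi
  by_contra hit
  exact (mem_filter.1 hi).2 (h i hit)

omit [Fintype F] [CharP F 2] in
theorem norm_two_iff {n : ℕ} (hn : 2 ≤ n) (θ : F) {α : Fin n → F} (hα : Function.Bijective α)
    (s : F × F × F) :
    (∃ e : Fin n → F, hammingNorm e ≤ 2 ∧ s = syn θ α e) ↔
      ∃ a b x y : F, a ≠ b ∧ s = x • synCol θ a + y • synCol θ b := by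
  constructor
  · rintro ⟨e, he, rfl⟩
    obtain ⟨t, hst, ht⟩ := Finset.exists_superset_card_eq he (by simpa using hn)
    obtain ⟨i, j, hij, rfl⟩ := Finset.card_eq_two.1 ht
    refine ⟨α i, α j, e i, e j, fun h => hij (hα.injective h), ?_⟩
    rw [syn_apply, ← Finset.sum_pair (f := fun l => e l • synCol θ (α l)) hij]
    symm
    apply Finset.sum_subset (subset_univ _)
    intro l _ hl
    have : e l = 0 := by
      by_contra h
      exact hl (hst (by simpa using h))
    rw [this, zero_smul]
  · rintro ⟨a, b, x, y, hab, rfl⟩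
    obtain ⟨i, rfl⟩ := hα.surjective a
    obtain ⟨j, rfl⟩ := hα.surjective b
    refine ⟨Pi.single i x + Pi.single j y, ?_, by simp only [map_add, syn_single]⟩
    refine (hammingNorm_le_of_support _ {i, j} ?_).trans Finset.card_le_two
    intro l hl
    simp only [mem_insert, mem_singleton, not_or] at hl
    simp [hl.1, hl.2]

theorem norm_three {m n : ℕ} (hm : Fintype.card F = 2 ^ m) (hq8 : 8 ≤ Fintype.card F)
    {θ : F} (hθ : θ ≠ 0) {α : Fin n → F}
    (hα : Function.Bijective α) (s : F × F × F) :
    ∃ e : Fin n → F, hammingNorm e ≤ 3 ∧ s = syn θ α e := by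
  obtain ⟨a, b, c, x, y, z, rfl⟩ := span_three hm hq8 hθ s
  obtain ⟨i, rfl⟩ := hα.surjective a
  obtain ⟨j, rfl⟩ := hα.surjective b
  obtain ⟨k, rfl⟩ := hα.surjective c
  refine ⟨Pi.single i x + Pi.single j y + Pi.single k z, ?_, by simp only [map_add, syn_single]⟩
  refine (hammingNorm_le_of_support _ {i, j, k} ?_).trans Finset.card_le_three
  intro l hl
  simp only [mem_insert, mem_singleton, not_or] at hl
  simp [hl.1, hl.2.1, hl.2.2]

omit [DecidableEq F] in
theorem syn_single_term {q : ℕ} (hq : q = Fintype.card F) (hq8 : 8 ≤ q) {α : Fin q → F}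
    (hα : Function.Bijective α) (θ x y : F) :
    syn θ α (fun j => x * α j ^ (q - 2) + y * α j ^ (q - 3)) = (0, x, y) := by
  have := syn_eval hq hq8 hα θ (fun i => if i = q - 2 then x else if i = q - 3 then y else 0)
  convert this using 1
  · congr 1
    funext j
    rw [← Finset.sum_subset (s₁ := {q - 2, q - 3})]
    · rw [Finset.sum_pair (by omega)]
      simp [show q - 3 ≠ q - 2 by omega]
    · intro i hi
      simp only [mem_insert, mem_singleton] at hi
      rw [mem_range]; omega
    · intro i _ hi
      simp only [mem_insert, mem_singleton, not_or] at hi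
      simp [hi.1, hi.2]
  · simp [show q - 1 ≠ q - 2 by omega, show q - 1 ≠ q - 3 by omega, show q - 3 ≠ q - 2 by omega,
      show q - 4 ≠ q - 2 by omega, show q - 4 ≠ q - 3 by omega]

/-- The covering radius is `3`, so the deep holes are the words whose syndrome is not spanned by
two columns. -/
theorem isDeepHole_iff {q m : ℕ} (hq : q = Fintype.card F) (hqm : q = 2 ^ m) (hq8 : 8 ≤ q)
    {θ : F} (hθ : θ ≠ 0) {α : Fin q → F} (hα : Function.Bijective α) (u : Fin q → F) :
    IsDeepHole (TRS α (q - 3) θ) u ↔ ((syn θ α u).1 = 0 ∧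
      (((syn θ α u).2.1 = 0 ∧ (syn θ α u).2.2 ≠ 0) ∨
        (Odd m ∧ (syn θ α u).2.1 ≠ 0 ∧ (syn θ α u).2.2 = (syn θ α u).2.1 * θ⁻¹))) := by
  have hmem := mem_TRS_iff hq hq8 hα θ
  have h3 : ∀ u, distTo u (TRS α (q - 3) θ) ≤ 3 := fun u =>
    (distTo_le_iff hmem u).2 (norm_three (hq.symm.trans hqm) (hq ▸ hq8) hθ hα _)
  have hle2 : ∀ u, distTo u (TRS α (q - 3) θ) ≤ 2 ↔ _ := fun u =>
    ((distTo_le_iff hmem u).trans (norm_two_iff (by omega) θ hα _)).trans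
      (secant_span_iff (hq.symm.trans hqm) (hq ▸ hq8) hθ (syn θ α u))
  have heq3 : ∀ u, distTo u (TRS α (q - 3) θ) = 3 ↔ _ := fun u =>
    (show _ ↔ ¬ distTo u (TRS α (q - 3) θ) ≤ 2 by have := h3 u; omega).trans (hle2 u).not
  have hcov : covRad (TRS α (q - 3) θ) = 3 := by
    apply le_antisymm
    · refine csSup_le ⟨distTo 0 (TRS α (q - 3) θ), 0, rfl⟩ ?_
      rintro _ ⟨u, rfl⟩
      exact h3 u
    · refine le_csSup (a := 3) ⟨3, ?_⟩ ⟨fun j => 0 * α j ^ (q - 2) + 1 * α j ^ (q - 3),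
        (heq3 _).2 ?_⟩
      · rintro _ ⟨u, rfl⟩
        exact h3 u
      · rw [syn_single_term hq hq8 hα]
        simp
  rw [IsDeepHole, hcov, heq3, not_not]

omit [DecidableEq F] in
/-- `u` differs from the word of `f = x X ^ (q - 2) + y X ^ (q - 3)`, read as a function, by a codeword
exactly when its syndrome is `(0, x, y)`. -/
theorem exists_add_codeword_iff {q : ℕ} (hq : q = Fintype.card F) (hq8 : 8 ≤ q)
    {θ : F} {α : Fin q → F} (hα : Function.Bijective α) (u : Fin q → F) (f : F[X]) (x y : F)
    (hf : ∀ z, f.eval z = x * z ^ (q - 2) + y * z ^ (q - 3)) :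
    (∃ g ∈ Sset F (q - 3) θ, u = fun j => (f + g).eval (α j)) ↔ syn θ α u = (0, x, y) := by
  rw [← syn_single_term hq hq8 hα, ← sub_eq_zero, ← map_sub, ← mem_TRS_iff hq hq8 hα]
  refine exists_congr fun g => and_congr_right fun _ => ?_
  rw [sub_eq_iff_eq_add']
  have : (fun j => (f + g).eval (α j))
    = (fun j => x * α j ^ (q - 2) + y * α j ^ (q - 3)) + fun j => g.eval (α j) := by
    funext j; simp [hf]
  rw [this]

end Deep

/-- Let `q = 2^m ≥ 8` and `k = q - 3`. Then `u ∈ 𝔽_q^q` is a deep hole of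
`TRS_{q-3}(𝔽_q, θ)` iff either (a) `u = u_{a x^{q-3} + g}` with `a ≠ 0`, `g ∈ S_{q-3,θ}`,
or (b) `m` is odd and `u = u_{a (x^{q-2} + θ⁻¹ x^{q-3}) + g}` with `a ≠ 0`,
`g ∈ S_{q-3,θ}`. -/
theorem deep_holes_char_two_k_eq_q_sub_three {F : Type*} [Field F] [Fintype F] [DecidableEq F]
    (q m : ℕ) (hq : q = Fintype.card F) (hqm : q = 2 ^ m) (hq8 : 8 ≤ q)
    (θ : F) (hθ : θ ≠ 0) (α : Fin q → F) (hα : Function.Bijective α) (u : Fin q → F) :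
    IsDeepHole (TRS α (q - 3) θ) u ↔
      ((∃ a : F, a ≠ 0 ∧ ∃ g ∈ Sset F (q - 3) θ,
          u = fun j => (Polynomial.C a * Polynomial.X ^ (q - 3) + g).eval (α j)) ∨
        (Odd m ∧ ∃ a : F, a ≠ 0 ∧ ∃ g ∈ Sset F (q - 3) θ,
          u = fun j => (Polynomial.C a *
              (Polynomial.X ^ (q - 2) + Polynomial.C θ⁻¹ * Polynomial.X ^ (q - 3))
            + g).eval (α j))) := by
  have : CharP F 2 := by
    have h : ((2 ^ m : ℕ) : F) = 0 := by
      rw [← hqm, hq]; exact FiniteField.cast_card_eq_zero F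
    have h2 : (2 : F) = 0 := by
      rw [Nat.cast_pow] at h
      exact_mod_cast eq_zero_of_pow_eq_zero h
    exact CharTwo.of_one_ne_zero_of_two_eq_zero one_ne_zero h2
  rw [isDeepHole_iff hq hqm hq8 hθ hα]
  have ha : ∀ a : F, _ := fun a => exists_add_codeword_iff (θ := θ) hq hq8 hα u
    (C a * X ^ (q - 3)) 0 a (fun z => by simp)
  have hb : ∀ a : F, _ := fun a => exists_add_codeword_iff (θ := θ) hq hq8 hα u
    (C a * (X ^ (q - 2) + C θ⁻¹ * X ^ (q - 3))) a (a * θ⁻¹) (fun z => by simp; ring)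
  simp only [ha, hb]
  generalize syn θ α u = s
  obtain ⟨s0, s1, s2⟩ := s
  simp only [Prod.mk.injEq]
  constructor
  · rintro ⟨rfl, ⟨rfl, h⟩ | ⟨hm, h, rfl⟩⟩
    · exact Or.inl ⟨s2, h, rfl, rfl, rfl⟩
    · exact Or.inr ⟨hm, s1, h, rfl, rfl, rfl⟩
  · rintro (⟨a, h, rfl, rfl, rfl⟩ | ⟨hm, a, h, rfl, rfl, rfl⟩)
    · exact ⟨rfl, Or.inl ⟨rfl, h⟩⟩
    · exact ⟨rfl, Or.inr ⟨hm, h, rfl⟩⟩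
end

section
/- Let q be an odd prime power, θ ∈ 𝔽_q with θ ≠ 0, and let r be an integer with 4 ≤ r and 4r ≤ q + 8. For any λ ∈ 𝔽_q, set v = (0, 0, …, 0, 1, λ) ∈ 𝔽_q^r. Then there exist pairwise distinct elements α_1, α_2, …, α_{r-1} ∈ 𝔽_q such that det(c_{r,θ}(α_1) | c_{r,θ}(α_2) | ⋯ | c_{r,θ}(α_{r-1}) | v^T) = 0. -/
/-!
Write `t = θ⁻¹`. A row vector annihilating the matrix is the coefficient vector of a polynomial
`f = -θ X^r + X^(r-1) - λ X^(r-2) + ⋯` vanishing at every `α_j`. Such an `f` is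
`-θ (X - β) ∏ (X - α_j)`, where Vieta's formulas impose `β + ∑ α_j = t` and `e₂(β, α) = λ t`.
Eliminating `β` and using `2 e₂ = p₁² - p₂` (the characteristic is odd), the determinant vanishes
as soon as `(∑ α_j - t)² + ∑ α_j² = t² - 2 λ t` (`det_eq_zero_of_sum`).

To solve this equation in distinct elements, fix a set `A` of `r - 3` of them and let the last two,
`x` and `y`, vary. With `k = ∑_A a - t` and `e = t² - 2 λ t - ∑_A a²` the equation becomes the conic
`(x + y + k)² + x² + y² = e`, which is smooth exactly when `k² ≠ 3 e`, in characteristic `3` too.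
Replacing a single element of `A` changes `k² - 3 e` by a quadratic with leading coefficient `4`,
so `A` can be chosen with `k² ≠ 3 e` (`exists_good_set`). Projecting from one of its points shows
that the conic has at least `q - 2` points (`conic_card`). At most `2` of them have `x = y`, and at
most `4 (r - 3)` have a coordinate in `A`; as `4 r ≤ q + 8` and `q` is odd, some point remains
(`exists_conic_point`).
-/

open Finset

/-- A polynomial function of degree one or two has at most two zeros. -/
lemma quad_card {F : Type*} [Field F] [Fintype F] [DecidableEq F] (a b c : F)
    (h : a ≠ 0 ∨ b ≠ 0) : (univ.filter fun z : F => a * z ^ 2 + b * z + c = 0).card ≤ 2 := by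
  by_contra! hc
  obtain ⟨x, y, z, hx, hy, hz, hxy, hxz, hyz⟩ := Finset.two_lt_card_iff.1 hc
  simp only [mem_filter, mem_univ, true_and] at hx hy hz
  have h1 : a * (x + y) + b = 0 := by
    apply mul_left_cancel₀ (sub_ne_zero.2 hxy)
    linear_combination hx - hy
  have h2 : a * (x + z) + b = 0 := by
    apply mul_left_cancel₀ (sub_ne_zero.2 hxz)
    linear_combination hx - hz
  have ha : a = 0 := by
    apply mul_left_cancel₀ (sub_ne_zero.2 hyz)
    linear_combination h1 - h2
  subst ha
  simp at h h1
  exact h h1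

lemma conic_nonempty {F : Type*} [Field F] [Fintype F] [DecidableEq F]
    (hodd : Odd (Fintype.card F)) (h2 : (2 : F) ≠ 0) (k e : F) (hk : k ^ 2 ≠ 3 * e) :
    ∃ x y : F, (x + y + k) ^ 2 + x ^ 2 + y ^ 2 = e := by
  -- In the coordinates `u = x + y`, `v = x - y` the conic has no mixed term.
  suffices h : ∃ u v : F, 3 * u ^ 2 + 4 * k * u + 2 * (k ^ 2 - e) + v ^ 2 = 0 by
    obtain ⟨u, v, h⟩ := h
    refine ⟨(u + v) / 2, (u - v) / 2, ?_⟩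
    field_simp
    linear_combination 2 * h
  by_cases h3 : (3 : F) = 0
  · have hk0 : k ≠ 0 := by
      rintro rfl
      simp [h3] at hk
    -- In characteristic `3` the conic is a parabola, with linear coefficient `4 k = k`.
    refine ⟨-2 * (k ^ 2 - e) / k, 0, ?_⟩
    field_simp
    linear_combination (-2 * (k ^ 2 - e) * k ^ 2 + 4 * (k ^ 2 - e) ^ 2) * h3
  · open Polynomial in
    obtain ⟨u, v, h⟩ := FiniteField.exists_root_sum_quadratic
      (f := C (3 : F) * X ^ 2 + C (4 * k) * X + C (2 * (k ^ 2 - e))) (g := X ^ 2)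
      (Polynomial.degree_quadratic h3) (Polynomial.degree_X_pow 2)
      (Nat.odd_iff.1 hodd)
    exact ⟨u, v, by simpa using h⟩

/-- A smooth conic of this family has at least `q - 2` points: through a fixed point `(x₀, y₀)` of
it, each line of slope `m` with `1 + m + m² ≠ 0` meets the conic in a second point, counted with
multiplicity. At most one of these lines is tangent, so the second points are distinct. -/
lemma conic_card {F : Type*} [Field F] [Fintype F] [DecidableEq F]
    (hodd : Odd (Fintype.card F)) (h2 : (2 : F) ≠ 0) (k e : F) (hk : k ^ 2 ≠ 3 * e) :
    Fintype.card F ≤ (univ.filter fun z : F × F =>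
      (z.1 + z.2 + k) ^ 2 + z.1 ^ 2 + z.2 ^ 2 = e).card + 2 := by
  obtain ⟨x, y, h⟩ := conic_nonempty hodd h2 k e hk
  set Bad := univ.filter fun m : F => 1 * m ^ 2 + 1 * m + 1 = 0 with hBad
  have hBc : Bad.card ≤ 2 := quad_card 1 1 1 (Or.inl one_ne_zero)
  -- `(2 gx, 2 gy)` is the gradient at `(x, y)`.
  set gx := 2 * x + y + k with hgx
  set gy := x + 2 * y + k with hgy
  have hsm : ¬ (gx = 0 ∧ gy = 0) := by
    rintro ⟨h1, h2⟩
    apply hk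
    rw [hgx] at h1
    rw [hgy] at h2
    linear_combination (-3 * x - k) * h1 + (-3 * y - k) * h2 + 3 * h
  set s : F → F := fun m => -(gx + m * gy) / (1 * m ^ 2 + 1 * m + 1) with hs
  have key : (univ \ Bad).card ≤ (univ.filter fun z : F × F =>
      (z.1 + z.2 + k) ^ 2 + z.1 ^ 2 + z.2 ^ 2 = e).card := by
    apply Finset.card_le_card_of_injOn (fun m => (x + s m, y + m * s m))
    · intro m hm
      have hm : 1 * m ^ 2 + 1 * m + 1 ≠ 0 := by simpa [hBad] using hm
      have hsm' : s m * (1 * m ^ 2 + 1 * m + 1) = -(gx + m * gy) := by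
        exact div_mul_cancel₀ _ hm
      simp only [coe_filter, mem_univ, true_and, Set.mem_ofPred_eq]
      rw [hgx, hgy] at hsm'
      linear_combination h + 2 * s m * hsm'
    · intro m hm m' hm' heq
      have hm : 1 * m ^ 2 + 1 * m + 1 ≠ 0 := by simpa [hBad] using hm
      have hm' : 1 * m' ^ 2 + 1 * m' + 1 ≠ 0 := by simpa [hBad] using hm'
      simp only [Prod.mk.injEq, add_right_inj] at heq
      obtain ⟨e1, e2⟩ := heq
      rw [← e1] at e2
      by_cases h0 : s m = 0
      · have a1 : gx + m * gy = 0 := by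
          have := h0
          simp only [hs, div_eq_zero_iff, hm, or_false, neg_eq_zero] at this
          exact this
        have a2 : gx + m' * gy = 0 := by
          have := e1 ▸ h0
          simp only [hs, div_eq_zero_iff, hm', or_false, neg_eq_zero] at this
          exact this
        by_contra hne
        have hy0 : gy = 0 := by
          apply mul_left_cancel₀ (sub_ne_zero.2 hne)
          linear_combination a1 - a2
        exact hsm ⟨by simpa [hy0] using a1, hy0⟩
      · exact mul_right_cancel₀ h0 e2
  have := Finset.card_sdiff_add_card_eq_card (Finset.subset_univ Bad)
  rw [Finset.card_univ] at this
  omega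

lemma exists_conic_point {F : Type*} [Field F] [Fintype F] [DecidableEq F]
    (hodd : Odd (Fintype.card F)) (h2 : (2 : F) ≠ 0) (k e : F) (hk : k ^ 2 ≠ 3 * e)
    (A : Finset F) (hA : 4 * A.card + 4 < Fintype.card F) :
    ∃ x y : F, x ≠ y ∧ x ∉ A ∧ y ∉ A ∧ (x + y + k) ^ 2 + x ^ 2 + y ^ 2 = e := by
  by_contra! hcon
  set Z := univ.filter fun z : F × F => (z.1 + z.2 + k) ^ 2 + z.1 ^ 2 + z.2 ^ 2 = e with hZ
  have hc : Fintype.card F ≤ Z.card + 2 := conic_card hodd h2 k e hk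
  have hdiag : (Z.filter fun z => z.1 = z.2).card ≤ 2 := by
    refine le_trans (Finset.card_le_card_of_injOn Prod.fst ?_ ?_)
      (quad_card 6 (4 * k) (k ^ 2 - e) ?_)
    · rintro ⟨u, v⟩ h
      simp only [hZ, coe_filter, mem_filter, mem_univ, true_and, Set.mem_ofPred_eq] at h ⊢
      obtain ⟨h, rfl⟩ := h
      linear_combination h
    · rintro ⟨u, v⟩ h ⟨u', v'⟩ h' heq
      simp only [coe_filter, Set.mem_ofPred_eq] at h h' heq
      rw [Prod.mk.injEq, ← h.2, ← h'.2]
      exact ⟨heq, heq⟩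
    · by_contra! h
      obtain ⟨h6, h4⟩ := h
      have h3 : (3 : F) = 0 := by
        apply mul_left_cancel₀ h2
        linear_combination h6
      have hk0 : k = 0 := by
        apply mul_left_cancel₀ (mul_ne_zero h2 h2)
        linear_combination h4
      apply hk
      rw [hk0, h3]
      ring
  have hq (a : F) : (univ.filter fun z : F =>
      2 * z ^ 2 + 2 * (a + k) * z + ((a + k) ^ 2 + a ^ 2 - e) = 0).card ≤ 2 :=
    quad_card _ _ _ (Or.inl h2)
  have hfst (a : F) : (Z.filter fun z => z.1 = a).card ≤ 2 := by
    refine le_trans (Finset.card_le_card_of_injOn Prod.snd ?_ ?_) (hq a)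
    · rintro ⟨u, v⟩ h
      simp only [hZ, coe_filter, mem_filter, mem_univ, true_and, Set.mem_ofPred_eq] at h ⊢
      obtain ⟨h, rfl⟩ := h
      linear_combination h
    · rintro ⟨u, v⟩ h ⟨u', v'⟩ h' heq
      simp only [coe_filter, Set.mem_ofPred_eq] at h h' heq
      rw [Prod.mk.injEq, h.2, h'.2]
      exact ⟨rfl, heq⟩
  have hsnd (a : F) : (Z.filter fun z => z.2 = a).card ≤ 2 := by
    refine le_trans (Finset.card_le_card_of_injOn Prod.fst ?_ ?_) (hq a)
    · rintro ⟨u, v⟩ h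
      simp only [hZ, coe_filter, mem_filter, mem_univ, true_and, Set.mem_ofPred_eq] at h ⊢
      obtain ⟨h, rfl⟩ := h
      linear_combination h
    · rintro ⟨u, v⟩ h ⟨u', v'⟩ h' heq
      simp only [coe_filter, Set.mem_ofPred_eq] at h h' heq
      rw [Prod.mk.injEq, h.2, h'.2]
      exact ⟨heq, rfl⟩
  have hsub : Z ⊆ (Z.filter fun z => z.1 = z.2) ∪
      (A.biUnion (fun a => Z.filter fun z => z.1 = a) ∪
        A.biUnion (fun a => Z.filter fun z => z.2 = a)) := by
    rintro ⟨u, v⟩ h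
    have h' : (u + v + k) ^ 2 + u ^ 2 + v ^ 2 = e := by simpa [hZ] using h
    have := hcon u v
    simp only [mem_union, mem_biUnion, mem_filter, h, true_and, exists_eq_right']
    tauto
  have l1 := Finset.card_le_card hsub
  have l2 := Finset.card_union_le (Z.filter fun z => z.1 = z.2)
    (A.biUnion (fun a => Z.filter fun z => z.1 = a) ∪
        A.biUnion (fun a => Z.filter fun z => z.2 = a))
  have l3 := Finset.card_union_le (A.biUnion (fun a => Z.filter fun z => z.1 = a))
        (A.biUnion (fun a => Z.filter fun z => z.2 = a))
  have l4 := Finset.card_biUnion_le_card_mul A (fun a => Z.filter fun z => z.1 = a) 2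
    fun a _ => hfst a
  have l5 := Finset.card_biUnion_le_card_mul A (fun a => Z.filter fun z => z.2 = a) 2
    fun a _ => hsnd a
  omega

lemma exists_good_set {F : Type*} [Field F] [Fintype F] [DecidableEq F]
    (h2 : (2 : F) ≠ 0) (t d : F) (m : ℕ) (hm : m + 2 < Fintype.card F) :
    ∃ A : Finset F, A.card = m + 1 ∧
      (∑ a ∈ A, a - t) ^ 2 ≠ 3 * (d - ∑ a ∈ A, a ^ 2) := by
  obtain ⟨A, -, hA⟩ := Finset.exists_subset_card_eq (s := (univ : Finset F)) (n := m)
    (by rw [Finset.card_univ]; omega)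
  set S := ∑ a ∈ A, a with hS
  set P := ∑ a ∈ A, a ^ 2 with hP
  have hq := quad_card (4 : F) (2 * (S - t)) ((S - t) ^ 2 - 3 * (d - P))
    (Or.inl (by simpa [show (4 : F) = 2 * 2 by norm_num] using h2))
  set R := univ.filter fun z : F =>
    4 * z ^ 2 + 2 * (S - t) * z + ((S - t) ^ 2 - 3 * (d - P)) = 0 with hR
  obtain ⟨z, -, hz⟩ : ∃ z ∈ (univ : Finset F), z ∉ A ∪ R := by
    apply Finset.exists_mem_notMem_of_card_lt_card
    have := Finset.card_union_le A R
    rw [Finset.card_univ]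
    omega
  simp only [mem_union, not_or, hR, mem_filter, mem_univ, true_and] at hz
  refine ⟨insert z A, by rw [Finset.card_insert_of_notMem hz.1, hA], ?_⟩
  rw [Finset.sum_insert hz.1, Finset.sum_insert hz.1, ← hS, ← hP]
  intro h
  apply hz.2
  linear_combination h

open Polynomial in
/-- Vieta's formulas for the two coefficients below the leading one, the second being expressed
through power sums. -/
lemma vieta_two {F : Type*} [Field F] (s : Multiset F) :
    (s.map fun a => X - C a).prod.coeff s.card = 1 ∧
    (∀ k, k + 1 = s.card → (s.map fun a => X - C a).prod.coeff k = -s.sum) ∧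
    (∀ k, k + 2 = s.card → 2 * (s.map fun a => X - C a).prod.coeff k =
      s.sum ^ 2 - (s.map fun a => a ^ 2).sum) := by
  induction s using Multiset.induction_on with
  | empty => simp
  | cons a s ih =>
    obtain ⟨h0, h1, h2⟩ := ih
    have hdeg : (s.map fun a => X - C a).prod.natDegree = s.card :=
      natDegree_multiset_prod_X_sub_C_eq_card s
    simp only [Multiset.map_cons, Multiset.prod_cons, Multiset.card_cons, Multiset.sum_cons]
    set p := (s.map fun a => X - C a).prod
    have hs (k : ℕ) : ((X - C a) * p).coeff (k + 1) = p.coeff k - a * p.coeff (k + 1) := by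
      rw [sub_mul, coeff_sub, coeff_X_mul, coeff_C_mul]
    have hz : ((X - C a) * p).coeff 0 = - a * p.coeff 0 := by
      rw [sub_mul, coeff_sub, coeff_X_mul_zero, coeff_C_mul]
      ring
    refine ⟨?_, ?_, ?_⟩
    · rw [hs, h0, coeff_eq_zero_of_natDegree_lt (by omega)]
      ring
    · rintro k hk
      obtain rfl : k = s.card := by omega
      rcases hc : s.card with _ | n
      · rw [hz, ← hc, h0, Multiset.card_eq_zero.1 hc]
        simp
      · rw [hs, h1 n (by omega), ← hc, h0]
        ring
    · rintro k hk
      rcases k with _ | n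
      · obtain ⟨b, hb⟩ := Multiset.card_eq_one.1 (show s.card = 1 by omega)
        rw [hz, h1 0 (by omega), hb]
        simp
        ring
      · rw [hs, mul_sub, h2 n (by omega), h1 (n + 1) (by omega)]
        ring

open Polynomial in
lemma det_eq_zero_of_sum {F : Type*} [Field F] (h2 : (2 : F) ≠ 0)
    (θ : F) (hθ : θ ≠ 0) (r : ℕ) (hr : 4 ≤ r) (lam : F) (α : Fin (r - 1) → F)
    (h : (∑ j, α j - θ⁻¹) ^ 2 + ∑ j, α j ^ 2 = θ⁻¹ ^ 2 - 2 * lam * θ⁻¹) :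
    (Matrix.of fun i j : Fin r =>
          if h : (j : ℕ) < r - 1 then crv F r θ (α ⟨j, h⟩) i
          else if (i : ℕ) = r - 2 then 1 else if (i : ℕ) = r - 1 then lam else 0).det
        = 0 := by
  obtain ⟨n, rfl⟩ : ∃ n, r = n + 2 := ⟨r - 2, by omega⟩
  -- The extra root `β = θ⁻¹ - ∑ α j` makes the root sum equal to `θ⁻¹`.
  set s : Multiset F := (θ⁻¹ - ∑ j, α j) ::ₘ (univ.val.map α) with hs
  have hcard : s.card = n + 2 := by simp [hs]
  have hsum : s.sum = θ⁻¹ := by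
    rw [hs, Multiset.sum_cons]
    change _ + ∑ j, α j = _
    ring
  have hsq : (s.map fun a => a ^ 2).sum = (θ⁻¹ - ∑ j, α j) ^ 2 + ∑ j, α j ^ 2 := by
    rw [hs, Multiset.map_cons, Multiset.sum_cons, Multiset.map_map]
    rfl
  obtain ⟨v0, v1, v2⟩ := vieta_two s
  have hdeg : (s.map fun a => X - C a).prod.natDegree = s.card :=
    natDegree_multiset_prod_X_sub_C_eq_card s
  have hroot : ∀ j, (s.map fun a => X - C a).prod.eval (α j) = 0 := by
    intro j
    rw [Polynomial.eval_multiset_prod, Multiset.prod_eq_zero_iff, Multiset.map_map,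
      Multiset.mem_map]
    refine ⟨α j, ?_, by simp⟩
    rw [hs]
    exact Multiset.mem_cons_of_mem (Multiset.mem_map_of_mem _ (Finset.mem_univ j))
  set p := (s.map fun a => X - C a).prod
  rw [hcard] at v0 hdeg
  have v1 := v1 (n + 1) (by omega)
  have v2 := v2 n (by omega)
  have c2 : p.coeff n = lam * θ⁻¹ := by
    apply mul_left_cancel₀ h2
    rw [v2, hsum, hsq]
    linear_combination -h
  rw [hsum] at v1
  rw [← Matrix.exists_vecMul_eq_zero_iff]
  refine ⟨fun i => -θ * p.coeff i, ?_, ?_⟩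
  · intro h0
    have := congrFun h0 ⟨n + 1, by omega⟩
    simp [v1, hθ] at this
  · funext j
    simp only [Matrix.vecMul, dotProduct, Matrix.of_apply, Pi.zero_apply]
    rw [Fin.sum_univ_castSucc, Fin.sum_univ_castSucc]
    by_cases hj : (j : ℕ) < n + 2 - 1
    · simp only [hj, dite_true, crv]
      have hr := hroot ⟨j, hj⟩
      set x := α ⟨j, hj⟩
      rw [Polynomial.eval_eq_sum_range, hdeg, Finset.sum_range_succ, Finset.sum_range_succ,
        Finset.sum_range_succ, ← Fin.sum_univ_eq_sum_range (fun i => p.coeff i * x ^ i), v0, v1,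
        c2] at hr
      have hlt : ∀ i : Fin n, ¬ ((i : ℕ) = n + 2 - 1) := fun i => by omega
      have e1 : ∑ i : Fin n, -θ * p.coeff i * x ^ (i : ℕ) =
          -θ * ∑ i : Fin n, p.coeff i * x ^ (i : ℕ) := by
        rw [Finset.mul_sum]
        exact Finset.sum_congr rfl fun i _ => by ring
      simp only [Fin.val_castSucc, Fin.val_last, hlt, if_false, e1,
        show ¬ (n = n + 2 - 1) by omega, show n + 1 = n + 2 - 1 by omega, if_true]
      simp only [show n + 2 - 1 = n + 1 by omega, v1, c2] at *
      have hθ' : θ * θ⁻¹ = 1 := mul_inv_cancel₀ hθ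
      linear_combination -θ * hr - θ * x ^ (n + 2) * hθ'
    · have hlt : ∀ i : Fin n, ¬ ((i : ℕ) = n) := fun i => by omega
      have hlt' : ∀ i : Fin n, ¬ ((i : ℕ) = n + 1) := fun i => by omega
      simp only [hj, dite_false]
      simp only [show n + 2 - 1 = n + 1 by omega, show n + 2 - 2 = n by omega,
        Fin.val_castSucc, Fin.val_last, hlt, hlt', if_false, mul_zero, Finset.sum_const_zero,
        if_true, v1, c2]
      simp
      field_simp
      ring

/-- Let `q` be odd, `θ ≠ 0`, `4 ≤ r` and `4r ≤ q + 8`. For any `λ ∈ 𝔽_q`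
and `v = (0, …, 0, 1, λ) ∈ 𝔽_q^r`, there exist pairwise distinct `α_1, …, α_{r-1} ∈ 𝔽_q`
with `det(c_{r,θ}(α_1) | ⋯ | c_{r,θ}(α_{r-1}) | vᵀ) = 0`. -/
theorem exists_singular_odd {F : Type*} [Field F] [Fintype F] [DecidableEq F]
    (q : ℕ) (hq : q = Fintype.card F) (hodd : Odd q)
    (θ : F) (hθ : θ ≠ 0) (r : ℕ) (hr : 4 ≤ r) (hrq : 4 * r ≤ q + 8) (lam : F) :
    ∃ α : Fin (r - 1) → F, Function.Injective α ∧
      (Matrix.of fun i j : Fin r =>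
          if h : (j : ℕ) < r - 1 then crv F r θ (α ⟨j, h⟩) i
          else if (i : ℕ) = r - 2 then 1 else if (i : ℕ) = r - 1 then lam else 0).det
        = 0 := by
  subst hq
  have h2 : (2 : F) ≠ 0 := by
    apply Ring.two_ne_zero
    intro h
    have := FiniteField.even_card_iff_char_two.1 h
    rw [Nat.odd_iff] at hodd
    omega
  have hodd' := Nat.odd_iff.1 hodd
  obtain ⟨A, hA, hk⟩ := exists_good_set h2 θ⁻¹ (θ⁻¹ ^ 2 - 2 * lam * θ⁻¹) (r - 4) (by omega)
  obtain ⟨x, y, hxy, hx, hy, h⟩ := exists_conic_point hodd h2 _ _ hk A (by omega)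
  have hx' : x ∉ insert y A := by simp [hxy, hx]
  set B := insert x (insert y A) with hB
  have hBc : B.card = r - 1 := by
    rw [hB, Finset.card_insert_of_notMem hx', Finset.card_insert_of_notMem hy]
    omega
  set φ := B.equivFinOfCardEq hBc
  have hsum (g : F → F) : ∑ j, g (φ.symm j) = g x + (g y + ∑ a ∈ A, g a) := by
    rw [← Finset.sum_insert hy, ← Finset.sum_insert hx', ← hB, ← Finset.sum_coe_sort B]
    exact φ.symm.sum_comp (fun b : B => g b)
  refine ⟨fun j => φ.symm j, Subtype.val_injective.comp φ.symm.injective, ?_⟩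
  apply det_eq_zero_of_sum h2 θ hθ r hr lam fun j => (φ.symm j : F)
  rw [hsum (fun a => a), hsum (fun a => a ^ 2)]
  linear_combination h
end

section
/- Let q be an odd prime power, θ ∈ 𝔽_q with θ ≠ 0, and let r be an integer with 3 ≤ r and 4r ≤ q − 3√q + 7 (square root taken in the reals). Given any set {α_1, α_2, …, α_{r-2}} ⊆ 𝔽_q of r − 2 distinct elements and any b ∈ 𝔽_q, there exist α_{r-1}, α_r ∈ 𝔽_q \ {α_1, …, α_{r-2}} with α_{r-1} ≠ α_r such that det(c_{r,θ}(α_1) + b·e_r | c_{r,θ}(α_2) | ⋯ | c_{r,θ}(α_r)) = 0, where e_r = (0, …, 0, 1)^T ∈ 𝔽_q^r. -/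
/-! Write `y₀, …, y_{r-1}` for the elements indexing the columns. Up to a factor that plays no role,
the determinant is `∏_{j ≥ 1} (y₀ - y_j) · (1 - θ ∑ y_j) + b`: the polynomial `-θ (X - e) ∏ (X - y_j)`
(over `j ≥ 1`), with `e = 1/θ - ∑_{j ≥ 1} y_j`, provides a left null vector whenever this quantity
vanishes (`det_eq_zero_of_relation`). With `v = y₀ - β` and `w = y₀ - γ`, where `β`, `γ` are the two
elements to be found, the equation becomes `v w (v + w + a) = c`, to be solved with `v ≠ w` nonzero
and outside a set `E` of size at most `r - 3`. If `b = 0` it suffices that `β + γ` has a prescribed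
value. If `c ≠ 0`, the solutions are parametrized by the `z` at which a certain monic cubic takes
a nonzero square value, and `E` rules out at most `2 * #E` such `z` (`exists_pair_off`).

What remains is a Hasse bound: a monic cubic `f` over a field with `q` elements takes nonzero square
values at least `q / 2 - √q - 5 / 2` times (`card_square_values`). This is proved by Manin's elementary
method. Over the field of rational functions in `t`, consider the twist `f(t) y² = f(x)` with its points
`P₀ = (t^q, f(t)^((q-1)/2))` and `Q = (t, -1)`, and let `d n` be the height (the degree as a rational
function) of the abscissa of `P₀ + n Q`. Then

* `d (n + 1) + d (n - 1) ≤ 2 d n + 2`, since the abscissae of `P + Q` and `P - Q` have a sum and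
  a product with explicit numerators and denominators of low degree (`pointHeight_parallelogram`);
* `d 0 = q`, and `d 1 ≤ 2q + 1 - δ`, where `δ` counts the zeros of `f` once and the points where
  `f` takes a nonsquare value twice, since each of them yields a cancellation (`exists_cancel`).

Hence `0 ≤ d n ≤ q + n (q + 1 - δ) + n (n - 1)`, that is `n δ ≤ n q + q + n²`, and `n = ⌊√q⌋` gives
`δ ≤ q + 2n + 2`. Only the upper half of the parallelogram law is used; it needs no assumption on the
discriminant of `f`.
-/

open Finset

/-! ### Heights of rational functions -/

/-- The height of a rational function: the maximum of the degrees of its numerator and denominator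
in lowest terms. The height of `0` is `0`. -/
noncomputable def ratHeight {F : Type*} [Field F] (x : RatFunc F) : ℕ :=
  max x.num.natDegree x.denom.natDegree

section Height
open Polynomial

variable {F : Type*} [Field F]

/-- A representation `x = N / D`, not necessarily in lowest terms, bounds the height. -/
lemma ratHeight_le {x : RatFunc F} {N D : F[X]} (hD : D ≠ 0) {d : ℕ}
    (hx : x * algebraMap F[X] (RatFunc F) D = algebraMap F[X] (RatFunc F) N)
    (hN : N.natDegree ≤ d) (hDd : D.natDegree ≤ d) : ratHeight x ≤ d := by
  have hD' : algebraMap F[X] (RatFunc F) D ≠ 0 := by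
    simpa using hD
  obtain rfl : x = algebraMap F[X] (RatFunc F) N / algebraMap F[X] (RatFunc F) D := by
    rw [eq_div_iff hD', hx]
  unfold ratHeight
  refine max_le ?_ ((natDegree_le_of_dvd (RatFunc.denom_div_dvd N D) hD).trans hDd)
  by_cases h0 : N = 0
  · simp [h0]
  · exact (natDegree_le_of_dvd (RatFunc.num_div_dvd N hD) h0).trans hN

/-- A form of Gauss's lemma: the coefficients of the product of the primitive linear forms
`D₁ T + N₁` and `D₂ T + N₂` generate the unit ideal. -/
lemma isCoprime_triple {R : Type*} [CommRing R] {N₁ D₁ N₂ D₂ : R}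
    (h₁ : IsCoprime N₁ D₁) (h₂ : IsCoprime N₂ D₂) :
    ∃ p q r : R, p * (N₁ * N₂) + q * (N₁ * D₂ + N₂ * D₁) + r * (D₁ * D₂) = 1 := by
  obtain ⟨u₁, v₁, e₁⟩ := h₁
  obtain ⟨u₂, v₂, e₂⟩ := h₂
  -- `1 = a A + b X + c Y + d C` with `X + Y = B` and `X Y = A C`; square `1 - a A - c B - d C`.
  have e : (u₁ * u₂) * (N₁ * N₂) + (u₁ * v₂) * (N₁ * D₂) + (v₁ * u₂) * (N₂ * D₁)
      + (v₁ * v₂) * (D₁ * D₂) = 1 := by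
    linear_combination (u₂ * N₂ + v₂ * D₂) * e₁ + e₂
  generalize u₁ * u₂ = a at e
  generalize u₁ * v₂ = b at e
  generalize v₁ * u₂ = c at e
  generalize v₁ * v₂ = d at e
  let s := a * (N₁ * N₂) + c * (N₁ * D₂ + N₂ * D₁) + d * (D₁ * D₂)
  refine ⟨(2 - s) * a - (b - c) ^ 2 * (D₁ * D₂), (2 - s) * c + (b - c) ^ 2 * (N₁ * D₂),
    (2 - s) * d, ?_⟩
  have hs : 1 - s = (b - c) * (N₁ * D₂) := by
    simp only [s]; linear_combination -e
  have hs2 : (1 - s) ^ 2 = (b - c) ^ 2 * (N₁ * D₂) ^ 2 := by rw [hs]; ring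
  have : (2 - s) * s + (1 - s) ^ 2 = 1 := by ring
  simp only [s] at *
  linear_combination this - hs2

/-- If `x₁` and `x₂` are the roots of `W T² - V T + U`, then the sum of their heights is at most the
maximal degree of `U`, `V`, `W`: by `isCoprime_triple`, the triple `(U, V, W)` is a polynomial
multiple of the one obtained from the reduced forms of `x₁` and `x₂`. -/
lemma ratHeight_add_le {x₁ x₂ : RatFunc F} {U V W : F[X]} (hW : W ≠ 0)
    (hV : (x₁ + x₂) * algebraMap F[X] (RatFunc F) W = algebraMap F[X] (RatFunc F) V)
    (hU : x₁ * x₂ * algebraMap F[X] (RatFunc F) W = algebraMap F[X] (RatFunc F) U) {d : ℕ}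
    (hUd : U.natDegree ≤ d) (hVd : V.natDegree ≤ d) (hWd : W.natDegree ≤ d) :
    ratHeight x₁ + ratHeight x₂ ≤ d := by
  obtain ⟨p, q, r, h⟩ := isCoprime_triple x₁.isCoprime_num_denom x₂.isCoprime_num_denom
  have hD₁ := x₁.denom_ne_zero
  have hD₂ := x₂.denom_ne_zero
  have e₁ := x₁.num_div_denom
  have e₂ := x₂.num_div_denom
  unfold ratHeight
  set N₁ := x₁.num
  set N₂ := x₂.num
  set D₁ := x₁.denom
  set D₂ := x₂.denom
  have inj := IsFractionRing.injective F[X] (RatFunc F)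
  have hD₁' : algebraMap F[X] (RatFunc F) D₁ ≠ 0 := by simpa using hD₁
  have hD₂' : algebraMap F[X] (RatFunc F) D₂ ≠ 0 := by simpa using hD₂
  have hU' : U * (D₁ * D₂) = W * (N₁ * N₂) := by
    apply inj
    simp only [map_mul]
    rw [← hU, ← e₁, ← e₂]
    field_simp
  have hV' : V * (D₁ * D₂) = W * (N₁ * D₂ + N₂ * D₁) := by
    apply inj
    simp only [map_mul, map_add]
    rw [← hV, ← e₁, ← e₂]
    field_simp
  have hDD : D₁ * D₂ ≠ 0 := mul_ne_zero hD₁ hD₂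
  set k := p * U + q * V + r * W with hk
  have kW : W = k * (D₁ * D₂) := by
    rw [hk]; linear_combination -W * h - p * hU' - q * hV'
  have kU : U = k * (N₁ * N₂) := by
    apply mul_right_cancel₀ hDD
    rw [hU', kW]; ring
  have kV : V = k * (N₁ * D₂ + N₂ * D₁) := by
    apply mul_right_cancel₀ hDD
    rw [hV', kW]; ring
  have hk0 : k ≠ 0 := by
    rintro h0; rw [h0, zero_mul] at kW; exact hW kW
  have key : ∀ {A B : F[X]}, A = k * B → A.natDegree ≤ d → B.natDegree ≤ d := by
    intro A B hAB hA
    by_cases hB : B = 0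
    · simp [hB]
    · rw [hAB, natDegree_mul hk0 hB] at hA; omega
  have bU := key kU hUd
  have bV := key kV hVd
  have bW := key kW hWd
  rw [natDegree_mul hD₁ hD₂] at bW
  rcases le_or_gt N₁.natDegree D₁.natDegree with c₁ | c₁ <;>
  rcases le_or_gt N₂.natDegree D₂.natDegree with c₂ | c₂
  · rw [max_eq_right c₁, max_eq_right c₂]; exact bW
  · have hN₂ : N₂ ≠ 0 := by rintro h0; simp [h0] at c₂
    rw [max_eq_right c₁, max_eq_left c₂.le]
    rw [natDegree_add_eq_right_of_natDegree_lt, natDegree_mul hN₂ hD₁] at bV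
    · omega
    · rw [natDegree_mul hN₂ hD₁]
      have := natDegree_mul_le (p := N₁) (q := D₂)
      omega
  · have hN₁ : N₁ ≠ 0 := by rintro h0; simp [h0] at c₁
    rw [max_eq_left c₁.le, max_eq_right c₂]
    rw [natDegree_add_eq_left_of_natDegree_lt, natDegree_mul hN₁ hD₂] at bV
    · omega
    · rw [natDegree_mul hN₁ hD₂]
      have := natDegree_mul_le (p := N₂) (q := D₁)
      omega
  · have hN₁ : N₁ ≠ 0 := by rintro h0; simp [h0] at c₁
    have hN₂ : N₂ ≠ 0 := by rintro h0; simp [h0] at c₂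
    rw [natDegree_mul hN₁ hN₂] at bU
    rw [max_eq_left c₁.le, max_eq_left c₂.le]; exact bU

variable (a b c : F)

/-- The hypotheses `hV` and `hU` are the classical formulas for the sum and the product of the
abscissae of `P + Q` and `P - Q`, where `P` has abscissa `x` and `Q` has abscissa the generic
point `t`. -/
lemma ratHeight_chord {x x₁ x₂ : RatFunc F} (hx : x ≠ RatFunc.X)
    (hV : (x₁ + x₂) * (x - RatFunc.X) ^ 2 = 2 * ((x + RatFunc.X) * (RatFunc.C b + x * RatFunc.X)
      + 2 * RatFunc.C c + 2 * RatFunc.C a * x * RatFunc.X))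
    (hU : x₁ * x₂ * (x - RatFunc.X) ^ 2 = (x * RatFunc.X - RatFunc.C b) ^ 2
      - 4 * RatFunc.C c * (x + RatFunc.X + RatFunc.C a)) :
    ratHeight x₁ + ratHeight x₂ ≤ 2 * ratHeight x + 2 := by
  have e := x.num_div_denom
  have hD := x.denom_ne_zero
  have hNd : x.num.natDegree ≤ ratHeight x := le_max_left _ _
  have hDd : x.denom.natDegree ≤ ratHeight x := le_max_right _ _
  set N := x.num
  set D := x.denom
  set n := ratHeight x
  have hD' : algebraMap F[X] (RatFunc F) D ≠ 0 := by simpa using hD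
  have e' : x * algebraMap F[X] (RatFunc F) D = algebraMap F[X] (RatFunc F) N := by
    rw [← e]; field_simp
  have hNX : N - X * D ≠ 0 := by
    intro h0
    apply hx
    rw [sub_eq_zero] at h0
    rw [← e, h0, map_mul, RatFunc.algebraMap_X]
    field_simp
  have hC : ∀ z : F, RatFunc.C z = algebraMap F[X] (RatFunc F) (C z) := fun z =>
    (RatFunc.algebraMap_C z).symm
  have hXD : (X * D).natDegree ≤ n + 1 :=
    (natDegree_mul_le_of_le natDegree_X_le hDd).trans (by omega)
  have hNXd : (N * X).natDegree ≤ n + 1 := natDegree_mul_le_of_le hNd natDegree_X_le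
  have hCD : ∀ z : F, (C z * D).natDegree ≤ n + 1 := fun z =>
    (natDegree_C_mul_le z D).trans (by omega)
  have h₁ : (N + X * D).natDegree ≤ n + 1 :=
    natDegree_add_le_of_degree_le (by omega) hXD
  have h₂ : (N * X - C b * D).natDegree ≤ n + 1 :=
    (natDegree_sub_le_of_le hNXd (hCD b)).trans (by simp)
  have h₃ : (N - X * D).natDegree ≤ n + 1 :=
    (natDegree_sub_le_of_le hNd hXD).trans (by simp)
  have h₄ : (C b * D + N * X).natDegree ≤ n + 1 :=
    natDegree_add_le_of_degree_le (hCD b) hNXd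
  have h4 : ∀ z : F, (4 * C z : F[X]).natDegree ≤ 0 := fun z => by compute_degree
  have h2 : ∀ z : F, (2 * C z : F[X]).natDegree ≤ 0 := fun z => by compute_degree
  refine ratHeight_add_le (W := (N - X * D) ^ 2)
    (V := 2 * ((N + X * D) * (C b * D + N * X) + 2 * C c * D ^ 2 + 2 * C a * N * X * D))
    (U := (N * X - C b * D) ^ 2 - 4 * C c * D * (N + X * D + C a * D))
    (pow_ne_zero 2 hNX) ?_ ?_ ?_ ?_ ?_
  · simp only [map_mul, map_add, map_sub, map_pow, map_ofNat, RatFunc.algebraMap_X, ← hC, ← e']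
    linear_combination (algebraMap F[X] (RatFunc F) D) ^ 2 * hV
  · simp only [map_mul, map_add, map_sub, map_pow, map_ofNat, RatFunc.algebraMap_X, ← hC, ← e']
    linear_combination (algebraMap F[X] (RatFunc F) D) ^ 2 * hU
  · exact (natDegree_sub_le_of_le (m := 2 * n + 2) (n := 2 * n + 2)
      ((natDegree_pow_le_of_le 2 h₂).trans (by omega))
      ((natDegree_mul_le_of_le (natDegree_mul_le_of_le (h4 c) hDd)
        (natDegree_add_le_of_degree_le h₁ (hCD a))).trans (by omega))).trans (by simp)
  · refine (natDegree_mul_le_of_le (m := 0) (n := 2 * n + 2) (by compute_degree) ?_).trans (by omega)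
    refine natDegree_add_le_of_degree_le (natDegree_add_le_of_degree_le ?_ ?_) ?_
    · exact (natDegree_mul_le_of_le h₁ h₄).trans (by omega)
    · exact (natDegree_mul_le_of_le (h2 c) (natDegree_pow_le_of_le 2 hDd)).trans (by omega)
    · rw [show 2 * C a * N * X * D = 2 * C a * (N * (X * D)) by ring]
      exact (natDegree_mul_le_of_le (h2 a) (natDegree_mul_le_of_le hNd hXD)).trans (by omega)
  · exact (natDegree_pow_le_of_le 2 h₃).trans (by omega)

/-- The hypothesis `h` is the duplication formula at the point with abscissa the generic point. -/
lemma ratHeight_tangent {x : RatFunc F} (hf : (4 : F[X]) * (X ^ 3 + C a * X ^ 2 + C b * X + C c) ≠ 0)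
    (h : x * (4 * (RatFunc.X ^ 3 + RatFunc.C a * RatFunc.X ^ 2 + RatFunc.C b * RatFunc.X
      + RatFunc.C c)) = (RatFunc.X ^ 2 - RatFunc.C b) ^ 2
      - 4 * RatFunc.C c * (2 * RatFunc.X + RatFunc.C a)) :
    ratHeight x ≤ 4 := by
  refine ratHeight_le (N := (X ^ 2 - C b) ^ 2 - 4 * C c * (2 * X + C a)) hf ?_ ?_ ?_
  · simpa only [map_mul, map_add, map_sub, map_pow, map_ofNat, RatFunc.algebraMap_X,
      RatFunc.algebraMap_C] using h
  · compute_degree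
  · compute_degree!

end Height

/-! ### The quadratic twist over the rational function field -/

section Curve
open Polynomial WeierstrassCurve

/-- The sum and the product of the abscissae of `P + Q` and `P - Q` on `w y² = f(x)`, where
`Q = (t, -1)` and `P = (X / w, Y / w²)`, computed with the chord slopes `s₁`, `s₂` of the
Weierstrass model. -/
lemma chord_identities {K : Type*} [Field K] {a b c t w X Y s₁ s₂ : K} (hw : w ≠ 0)
    (hwt : w = t ^ 3 + a * t ^ 2 + b * t + c) (hX : X ≠ w * t)
    (hY : Y ^ 2 = X ^ 3 + a * w * X ^ 2 + b * w ^ 2 * X + c * w ^ 3)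
    (hs₁ : s₁ = (Y + w ^ 2) / (X - w * t)) (hs₂ : s₂ = (Y - w ^ 2) / (X - w * t)) :
    ((s₁ ^ 2 - a * w - X - w * t) / w + (s₂ ^ 2 - a * w - X - w * t) / w) * (X / w - t) ^ 2
      = 2 * ((X / w + t) * (b + X / w * t) + 2 * c + 2 * a * (X / w) * t) ∧
    ((s₁ ^ 2 - a * w - X - w * t) / w * ((s₂ ^ 2 - a * w - X - w * t) / w)) * (X / w - t) ^ 2
      = (X / w * t - b) ^ 2 - 4 * c * (X / w + t + a) := by
  obtain ⟨x, rfl⟩ : ∃ x, X = w * x := ⟨X / w, by field_simp⟩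
  obtain ⟨y, rfl⟩ : ∃ y, Y = w ^ 2 * y := ⟨Y / w ^ 2, by field_simp⟩
  have hxt : x - t ≠ 0 := by
    intro h; apply hX; rw [sub_eq_zero.mp h]
  have hy : w * y ^ 2 = x ^ 3 + a * x ^ 2 + b * x + c := by
    apply mul_left_cancel₀ (pow_ne_zero 3 hw); linear_combination hY
  have e₁ : s₁ = w * (y + 1) / (x - t) := by
    rw [hs₁, ← mul_sub, div_eq_div_iff (mul_ne_zero hw hxt) hxt]; ring
  have e₂ : s₂ = w * (y - 1) / (x - t) := by
    rw [hs₂, ← mul_sub, div_eq_div_iff (mul_ne_zero hw hxt) hxt]; ring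
  have f₁ : (s₁ ^ 2 - a * w - w * x - w * t) / w = w * (y + 1) ^ 2 / (x - t) ^ 2 - a - x - t := by
    rw [e₁]; field_simp
  have f₂ : (s₂ ^ 2 - a * w - w * x - w * t) / w = w * (y - 1) ^ 2 / (x - t) ^ 2 - a - x - t := by
    rw [e₂]; field_simp
  rw [f₁, f₂, mul_div_cancel_left₀ x hw]
  constructor
  · field_simp
    linear_combination 2 * hy + 2 * hwt
  · -- the product of the two abscissae involves `w y² - w = f(x) - f(t)`, divisible by `x - t`
    have hd : w * (y ^ 2 - 1) = (x - t) * (x ^ 2 + x * t + t ^ 2 + a * (x + t) + b) := by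
      linear_combination hy - hwt
    have g : w * (y + 1) ^ 2 / (x - t) ^ 2 * (w * (y - 1) ^ 2 / (x - t) ^ 2) * (x - t) ^ 2
        = (x ^ 2 + x * t + t ^ 2 + a * (x + t) + b) ^ 2 := by
      rw [show w * (y + 1) ^ 2 / (x - t) ^ 2 * (w * (y - 1) ^ 2 / (x - t) ^ 2) * (x - t) ^ 2
        = (w * (y ^ 2 - 1)) ^ 2 / (x - t) ^ 2 by field_simp; ring, hd]
      field_simp
    have g₂ : (w * (y + 1) ^ 2 / (x - t) ^ 2 + w * (y - 1) ^ 2 / (x - t) ^ 2) * (x - t) ^ 2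
        = 2 * (x ^ 3 + a * x ^ 2 + b * x + c) + 2 * (t ^ 3 + a * t ^ 2 + b * t + c) := by
      field_simp
      linear_combination 2 * hy + 2 * hwt
    linear_combination g - (a + x + t) * g₂

/-- The duplication formula for `Q = (t, -1)` on `w y² = f(x)`, computed with the tangent slope `s`
of the Weierstrass model. -/
lemma tangent_identity {K : Type*} [Field K] {a b c t w s : K} (hw : w ≠ 0)
    (hwt : w = t ^ 3 + a * t ^ 2 + b * t + c)
    (hs : s * (-w ^ 2 - w ^ 2) = 3 * (w * t) ^ 2 + 2 * (a * w) * (w * t) + b * w ^ 2) :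
    (s ^ 2 - a * w - w * t - w * t) / w * (4 * (t ^ 3 + a * t ^ 2 + b * t + c))
      = (t ^ 2 - b) ^ 2 - 4 * c * (2 * t + a) := by
  have hs' : s * (-2) = 3 * t ^ 2 + 2 * a * t + b := by
    apply mul_right_cancel₀ (pow_ne_zero 2 hw); linear_combination hs
  have : s ^ 2 * 4 = (3 * t ^ 2 + 2 * a * t + b) ^ 2 := by rw [← hs']; ring
  rw [← hwt]
  field_simp
  linear_combination this - (8 * t + 4 * a) * hwt

variable {F : Type*} [Field F] (a b c : F)

/-- The value `f(t)` of the monic cubic `f = X³ + aX² + bX + c` at the generic point `t`. -/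
noncomputable def cubicVal : RatFunc F :=
  RatFunc.X ^ 3 + RatFunc.C a * RatFunc.X ^ 2 + RatFunc.C b * RatFunc.X + RatFunc.C c

/-- The twist `w y² = f(x)` of `y² = f(x)` by `w = f(t)`, over the field of rational functions in
`t`. It is put in Weierstrass form by `X = w x`, `Y = w² y`. -/
noncomputable def twistedCurve : WeierstrassCurve.Affine (RatFunc F) where
  a₁ := 0
  a₂ := RatFunc.C a * cubicVal a b c
  a₃ := 0
  a₄ := RatFunc.C b * cubicVal a b c ^ 2
  a₆ := RatFunc.C c * cubicVal a b c ^ 3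

lemma cubic_poly_ne_zero : (X ^ 3 + C a * X ^ 2 + C b * X + C c : F[X]) ≠ 0 := by
  apply Monic.ne_zero
  monicity!

lemma cubicVal_eq : cubicVal a b c =
    algebraMap F[X] (RatFunc F) (X ^ 3 + C a * X ^ 2 + C b * X + C c) := by
  simp [cubicVal]

lemma cubicVal_ne_zero : cubicVal a b c ≠ 0 := by
  rw [cubicVal_eq]
  exact (RatFunc.algebraMap_ne_zero (cubic_poly_ne_zero a b c))

/-- The height of the abscissa `x = X / w` of a point on `w y² = f(x)`, and `0` at infinity. -/
noncomputable def pointHeight : (twistedCurve a b c).Point → ℕ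
  | .zero => 0
  | .some x _ _ => ratHeight (x / cubicVal a b c)

lemma pointHeight_neg (P : (twistedCurve a b c).Point) :
    pointHeight a b c (-P) = pointHeight a b c P := by
  rcases P with _ | ⟨x, y, h⟩ <;> rfl

lemma ratHeight_X : ratHeight (RatFunc.X : RatFunc F) = 1 := by
  simp [ratHeight]

variable {a b c} in
/-- The upper half of the parallelogram law for the height, with respect to `Q = (t, -1)`, whose
height is `1`. -/
lemma pointHeight_parallelogram [DecidableEq (RatFunc F)] (h2 : (2 : F) ≠ 0)
    (h : (twistedCurve a b c).Nonsingular (cubicVal a b c * RatFunc.X) (-cubicVal a b c ^ 2))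
    (P : (twistedCurve a b c).Point) :
    pointHeight a b c (P + .some _ _ h) + pointHeight a b c (P - .some _ _ h)
      ≤ 2 * pointHeight a b c P + 2 := by
  have hw := cubicVal_ne_zero a b c
  have hwt : cubicVal a b c = RatFunc.X ^ 3 + RatFunc.C a * RatFunc.X ^ 2
    + RatFunc.C b * RatFunc.X + RatFunc.C c := rfl
  have h2K : (2 : RatFunc F) ≠ 0 := by
    rw [← map_ofNat (RatFunc.C (K := F)) 2]
    exact (map_ne_zero (RatFunc.C (K := F))).mpr h2
  have hQ : pointHeight a b c (.some _ _ h) = 1 := by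
    change ratHeight (cubicVal a b c * RatFunc.X / cubicVal a b c) = 1
    rw [mul_div_cancel_left₀ _ hw, ratHeight_X]
  have hQQ : pointHeight a b c (.some _ _ h + .some _ _ h) ≤ 4 := by
    have hne : -cubicVal a b c ^ 2 ≠ (twistedCurve a b c).negY (cubicVal a b c * RatFunc.X)
        (-cubicVal a b c ^ 2) := by
      simp only [Affine.negY, twistedCurve]
      intro h'
      have : 2 * cubicVal a b c ^ 2 = 0 := by linear_combination -h'
      simp [h2K, hw] at this
    rw [Affine.Point.add_self_of_Y_ne hne]
    change ratHeight ((twistedCurve a b c).addX _ _ _ / _) ≤ 4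
    refine ratHeight_tangent a b c ?_ ?_
    · refine mul_ne_zero ?_ (cubic_poly_ne_zero a b c)
      have : (C (2 * 2) : F[X]) ≠ 0 := by simpa using h2
      rwa [show (4 : F[X]) = C (2 * 2) by rw [C_mul, map_ofNat]; norm_num]
    · rw [Affine.slope_of_Y_ne rfl hne]
      simp only [Affine.addX, Affine.negY, twistedCurve, zero_mul, sub_zero, add_zero]
      refine tangent_identity hw hwt ?_
      have : -cubicVal a b c ^ 2 - cubicVal a b c ^ 2 ≠ 0 := by
        rw [show -cubicVal a b c ^ 2 - cubicVal a b c ^ 2 = -(2 * cubicVal a b c ^ 2) by ring]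
        exact neg_ne_zero.mpr (mul_ne_zero h2K (pow_ne_zero 2 hw))
      rw [neg_neg, div_mul_eq_mul_div, div_eq_iff (by simpa using this)]
  rcases P with _ | ⟨x, y, hP⟩
  · rw [← Affine.Point.zero_def, zero_add, zero_sub, pointHeight_neg, hQ]
    omega
  by_cases hx : x = cubicVal a b c * RatFunc.X
  · subst hx
    have hyy : y = -cubicVal a b c ^ 2 ∨ y = cubicVal a b c ^ 2 := by
      have e₁ := (Affine.equation_iff _ _).mp hP.1
      have e₂ := (Affine.equation_iff _ _).mp h.1
      rw [or_comm, ← sq_eq_sq_iff_eq_or_eq_neg]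
      simp only [twistedCurve] at e₁ e₂
      linear_combination e₁ - e₂
    have hPQ : pointHeight a b c (.some _ _ hP) = 1 := hQ
    have h0 : pointHeight a b c (0 : (twistedCurve a b c).Point) = 0 := rfl
    rcases hyy with rfl | rfl
    · rw [sub_self, hPQ, h0]
      omega
    · have hneg : Affine.Point.some _ _ hP = -Affine.Point.some _ _ h := by
        rw [Affine.Point.neg_some]
        congr 1
        simp [Affine.negY, twistedCurve]
      rw [hPQ, hneg, neg_add_cancel, ← neg_add', pointHeight_neg, h0]
      omega
  · rw [sub_eq_add_neg, Affine.Point.neg_some, Affine.Point.add_of_X_ne hx,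
      Affine.Point.add_of_X_ne hx]
    change ratHeight ((twistedCurve a b c).addX _ _ _ / _)
      + ratHeight ((twistedCurve a b c).addX _ _ _ / _) ≤ 2 * ratHeight (x / cubicVal a b c) + 2
    rw [Affine.slope_of_X_ne hx, Affine.slope_of_X_ne hx]
    have key := chord_identities (a := RatFunc.C a) (b := RatFunc.C b) (c := RatFunc.C c)
      (Y := y) hw hwt hx ?_ rfl rfl
    · refine ratHeight_chord a b c ?_ ?_ ?_
      · rwa [ne_eq, div_eq_iff hw, mul_comm]
      · convert! key.1 using 4 <;> simp [Affine.addX, Affine.negY, twistedCurve]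
      · convert! key.2 using 4 <;> simp [Affine.addX, Affine.negY, twistedCurve]
    · have e₁ := (Affine.equation_iff _ _).mp hP.1
      simp only [twistedCurve] at e₁
      linear_combination e₁

end Curve

/-! ### Counting values of a cubic by Manin's method -/

section Count
open Polynomial WeierstrassCurve

/-- A sequence with second differences at most `2` lies below the quadratic polynomial with the same
two initial values and constant second difference `2`. -/
lemma quadratic_bound (d : ℕ → ℤ) (h : ∀ n, d (n + 2) + d n ≤ 2 * d (n + 1) + 2) (n : ℕ) :
    d n ≤ d 0 + n * (d 1 - d 0) + n * (n - 1) := by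
  have step : ∀ n : ℕ, d (n + 1) - d n ≤ d 1 - d 0 + 2 * n := by
    intro n
    induction n with
    | zero => simp
    | succ k ih => have := h k; push_cast; linarith
  induction n with
  | zero => simp
  | succ k ih => have := step k; push_cast; linarith

variable {F : Type*} [Field F] [Fintype F] [DecidableEq F]

/-- The order to which `X - z` is known to cancel from the abscissa of `P₀ + Q`: one at a zero of the
cubic `f`, two where `f(z)ᵐ = -1` (that is, where `f(z)` is a nonsquare, for `q = 2m + 1`), and
zero elsewhere. -/
def frobMult (a b c : F) (m : ℕ) (z : F) : ℕ :=
  if z ^ 3 + a * z ^ 2 + b * z + c = 0 then 1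
  else if (z ^ 3 + a * z ^ 2 + b * z + c) ^ m = -1 then 2 else 0

/-- The abscissa of `P₀ + Q`, where `P₀ = (t^q, f(t)^m)` and `Q = (t, -1)`, is the fraction
`(f (f ^ m + 1)² - (a + X ^ q + X) (X ^ q - X)²) / (X ^ q - X)²`. Its numerator has degree at most
`2q + 1`, and numerator and denominator are both divisible by `∏ z, (X - z) ^ frobMult z`. -/
lemma exists_cancel (a b c : F) {q m : ℕ} (hq : q = Fintype.card F) (hm : q = 2 * m + 1) :
    ∃ N D : F[X], D ≠ 0 ∧
      N * (X ^ q - X) ^ 2 = D * ((X ^ 3 + C a * X ^ 2 + C b * X + C c)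
        * ((X ^ 3 + C a * X ^ 2 + C b * X + C c) ^ m + 1) ^ 2
        - (C a + X ^ q + X) * (X ^ q - X) ^ 2) ∧
      N.natDegree + ∑ z, frobMult a b c m z ≤ 2 * q + 1 ∧
      D.natDegree + ∑ z, frobMult a b c m z ≤ 2 * q + 1 := by
  set f : F[X] := X ^ 3 + C a * X ^ 2 + C b * X + C c with hf
  set G : F[X] := ∏ z, (X - C z) ^ frobMult a b c m z with hG
  have hGm : G.Monic := monic_prod_of_monic _ _ fun z _ => (monic_X_sub_C z).pow _
  have hGd : G.natDegree = ∑ z, frobMult a b c m z := by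
    rw [hG, natDegree_prod_of_monic _ _ fun z _ => (monic_X_sub_C z).pow _]
    simp
  have hq1 : 1 < q := hq ▸ Fintype.one_lt_card
  have hXq : (X ^ q - X : F[X]) ≠ 0 := FiniteField.X_pow_card_sub_X_ne_zero F hq1
  have hdvd : ∀ H : F[X], (∀ z, (X - C z) ^ frobMult a b c m z ∣ H) → G ∣ H := by
    intro H hH
    refine Finset.prod_dvd_of_coprime (fun x _ y _ hxy => ?_) fun z _ => hH z
    exact (pairwise_coprime_X_sub_C Function.injective_id hxy).pow
  have hlin : ∀ z : F, X - C z ∣ (X ^ q - X : F[X]) := by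
    intro z
    rw [dvd_iff_isRoot, IsRoot, eval_sub, eval_pow, eval_X, hq, FiniteField.pow_card, sub_self]
  have hev : ∀ z : F, f.eval z = z ^ 3 + a * z ^ 2 + b * z + c := by
    intro z; simp [hf]
  have hD : G ∣ (X ^ q - X) ^ 2 := by
    refine hdvd _ fun z => (pow_dvd_pow_of_dvd (hlin z) _).trans (pow_dvd_pow _ ?_)
    unfold frobMult; split_ifs <;> omega
  have hfG : G ∣ f * (f ^ m + 1) ^ 2 := by
    refine hdvd _ fun z => ?_
    unfold frobMult
    split_ifs with h₁ h₂
    · rw [pow_one]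
      exact Dvd.dvd.mul_right (dvd_iff_isRoot.mpr ((hev z).trans h₁)) _
    · refine Dvd.dvd.mul_left (pow_dvd_pow_of_dvd (dvd_iff_isRoot.mpr ?_) 2) _
      rw [IsRoot, eval_add, eval_pow, hev, h₂]; simp
    · simp
  obtain ⟨D, hDe⟩ := hD
  obtain ⟨N, hNe⟩ : G ∣ f * (f ^ m + 1) ^ 2 - (C a + X ^ q + X) * (X ^ q - X) ^ 2 :=
    dvd_sub hfG (Dvd.dvd.mul_left ⟨D, hDe⟩ _)
  have hD0 : D ≠ 0 := by
    rintro rfl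
    rw [mul_zero] at hDe
    exact hXq (pow_eq_zero_iff two_ne_zero |>.mp hDe)
  have hfrob : f * f ^ (2 * m) = X ^ (3 * q) + C a * X ^ (2 * q) + C b * X ^ q + C c := by
    rw [← pow_succ', ← hm, hq, ← FiniteField.expand_card]
    simp only [hf, map_add, map_mul, map_pow, expand_X, expand_C]
    ring
  have hfd : f.natDegree ≤ 3 := by rw [hf]; compute_degree
  -- the terms of degree above `2q + 1` cancel because `f ^ q = f(X ^ q)`
  have hN' : f * (f ^ m + 1) ^ 2 - (C a + X ^ q + X) * (X ^ q - X) ^ 2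
      = (X ^ q + X) * (C b + X ^ q * X) + 2 * C c + 2 * C a * X ^ q * X + 2 * (f * f ^ m) := by
    have e : f * (f ^ m + 1) ^ 2 = f * f ^ (2 * m) + 2 * (f * f ^ m) + f := by ring
    rw [e, hfrob, hf]
    ring
  have hNd : (f * (f ^ m + 1) ^ 2 - (C a + X ^ q + X) * (X ^ q - X) ^ 2).natDegree
      ≤ 2 * q + 1 := by
    rw [hN']
    have h2 : (2 : F[X]).natDegree ≤ 0 := by compute_degree
    refine natDegree_add_le_of_degree_le (natDegree_add_le_of_degree_le
      (natDegree_add_le_of_degree_le ?_ ?_) ?_) ?_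
    · refine (natDegree_mul_le_of_le (m := q) (n := q + 1) ?_ ?_).trans (by omega)
      · exact natDegree_add_le_of_degree_le (natDegree_X_pow_le _) (natDegree_X_le.trans hq1.le)
      · exact natDegree_add_le_of_degree_le (by simp)
          (natDegree_mul_le_of_le (natDegree_X_pow_le _) natDegree_X_le)
    · exact (natDegree_mul_le_of_le h2 (natDegree_C c).le).trans (by omega)
    · exact (natDegree_mul_le_of_le (natDegree_mul_le_of_le (natDegree_mul_le_of_le h2
        (natDegree_C a).le) (natDegree_X_pow_le _)) natDegree_X_le).trans (by omega)
    · exact (natDegree_mul_le_of_le h2 (natDegree_mul_le_of_le hfd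
        (natDegree_pow_le_of_le m hfd))).trans (by omega)
  refine ⟨N, D, hD0, ?_, ?_, ?_⟩
  · rw [hNe, hDe]; ring
  · by_cases hN0 : N = 0
    · have : (∑ z, frobMult a b c m z) ≤ 2 * q := by
        calc _ ≤ ∑ z : F, 2 := Finset.sum_le_sum fun z _ => by
              unfold frobMult; split_ifs <;> omega
          _ = 2 * q := by simp [hq, mul_comm]
      rw [hN0, natDegree_zero]; omega
    · rw [hNe, hGm.natDegree_mul' hN0, hGd] at hNd
      omega
  · have := congrArg natDegree hDe
    rw [hGm.natDegree_mul' hD0, hGd, natDegree_pow,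
      FiniteField.X_pow_card_sub_X_natDegree_eq F hq1] at this
    omega

/-- The height of `P₀ + n Q` is nonnegative, and by `quadratic_bound` it is at most a quadratic
polynomial in `n` determined by the heights of `P₀` and `P₀ + Q`. -/
lemma sum_frobMult_le (a b c : F) {q m : ℕ} (hq : q = Fintype.card F) (hm : q = 2 * m + 1) (n : ℕ) :
    n * ∑ z, frobMult a b c m z ≤ n * q + q + n ^ 2 := by
  classical
  have h2 : (2 : F) ≠ 0 := by
    refine Ring.two_ne_zero fun h => ?_
    have := FiniteField.even_card_iff_char_two.mp h
    omega
  have h2K : (2 : RatFunc F) ≠ 0 := by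
    rw [← map_ofNat (RatFunc.C (K := F)) 2]
    exact (map_ne_zero (RatFunc.C (K := F))).mpr h2
  have hq1 : 1 < q := hq ▸ Fintype.one_lt_card
  have hw := cubicVal_ne_zero a b c
  have hwt : cubicVal a b c = RatFunc.X ^ 3 + RatFunc.C a * RatFunc.X ^ 2
    + RatFunc.C b * RatFunc.X + RatFunc.C c := rfl
  set w := cubicVal a b c with hwdef
  have hQ : (twistedCurve a b c).Nonsingular (w * RatFunc.X) (-w ^ 2) := by
    rw [Affine.nonsingular_iff, Affine.equation_iff]
    simp only [twistedCurve, ← hwdef]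
    refine ⟨by rw [hwt]; ring, Or.inr fun h => ?_⟩
    have : 2 * w ^ 2 = 0 := by linear_combination -h
    simp [h2K, hw] at this
  have hfrob : w * (w ^ m) ^ 2 = (RatFunc.X ^ q) ^ 3 + RatFunc.C a * (RatFunc.X ^ q) ^ 2
      + RatFunc.C b * RatFunc.X ^ q + RatFunc.C c := by
    have : (X ^ 3 + C a * X ^ 2 + C b * X + C c : F[X]) ^ q
        = (X ^ q) ^ 3 + C a * (X ^ q) ^ 2 + C b * X ^ q + C c := by
      rw [hq, ← FiniteField.expand_card]
      simp
    have := congrArg (algebraMap F[X] (RatFunc F)) this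
    rw [map_pow, ← cubicVal_eq, ← hwdef, hm, pow_succ', pow_mul', ← hm] at this
    rw [this]
    simp
  have hP : (twistedCurve a b c).Nonsingular (w * RatFunc.X ^ q) (w ^ 2 * w ^ m) := by
    rw [Affine.nonsingular_iff, Affine.equation_iff]
    simp only [twistedCurve, ← hwdef]
    refine ⟨by linear_combination w ^ 3 * hfrob, Or.inr fun h => ?_⟩
    have : 2 * w ^ (2 + m) = 0 := by rw [pow_add]; linear_combination h
    simp [h2K, hw] at this
  let d : ℕ → ℤ := fun k => pointHeight a b c (.some _ _ hP + k • .some _ _ hQ)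
  have hd : ∀ k, d (k + 2) + d k ≤ 2 * d (k + 1) + 2 := by
    intro k
    have := pointHeight_parallelogram h2 hQ (.some _ _ hP + (k + 1) • .some _ _ hQ)
    rw [add_assoc, ← succ_nsmul, add_sub_assoc, succ_nsmul _ k, add_sub_cancel_right,
      ← succ_nsmul] at this
    simp only [d]
    exact_mod_cast this
  have hd0 : d 0 = q := by
    change ((ratHeight (w * RatFunc.X ^ q / w) : ℕ) : ℤ) = q
    rw [mul_div_cancel_left₀ _ hw]
    have : (RatFunc.X ^ q : RatFunc F) = algebraMap F[X] (RatFunc F) (X ^ q) := by simp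
    rw [this, ratHeight, RatFunc.num_algebraMap, RatFunc.denom_algebraMap]
    simp
  have hXq : (RatFunc.X ^ q - RatFunc.X : RatFunc F) ≠ 0 := by
    have := RatFunc.algebraMap_ne_zero (FiniteField.X_pow_card_sub_X_ne_zero F hq1)
    simpa using this
  have hd1 : d 1 + ∑ z, frobMult a b c m z ≤ 2 * q + 1 := by
    obtain ⟨N, D, hD0, hND, hN, hD⟩ := exists_cancel a b c hq hm
    have hne : w * RatFunc.X ^ q ≠ w * RatFunc.X := by
      intro h
      exact hXq (sub_eq_zero.mpr (mul_left_cancel₀ hw h))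
    have : pointHeight a b c (.some _ _ hP + .some _ _ hQ) ≤
        2 * q + 1 - ∑ z, frobMult a b c m z := by
      rw [Affine.Point.add_of_X_ne hne]
      change ratHeight ((twistedCurve a b c).addX _ _ _ / w) ≤ _
      refine ratHeight_le (N := N) hD0 ?_ (by omega) (by omega)
      rw [Affine.slope_of_X_ne hne]
      simp only [Affine.addX, twistedCurve, ← hwdef, zero_mul, add_zero]
      have hND' := congrArg (algebraMap F[X] (RatFunc F)) hND
      have hwp := cubicVal_eq a b c
      rw [← hwdef] at hwp
      simp only [map_mul, map_sub, map_pow, RatFunc.algebraMap_X, map_add, map_one,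
        RatFunc.algebraMap_C] at hND' hwp
      rw [← hwp] at hND'
      apply mul_right_cancel₀ (pow_ne_zero 2 hXq)
      rw [hND']
      rw [show (w ^ 2 * w ^ m - -w ^ 2) / (w * RatFunc.X ^ q - w * RatFunc.X)
        = w * (w ^ m + 1) / (RatFunc.X ^ q - RatFunc.X) by
          rw [← mul_sub, div_eq_div_iff (mul_ne_zero hw hXq) hXq]; ring]
      field_simp
      ring
    simp only [d, one_smul]
    omega
  have := quadratic_bound d hd n
  have hnn : (0 : ℤ) ≤ d n := Int.natCast_nonneg _
  rw [hd0] at this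
  generalize ∑ z, frobMult a b c m z = s at hd1 ⊢
  zify
  nlinarith [mul_le_mul_of_nonneg_left hd1 (Int.natCast_nonneg n)]

end Count

/-! ### Solving the cubic equation off a small set -/

section Combinatorics

variable {F : Type*} [Field F] [Fintype F] [DecidableEq F]

/-- A monic cubic takes nonzero square values at least about `q / 2 - √q` times. The cubic may have
repeated roots. -/
lemma card_square_values (a b c : F) {q : ℕ} (hq : q = Fintype.card F) (hodd : Odd q) :
    q ≤ 2 * #{z : F | z ^ 3 + a * z ^ 2 + b * z + c ≠ 0 ∧ IsSquare (z ^ 3 + a * z ^ 2 + b * z + c)}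
      + 2 * Nat.sqrt q + 5 := by
  obtain ⟨m, hm⟩ := hodd
  have hchar : ringChar F ≠ 2 := by
    intro h
    have := FiniteField.even_card_iff_char_two.mp h
    omega
  set f : F → F := fun z => z ^ 3 + a * z ^ 2 + b * z + c with hf
  change q ≤ 2 * #{z : F | f z ≠ 0 ∧ IsSquare (f z)} + 2 * Nat.sqrt q + 5
  have hsum : ∑ z, frobMult a b c m z = #{z | f z = 0} + 2 * #{z | f z ≠ 0 ∧ f z ^ m = -1} := by
    have : ∀ z, frobMult a b c m z
        = (if f z = 0 then 1 else 0) + 2 * (if f z ≠ 0 ∧ f z ^ m = -1 then 1 else 0) := by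
      intro z
      simp only [frobMult, f]
      split_ifs <;> simp_all
    rw [Finset.sum_congr rfl fun z _ => this z, Finset.sum_add_distrib, ← Finset.mul_sum]
    simp
  have hpart : q ≤ #{z | f z = 0} + #{z | f z ≠ 0 ∧ f z ^ m = -1}
      + #{z | f z ≠ 0 ∧ IsSquare (f z)} := by
    rw [hq, ← Finset.card_univ]
    refine le_trans (Finset.card_le_card (t := ({z | f z = 0} : Finset F) ∪
      ({z | f z ≠ 0 ∧ f z ^ m = -1} : Finset F) ∪
      ({z | f z ≠ 0 ∧ IsSquare (f z)} : Finset F)) ?_) ?_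
    · intro z _
      simp only [Finset.mem_union, Finset.mem_filter, Finset.mem_univ, true_and]
      by_cases h0 : f z = 0
      · exact Or.inl (Or.inl h0)
      have hm' : Fintype.card F / 2 = m := by omega
      rcases FiniteField.pow_dichotomy hchar h0 with h | h
      · exact Or.inr ⟨h0, (FiniteField.isSquare_iff hchar h0).mpr h⟩
      · exact Or.inl (Or.inr ⟨h0, hm' ▸ h⟩)
    · exact (Finset.card_union_le _ _).trans (Nat.add_le_add_right (Finset.card_union_le _ _) _)
  have hroots : #{z | f z = 0} ≤ 3 := by
    open Polynomial in
    have h0 := cubic_poly_ne_zero a b c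
    have hd : (X ^ 3 + C a * X ^ 2 + C b * X + C c : F[X]).natDegree ≤ 3 := by compute_degree
    refine le_trans ?_ hd
    refine Polynomial.card_le_degree_of_subset_roots fun z hz => ?_
    rw [Finset.mem_val, Finset.mem_filter] at hz
    rw [mem_roots h0, IsRoot]
    simpa [hf] using hz.2
  have hn := sum_frobMult_le a b c hq hm (Nat.sqrt q)
  have h₁ : Nat.sqrt q * Nat.sqrt q ≤ q := Nat.sqrt_le q
  have h₂ : q < (Nat.sqrt q + 1) * (Nat.sqrt q + 1) := Nat.lt_succ_sqrt q
  have hpos : 0 < Nat.sqrt q := Nat.sqrt_pos.mpr (by omega)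
  have hle : ∑ z, frobMult a b c m z ≤ q + 2 * Nat.sqrt q + 2 := by
    by_contra hcon
    push Not at hcon
    have := Nat.mul_le_mul_left (Nat.sqrt q) hcon
    nlinarith
  omega

/-- Set `u = -(v + w + a)`, so that `u v w = -c`. Given `u`, the elements `v` and `w` are the roots of
`X² + (u + a) X - c / u`, and with `z = 4c / u` these are distinct elements of the field exactly when
`z³ + a² z² + 8 a c z + 16 c²` is a nonzero square. A given `d ∈ E` is one of the two roots for at
most two values of `u`, so `E` rules out at most `2 * #E` values of `z`. -/
lemma exists_pair_off {q : ℕ} (hq : q = Fintype.card F) (hodd : Odd q) (a c : F) (hc : c ≠ 0)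
    (E : Finset F) (hE : 4 * #E + 2 * Nat.sqrt q + 7 < q) :
    ∃ v w : F, v ≠ w ∧ v ≠ 0 ∧ w ≠ 0 ∧ v ∉ E ∧ w ∉ E ∧ v * w * (v + w + a) = c := by
  by_contra! hcon
  have hchar : ringChar F ≠ 2 := by
    intro h
    have := FiniteField.even_card_iff_char_two.mp h
    obtain ⟨m, hm⟩ := hodd
    omega
  have h2 : (2 : F) ≠ 0 := Ring.two_ne_zero hchar
  have h4c : 4 * c ≠ 0 := by
    rw [show (4 : F) = 2 * 2 by norm_num]
    exact mul_ne_zero (mul_ne_zero h2 h2) hc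
  have hcard := card_square_values (a ^ 2) (2 * a * (4 * c)) ((4 * c) ^ 2) hq hodd
  set S : Finset F := {z : F | z ^ 3 + a ^ 2 * z ^ 2 + 2 * a * (4 * c) * z + (4 * c) ^ 2 ≠ 0 ∧
    IsSquare (z ^ 3 + a ^ 2 * z ^ 2 + 2 * a * (4 * c) * z + (4 * c) ^ 2)} with hS
  open Polynomial in
  let T : Finset F := E.biUnion fun d =>
    (C d * X ^ 2 + C (d * (d + a)) * X + C (-c)).roots.toFinset
  have hT : #T ≤ #E * 2 := by
    refine Finset.card_biUnion_le_card_mul _ _ _ fun d _ => ?_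
    refine (Multiset.toFinset_card_le _).trans ((Polynomial.card_roots' _).trans ?_)
    compute_degree
  have hmem : ∀ d ∈ E, ∀ u, d * u * (d + u + a) = c → u ∈ T := by
    intro d hd u hu
    refine Finset.mem_biUnion.mpr ⟨d, hd, ?_⟩
    rw [Multiset.mem_toFinset, Polynomial.mem_roots']
    refine ⟨?_, ?_⟩
    · intro h0
      apply hc
      have := congrArg (Polynomial.eval 0) h0
      simpa using this
    · simp only [Polynomial.IsRoot, Polynomial.eval_add, Polynomial.eval_mul, Polynomial.eval_pow,
        Polynomial.eval_C, Polynomial.eval_X]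
      linear_combination hu
  have hST : #(S.erase 0) ≤ #T := by
    refine Finset.card_le_card_of_injOn (fun z => 4 * c / z) ?_ ?_
    · intro z hz
      rw [Finset.mem_coe, Finset.mem_erase, hS, Finset.mem_filter] at hz
      obtain ⟨hz0, -, hne, s, hs⟩ := hz
      have hs0 : s ≠ 0 := by rintro rfl; exact hne (by rw [hs]; ring)
      -- `u = 4c / z` is completed by the roots `v, w` of `X² + (u + a) X - c / u`,
      -- whose discriminant is `(s / z)²`
      obtain ⟨u, hu⟩ : ∃ u, u = 4 * c / z := ⟨_, rfl⟩
      have huz : u * z = 4 * c := by rw [hu]; field_simp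
      have hu0 : u ≠ 0 := by
        rintro rfl; exact h4c (by rw [← huz, zero_mul])
      obtain ⟨v, hv⟩ : ∃ v, v = (-(u + a) + s / z) / 2 := ⟨_, rfl⟩
      obtain ⟨w, hw⟩ : ∃ w, w = (-(u + a) - s / z) / 2 := ⟨_, rfl⟩
      have hsum : v + w = -(u + a) := by rw [hv, hw]; field_simp; ring
      have hdiff : v - w = s / z := by rw [hv, hw]; field_simp; ring
      have hdisc : (s / z) ^ 2 = z + (u + a) ^ 2 := by
        rw [div_pow, div_eq_iff (pow_ne_zero 2 hz0), sq s, ← hs, ← huz]; ring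
      have hprod : u * (v * w) = -c := by
        have h4 : (4 : F) ≠ 0 := left_ne_zero_of_mul h4c
        apply mul_left_cancel₀ h4
        have : 4 * (v * w) = -z := by
          linear_combination (v + w - (u + a)) * hsum - (v - w + s / z) * hdiff - hdisc
        linear_combination u * this - huz
      have hvw : v ≠ w := by
        rw [← sub_ne_zero, hdiff]; exact div_ne_zero hs0 hz0
      have hvw0 : v * w ≠ 0 := by
        intro h0; rw [h0, mul_zero] at hprod; exact hc (neg_eq_zero.mp hprod.symm)
      have hvwa : v * w * (v + w + a) = c := by rw [hsum]; linear_combination -hprod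
      change 4 * c / z ∈ (T : Set F)
      rw [← hu, Finset.mem_coe]
      by_cases hvE : v ∈ E
      · refine hmem v hvE u ?_
        linear_combination (-hprod + u * v * hsum)
      · by_cases hwE : w ∈ E
        · refine hmem w hwE u ?_
          linear_combination (-hprod + u * w * hsum)
        · exact absurd hvwa
            (hcon v w hvw (left_ne_zero_of_mul hvw0) (right_ne_zero_of_mul hvw0) hvE hwE)
    · intro x hx y hy hxy
      have hx0 : x ≠ 0 := (Finset.mem_erase.mp (Finset.mem_coe.mp hx)).1
      have hy0 : y ≠ 0 := (Finset.mem_erase.mp (Finset.mem_coe.mp hy)).1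
      simp only at hxy
      rw [div_eq_div_iff hx0 hy0] at hxy
      exact (mul_left_cancel₀ h4c hxy).symm
  have := Finset.pred_card_le_card_erase (s := S) (a := 0)
  omega

end Combinatorics

/-! ### The determinant -/

section Determinant

/-- The coefficients of degree at most `n + 1` of `p = -θ (X - e) ∏ (X - y i)`, with `i ≠ 0`, form a
left null vector. Here `e` is chosen so that the coefficient of degree `n + 1` is `1`; since the one
of degree `n + 2` is `-θ`, pairing with `crv F (n + 2) θ x` gives `p(x)`. The hypothesis `h` says that
`p (y 0) + b = 0`. -/
lemma det_eq_zero_of_relation {F : Type*} [Field F] {θ : F} (hθ : θ ≠ 0) {n : ℕ}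
    (y : Fin (n + 2) → F) (b : F)
    (h : (∏ i : Fin (n + 1), (y 0 - y i.succ)) * (1 - θ * ∑ i, y i) + b = 0) :
    (Matrix.of fun i j : Fin (n + 2) => crv F (n + 2) θ (y j) i +
      if j = 0 then b * (if (i : ℕ) = n + 1 then 1 else 0) else 0).det = 0 := by
  open Polynomial in
  rw [← Matrix.exists_vecMul_eq_zero_iff]
  -- `p` vanishes at `y 1, …, y (n + 1)`, and `e` makes its coefficient of degree `n + 1` equal to `1`
  let e : F := 1 / θ - ∑ i : Fin (n + 1), y i.succ
  let z : Fin (n + 2) → F := Fin.cons e fun i => y i.succ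
  let p : F[X] := C (-θ) * ∏ i, (X - C (z i))
  have hzsum : ∑ i, z i = 1 / θ := by simp [Fin.sum_univ_succ, z, e]
  have hcn : p.coeff (n + 1) = 1 := by
    have := Polynomial.prod_X_sub_C_coeff_card_pred (Finset.univ : Finset (Fin (n + 2))) z (by simp)
    simp only [Finset.card_univ, Fintype.card_fin, hzsum] at this
    rw [coeff_C_mul, show n + 1 = n + 2 - 1 by omega, this]
    field_simp
  have hmonic : (∏ i, (X - C (z i))).Monic := monic_prod_of_monic _ _ fun i _ => monic_X_sub_C _
  have hdeg : (∏ i, (X - C (z i))).natDegree = n + 2 := by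
    rw [natDegree_prod_of_monic _ _ fun i _ => monic_X_sub_C _]; simp
  have hcn' : p.coeff (n + 2) = -θ := by
    have := hmonic.coeff_natDegree
    rw [hdeg] at this
    rw [coeff_C_mul, this, mul_one]
  have hpd : p.natDegree < n + 3 := by
    have := natDegree_C_mul_le (-θ) (∏ i, (X - C (z i)))
    rw [hdeg] at this
    exact Nat.lt_succ_of_le this
  have hcrv : ∀ x : F, ∑ i : Fin (n + 2), p.coeff i * crv F (n + 2) θ x i = p.eval x := by
    intro x
    rw [eval_eq_sum_range' hpd, Finset.sum_range_succ, Finset.sum_range_succ, Fin.sum_univ_castSucc,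
      ← Fin.sum_univ_eq_sum_range (fun i => p.coeff i * x ^ i), hcn, hcn']
    have : ∀ i : Fin (n + 1), crv F (n + 2) θ x i.castSucc = x ^ (i : ℕ) := by
      intro i
      have := i.isLt
      simp only [crv, Fin.val_castSucc]
      rw [if_neg (by omega)]
    simp only [this, Fin.val_castSucc, Fin.val_last, hcn]
    simp [crv]
    ring
  refine ⟨fun i => p.coeff i, fun h0 => ?_, ?_⟩
  · have := congrFun h0 (Fin.last (n + 1))
    simp [hcn] at this
  · ext j
    simp only [Matrix.vecMul, dotProduct, Matrix.of_apply, Pi.zero_apply, mul_add,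
      Finset.sum_add_distrib, hcrv]
    have heval : ∀ x, p.eval x = -θ * ((x - e) * ∏ i : Fin (n + 1), (x - y i.succ)) := by
      intro x
      simp [p, eval_prod, Fin.prod_univ_succ, z]
    rw [heval]
    refine Fin.cases ?_ (fun k => ?_) j
    · have hb : ∑ i : Fin (n + 2), p.coeff i * (if (0 : Fin (n + 2)) = 0 then
          b * (if (i : ℕ) = n + 1 then (1 : F) else 0) else 0) = b := by
        rw [Fin.sum_univ_castSucc, Finset.sum_eq_zero]
        · simp [hcn]
        · intro i _
          have := i.isLt
          simp [this.ne]
      rw [hb, ← h, Fin.sum_univ_succ]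
      simp only [e]
      field_simp
      ring
    · rw [Finset.prod_eq_zero (Finset.mem_univ k) (sub_self _)]
      simp [Fin.succ_ne_zero]

end Determinant

/-- The two missing elements can be chosen so as to satisfy the relation of
`det_eq_zero_of_relation`. -/
lemma exists_pair_det {F : Type*} [Field F] [Fintype F] [DecidableEq F]
    {q : ℕ} (hq : q = Fintype.card F) (hodd : Odd q) {θ : F} (hθ : θ ≠ 0) {m : ℕ}
    (hbound : 4 * m + 2 * Nat.sqrt q + 7 < q)
    (α : Fin (m + 1) → F) (hα : Function.Injective α) (b : F) :
    ∃ β γ : F, β ∉ Set.range α ∧ γ ∉ Set.range α ∧ β ≠ γ ∧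
      (∏ i : Fin m, (α 0 - α i.succ)) * (α 0 - β) * (α 0 - γ)
        * (1 - θ * (∑ i, α i + β + γ)) + b = 0 := by
  set P := ∏ i : Fin m, (α 0 - α i.succ) with hP
  have hP0 : P ≠ 0 := Finset.prod_ne_zero_iff.mpr fun i _ =>
    sub_ne_zero.mpr fun h => Fin.succ_ne_zero i (hα h).symm
  set s := ∑ i, α i
  by_cases hb : b = 0
  · -- any `β + γ = 1 / θ - s` works
    let E : Finset F := Finset.univ.image α ∪ Finset.univ.image (fun i => 1 / θ - s - α i)
      ∪ {(1 / θ - s) / 2}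
    have hE : #E < Fintype.card F := by
      have h₁ : #(Finset.univ.image α) ≤ m + 1 := by
        simpa using Finset.card_image_le (s := Finset.univ) (f := α)
      have h₂ : #(Finset.univ.image (fun i => 1 / θ - s - α i)) ≤ m + 1 := by
        simpa using Finset.card_image_le (s := Finset.univ) (f := fun i => 1 / θ - s - α i)
      have h₃ := Finset.card_union_le (Finset.univ.image α ∪
        Finset.univ.image (fun i => 1 / θ - s - α i)) {(1 / θ - s) / 2}
      have h₄ := Finset.card_union_le (Finset.univ.image α)
        (Finset.univ.image (fun i => 1 / θ - s - α i))
      rw [Finset.card_singleton] at h₃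
      change #E ≤ _ at h₃
      omega
    obtain ⟨β, hβ⟩ : ∃ β, β ∉ E := by
      by_contra! h
      rw [Finset.eq_univ_of_forall h, Finset.card_univ] at hE
      exact lt_irrefl _ hE
    simp only [E, Finset.mem_union, Finset.mem_image, Finset.mem_univ, true_and,
      Finset.mem_singleton, not_or, not_exists] at hβ
    obtain ⟨⟨hβ₁, hβ₂⟩, hβ₃⟩ := hβ
    refine ⟨β, 1 / θ - s - β, by simpa using hβ₁, ?_, ?_, ?_⟩
    · rintro ⟨i, hi⟩
      exact hβ₂ i (by rw [hi]; ring)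
    · intro h
      have h2 : (2 : F) ≠ 0 := by
        refine Ring.two_ne_zero fun h => ?_
        have := FiniteField.even_card_iff_char_two.mp h
        obtain ⟨k, hk⟩ := hodd
        omega
      apply hβ₃
      rw [eq_div_iff h2]
      linear_combination h
    · rw [hb]; field_simp; ring
  · -- in terms of `v = α 0 - β` and `w = α 0 - γ` the equation is `v w (v + w + a) = c`
    let a : F := (1 - θ * (s + 2 * α 0)) / θ
    let c : F := -b / (P * θ)
    have hc : c ≠ 0 := div_ne_zero (neg_ne_zero.mpr hb) (mul_ne_zero hP0 hθ)
    let E : Finset F := Finset.univ.image fun i : Fin m => α 0 - α i.succ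
    have hE : #E ≤ m := by
      simpa using Finset.card_image_le (s := Finset.univ) (f := fun i : Fin m => α 0 - α i.succ)
    obtain ⟨v, w, hvw, hv, hw, hvE, hwE, h⟩ := exists_pair_off hq hodd a c hc E (by omega)
    have hrange : ∀ x, x ≠ 0 → x ∉ E → α 0 - x ∉ Set.range α := by
      rintro x hx hxE ⟨i, hi⟩
      rcases Fin.eq_zero_or_eq_succ i with rfl | ⟨k, rfl⟩
      · exact hx (by linear_combination hi)
      · exact hxE (Finset.mem_image.mpr ⟨k, Finset.mem_univ _, by rw [hi]; ring⟩)
    refine ⟨α 0 - v, α 0 - w, hrange v hv hvE, hrange w hw hwE, fun h' => hvw ?_, ?_⟩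
    · linear_combination -h'
    · have ha : a * θ = 1 - θ * (s + 2 * α 0) := div_mul_cancel₀ _ hθ
      have hc' : c * (P * θ) = -b := div_mul_cancel₀ _ (mul_ne_zero hP0 hθ)
      linear_combination (P * θ) * h + hc' - P * v * w * ha

/-- Let `q` be odd, `θ ≠ 0`, `3 ≤ r` and `4r ≤ q - 3√q + 7` (in ℝ). For any
`r - 2` distinct elements `α_1, …, α_{r-2} ∈ 𝔽_q` and any `b ∈ 𝔽_q`, there exist
`α_{r-1} ≠ α_r` outside `{α_1, …, α_{r-2}}` with
`det(c_{r,θ}(α_1) + b·e_r | c_{r,θ}(α_2) | ⋯ | c_{r,θ}(α_r)) = 0`. -/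
theorem exists_singular_with_shift_odd {F : Type*} [Field F] [Fintype F] [DecidableEq F]
    (q : ℕ) (hq : q = Fintype.card F) (hodd : Odd q)
    (θ : F) (hθ : θ ≠ 0) (r : ℕ) (hr : 3 ≤ r)
    (hrq : 4 * (r : ℝ) ≤ (q : ℝ) - 3 * Real.sqrt (q : ℝ) + 7)
    (α : Fin (r - 2) → F) (hα : Function.Injective α) (b : F) :
    ∃ β γ : F, β ∉ Set.range α ∧ γ ∉ Set.range α ∧ β ≠ γ ∧
      (Matrix.of fun i j : Fin r =>
          if (j : ℕ) = 0 then
            crv F r θ (α ⟨0, by omega⟩) i + b * (if (i : ℕ) = r - 1 then 1 else 0)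
          else if h : (j : ℕ) < r - 2 then crv F r θ (α ⟨j, h⟩) i
          else if (j : ℕ) = r - 2 then crv F r θ β i
          else crv F r θ γ i).det = 0 := by
  obtain ⟨m, rfl⟩ : ∃ m, r = m + 3 := ⟨r - 3, by omega⟩
  have hbound : 4 * m + 2 * Nat.sqrt q + 7 < q := by
    have hs : (Nat.sqrt q : ℝ) ≤ Real.sqrt q := Real.nat_sqrt_le_real_sqrt
    have hs2 : Real.sqrt q ^ 2 = q := Real.sq_sqrt (Nat.cast_nonneg q)
    have h0 := Real.sqrt_nonneg (q : ℝ)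
    have hm0 : (0 : ℝ) ≤ m := Nat.cast_nonneg m
    push_cast at hrq
    have : (2 : ℝ) < Real.sqrt q := by nlinarith
    have : (4 * m + 2 * Nat.sqrt q + 7 : ℝ) < q := by linarith
    exact_mod_cast this
  obtain ⟨β, γ, hβ, hγ, hne, h⟩ := exists_pair_det hq hodd hθ hbound α hα b
  refine ⟨β, γ, hβ, hγ, hne, ?_⟩
  let α' : Fin (m + 1) → F := α
  let y : Fin (m + 3) → F := Fin.snoc (Fin.snoc α' β : Fin (m + 2) → F) γ
  have hy₁ : ∀ k : Fin (m + 1), y k.castSucc.castSucc = α' k := fun k => by simp [y]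
  have hy₂ : y (Fin.last (m + 1)).castSucc = β := by simp [y]
  have hy₃ : y (Fin.last (m + 2)) = γ := by simp [y]
  have hy0 : y 0 = α' 0 := hy₁ 0
  have hdet := det_eq_zero_of_relation hθ (n := m + 1) y b ?_
  · refine (congrArg Matrix.det ?_).trans hdet
    ext i j
    simp only [Matrix.of_apply]
    have hj := j.isLt
    by_cases h0 : (j : ℕ) = 0
    · obtain rfl : j = 0 := Fin.ext h0
      simp only [Fin.val_zero, if_true, hy0]
      rfl
    · have hj0 : j ≠ 0 := fun h => h0 (by rw [h]; rfl)
      rw [if_neg h0, if_neg hj0, add_zero]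
      split_ifs with h₁ h₂
      · exact congrArg (fun x => crv F (m + 3) θ x i) (hy₁ ⟨j, h₁⟩).symm
      · obtain rfl : j = (Fin.last (m + 1)).castSucc := Fin.ext h₂
        rw [hy₂]
      · obtain rfl : j = Fin.last (m + 2) := Fin.ext (by simp only [Fin.val_last]; omega)
        rw [hy₃]
  · rw [Fin.prod_univ_castSucc, Fin.prod_univ_castSucc, Fin.sum_univ_castSucc,
      Fin.sum_univ_castSucc]
    simp only [Fin.succ_last, Fin.succ_castSucc, hy₁, hy₂, hy₃, hy0]
    exact h
end

section
/- Let q be an odd prime power and suppose k is an integer with 3q + 3√q − 7 ≤ 4k (square root taken in the reals) and k ≤ q − 4. Then u ∈ 𝔽_q^q is a deep hole of TRS_k(𝔽_q, θ) if and only if there exist a ∈ 𝔽_q with a ≠ 0 and g ∈ S_{k,θ} such that u = u_{a x^k + g}. -/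
/-!
Write `q = |F|`. A polynomial lies in `Sset F k θ` iff its degree is at most `k` and
`coeff k = θ * coeff (k - 1)`. From this the covering radius is `q - k`: every word agrees with a
codeword on suitable `k` points (`exists_Sset_agree`), while `a X^k + g` minus a code polynomial
is nonzero of degree at most `k`, so it has at most `k` zeros (`le_distTo`). In particular the
words `a X^k + g` with `a ≠ 0` are deep holes.

Conversely, attach to a word `f : F → F` the functional `L p = Σ_a f(a) p(a)` on polynomials. If
there are a set `W` with `|W| = q - k - 1` and a `b ∈ F` such that `L` kills
`∏_{a ∈ W} (X - a) · (X - b)` and `Σ W + b = 1/θ`, then `f` is within distance `q - k - 1` of the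
code (`exists_Sset_of_annihilated`), hence is not a deep hole. Such `W` and `b` exist whenever `L`
does not vanish identically in degree at most `q - k - 2` (`exists_split_annihilated`):

* The first `q - k - 4` roots are picked greedily so that the twisted functional is still nonzero
  on quadratic polynomials (`exists_twist_ne_zero`).
* For the last four roots, the sum being prescribed, there remains one equation in three unknowns
  `z, x, y`, which must be distinct and avoid the earlier roots (`core_exists`). Fixing `z` gives
  either a conic or, after an affine change of variables, a cubic `u v (1 - u - v) = c`. The
  numbers of points are sums of quadratic characters. For the cubics, Hasse's theorem is avoided by
  averaging over `c`: the second moment of the error term `famSum` (`sum_famSum_sq`) shows that few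
  values of `c` are bad (`card_bad_bound`), and `z` can be chosen so that `c` is not one of them.
  The hypothesis `3q + 3√q - 7 ≤ 4k` is what leaves room to avoid the earlier roots.

So for a deep hole `L` vanishes in degree at most `q - k - 2`, which means that `f` is given by a
polynomial of degree at most `k` (`exists_poly_of_annihilated`). Subtracting the right multiple of
`X^k` lands in `Sset F k θ`, and that multiple is nonzero because codewords are not deep holes.
-/

open Polynomial Finset

/-! ### Quadratic character sums -/

/-- A rescaling turns this sum into the Jacobi sum of the quadratic character with itself. -/
theorem sum_quadChar_split {F : Type*} [Field F] [Fintype F] [DecidableEq F]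
    (hF : ringChar F ≠ 2) {a b : F} (hab : a ≠ b) :
    ∑ d : F, quadraticChar F ((a - d) * (b - d)) = -1 := by
  have hJ := jacobiSum_nontrivial_inv (quadraticChar_ne_one hF)
  rw [(quadraticChar_isQuadratic F).inv, jacobiSum] at hJ
  have hab' : a - b ≠ 0 := sub_ne_zero.mpr hab
  let e : F ≃ F := (Equiv.mulLeft₀ (a - b) hab').trans (Equiv.subLeft a)
  have he : ∀ x, e x = a - (a - b) * x := fun x => rfl
  rw [← e.sum_comp]
  have h1 : ∀ x, quadraticChar F ((a - e x) * (b - e x))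
      = quadraticChar F (-1) * (quadraticChar F x * quadraticChar F (1 - x)) := by
    intro x
    rw [he, ← map_mul, ← map_mul]
    have : (a - (a - (a - b) * x)) * (b - (a - (a - b) * x))
        = (a - b) ^ 2 * (-1 * (x * (1 - x))) := by ring
    rw [this, map_mul, quadraticChar_sq_one' hab', one_mul]
  simp_rw [h1]
  rw [← Finset.mul_sum, hJ, mul_neg, ← map_mul]
  simp

theorem sum_comp_sq {F : Type*} [Field F] [Fintype F] [DecidableEq F]
    (hF : ringChar F ≠ 2) (g : F → ℤ) :
    ∑ x : F, g (x ^ 2) = ∑ y : F, (quadraticChar F y + 1) * g y := by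
  rw [← Finset.sum_fiberwise (s := univ) (g := fun x : F => x ^ 2)]
  refine Finset.sum_congr rfl fun y _ => ?_
  rw [← quadraticChar_card_sqrts hF y]
  rw [Finset.sum_congr rfl (g := fun _ => g y)]
  · rw [Finset.sum_const, nsmul_eq_mul]
    congr 2
    congr 1
    ext x; simp
  · intro x hx
    simp only [mem_filter, mem_univ, true_and] at hx
    rw [hx]

theorem sum_quadChar_sq_sub {F : Type*} [Field F] [Fintype F] [DecidableEq F]
    (hF : ringChar F ≠ 2) {d : F} (hd : d ≠ 0) :
    ∑ x : F, quadraticChar F (x ^ 2 - d) = -1 := by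
  rw [sum_comp_sq hF (fun y => quadraticChar F (y - d))]
  simp_rw [add_mul, one_mul]
  rw [Finset.sum_add_distrib]
  have h2 : ∑ y : F, quadraticChar F (y - d) = 0 := by
    rw [← quadraticChar_sum_zero hF]
    exact (Equiv.subRight d).sum_comp (fun y => quadraticChar F y)
  rw [h2, add_zero, ← sum_quadChar_split hF hd.symm]
  refine Finset.sum_congr rfl fun y _ => ?_
  rw [← map_mul]
  congr 1
  ring

theorem two_ne_zero_of_char {F : Type*} [Field F] [Fintype F]
    (hF : ringChar F ≠ 2) : (2 : F) ≠ 0 := Ring.two_ne_zero hF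

theorem quadChar_four_mul {F : Type*} [Field F] [Fintype F] [DecidableEq F]
    (hF : ringChar F ≠ 2) (x : F) : quadraticChar F (4 * x) = quadraticChar F x := by
  have : (4 : F) = 2 ^ 2 := by norm_num
  rw [map_mul, this, quadraticChar_sq_one' (two_ne_zero_of_char hF), one_mul]

/-- The sum is `-χ(a)`, by completing the square; only this lower bound is needed. -/
theorem sum_quadChar_quadratic {F : Type*} [Field F] [Fintype F] [DecidableEq F]
    (hF : ringChar F ≠ 2) {a b c : F} (ha : a ≠ 0) (hd : b ^ 2 - 4 * a * c ≠ 0) :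
    -1 ≤ ∑ x : F, quadraticChar F (a * x ^ 2 + b * x + c) := by
  have h2 := two_ne_zero_of_char hF
  let e : F ≃ F := (Equiv.mulLeft₀ (2 * a) (mul_ne_zero h2 ha)).trans (Equiv.addRight b)
  have he : ∀ x, e x = 2 * a * x + b := fun x => rfl
  have h1 : ∀ x, quadraticChar F (a * x ^ 2 + b * x + c)
      = quadraticChar F a * quadraticChar F ((e x) ^ 2 - (b ^ 2 - 4 * a * c)) := by
    intro x
    have h3 : (e x) ^ 2 - (b ^ 2 - 4 * a * c) = 4 * (a * (a * x ^ 2 + b * x + c)) := by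
      rw [he]; ring
    rw [h3, quadChar_four_mul hF, map_mul, ← mul_assoc, ← sq, quadraticChar_sq_one ha, one_mul]
  simp_rw [h1]
  rw [← Finset.mul_sum, e.sum_comp (fun y => quadraticChar F (y ^ 2 - (b ^ 2 - 4 * a * c))),
    sum_quadChar_sq_sub hF hd]
  rcases quadraticChar_dichotomy ha with h | h <;> rw [h] <;> norm_num

theorem sum_quadChar_linear {F : Type*} [Field F] [Fintype F] [DecidableEq F]
    (hF : ringChar F ≠ 2) {b c : F} (hb : b ≠ 0) :
    ∑ x : F, quadraticChar F (b * x + c) = 0 := by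
  let e : F ≃ F := (Equiv.mulLeft₀ b hb).trans (Equiv.addRight c)
  rw [← quadraticChar_sum_zero hF]
  exact e.sum_comp (fun y => quadraticChar F y)

theorem card_quadratic_roots {F : Type*} [Field F] [Fintype F] [DecidableEq F]
    (hF : ringChar F ≠ 2) {a b c : F} (ha : a ≠ 0) :
    ((univ.filter fun x : F => a * x ^ 2 + b * x + c = 0).card : ℤ)
      = quadraticChar F (b ^ 2 - 4 * a * c) + 1 := by
  have h2 := two_ne_zero_of_char hF
  have h2a := mul_ne_zero h2 ha
  have h4 : (4 : F) = 2 * 2 := by norm_num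
  rw [← quadraticChar_card_sqrts hF]
  congr 1
  let e : F ≃ F := (Equiv.mulLeft₀ (2 * a) h2a).trans (Equiv.addRight b)
  have he : ∀ x, e x = 2 * a * x + b := fun x => rfl
  refine Finset.card_equiv e fun x => ?_
  simp only [mem_filter, mem_univ, true_and, Set.mem_toFinset, Set.mem_ofPred_eq, he]
  constructor
  · intro h
    linear_combination 4 * a * h
  · intro h
    have : (2 * 2 * a) * (a * x ^ 2 + b * x + c) = 0 := by linear_combination h
    exact (mul_eq_zero.mp this).resolve_left (mul_ne_zero (mul_ne_zero h2 h2) ha)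

theorem card_quadratic_roots_le {F : Type*} [Field F] [Fintype F] [DecidableEq F]
    (hF : ringChar F ≠ 2) {a b c : F} (ha : a ≠ 0) :
    (univ.filter fun x : F => a * x ^ 2 + b * x + c = 0).card ≤ 2 := by
  have h := card_quadratic_roots hF (b := b) (c := c) ha
  have h2 : quadraticChar F (b ^ 2 - 4 * a * c) ≤ 1 := by
    by_cases h0 : b ^ 2 - 4 * a * c = 0
    · rw [h0]; simp
    · rcases quadraticChar_dichotomy h0 with h | h <;> rw [h] <;> norm_num
  omega

/-- The character sum `Σ_z χ(z) χ(z(1-z)² - d)`, with `χ` the quadratic character. The cubic curve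
`u v (1 - u - v) = c` with `c ≠ 0` has exactly `q - 1 + famSum F (4c)` affine points. -/
def famSum (F : Type*) [Field F] [Fintype F] [DecidableEq F] (d : F) : ℤ :=
  ∑ z : F, quadraticChar F z * quadraticChar F (z * (1 - z) ^ 2 - d)

theorem famSum_zero {F : Type*} [Field F] [Fintype F] [DecidableEq F] :
    famSum F 0 = (Fintype.card F : ℤ) - 2 := by
  have h : ∀ z : F, quadraticChar F z * quadraticChar F (z * (1 - z) ^ 2 - 0)
      = if z ∈ ({0, 1} : Finset F)ᶜ then 1 else 0 := by
    intro z
    by_cases h0 : z = 0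
    · simp [h0]
    by_cases h1 : z = 1
    · simp [h1]
    have h1' : 1 - z ≠ 0 := sub_ne_zero.mpr (Ne.symm h1)
    simp only [sub_zero, map_mul, quadraticChar_sq_one' h1', mul_one, ← sq,
      quadraticChar_sq_one h0]
    simp [h0, h1]
  unfold famSum
  simp_rw [h]
  rw [Finset.sum_ite_mem, univ_inter, Finset.sum_const, card_compl, card_pair zero_ne_one]
  have : 2 ≤ Fintype.card F := Fintype.one_lt_card
  simp
  omega

/-- If `z ≠ z'` have the same value under `z ↦ z(1-z)²`, then `z z' = (z + z' - 1)²`. Such pairs of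
nonzero elements lie on a conic parametrized by the slope `m = (z + z' - 1) / z`, which is neither
`0` nor `1`. -/
theorem card_offdiag_le {F : Type*} [Field F] [Fintype F] [DecidableEq F] :
    (univ.filter fun p : F × F => p.1 ≠ 0 ∧ p.2 ≠ 0 ∧ p.1 ≠ p.2 ∧
      p.1 * (1 - p.1) ^ 2 = p.2 * (1 - p.2) ^ 2).card + 2 ≤ Fintype.card F := by
  have key : ∀ p : F × F, p.1 ≠ p.2 → p.1 * (1 - p.1) ^ 2 = p.2 * (1 - p.2) ^ 2 →
      p.1 * p.2 = (p.1 + p.2 - 1) ^ 2 := by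
    intro p h1 h2
    apply mul_left_cancel₀ (sub_ne_zero.mpr h1)
    linear_combination -h2
  have h : (univ.filter fun p : F × F => p.1 ≠ 0 ∧ p.2 ≠ 0 ∧ p.1 ≠ p.2 ∧
      p.1 * (1 - p.1) ^ 2 = p.2 * (1 - p.2) ^ 2).card ≤ (({0, 1} : Finset F)ᶜ).card := by
    refine Finset.card_le_card_of_injOn (fun p => (p.1 + p.2 - 1) / p.1) ?_ ?_
    · rintro ⟨z, z'⟩ hp
      simp only [coe_filter, mem_univ, true_and, Set.mem_ofPred_eq] at hp
      obtain ⟨h0, h0', h1, h2⟩ := hp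
      have hk := key (z, z') h1 h2
      simp only at hk
      simp only [coe_compl, coe_insert, coe_singleton, Set.mem_compl_iff, Set.mem_insert_iff,
        Set.mem_singleton_iff, not_or]
      constructor
      · intro h
        rcases div_eq_zero_iff.mp h with h | h
        · rw [h] at hk
          simp [h0, h0'] at hk
        · exact h0 h
      · intro h
        rw [div_eq_one_iff_eq h0] at h
        rw [h] at hk
        have : z' = z := by
          apply mul_left_cancel₀ h0; linear_combination hk
        exact h1 this.symm
    · rintro ⟨z, z'⟩ hp ⟨w, w'⟩ hq hpq
      simp only [coe_filter, mem_univ, true_and, Set.mem_ofPred_eq] at hp hq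
      obtain ⟨h0, h0', h1, h2⟩ := hp
      obtain ⟨g0, g0', g1, g2⟩ := hq
      have hk := key (z, z') h1 h2
      have gk := key (w, w') g1 g2
      simp only at hk gk hpq
      set m := (z + z' - 1) / z with hm
      have e1 : z + z' - 1 = m * z := by rw [hm]; field_simp
      have e2 : w + w' - 1 = m * w := by rw [hpq]; field_simp
      rw [e1] at hk
      rw [e2] at gk
      have f1 : z' = m ^ 2 * z := by apply mul_left_cancel₀ h0; linear_combination hk
      have f2 : w' = m ^ 2 * w := by apply mul_left_cancel₀ g0; linear_combination gk
      have g3 : z * (1 + m ^ 2 - m) = 1 := by rw [f1] at e1; linear_combination e1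
      have g4 : w * (1 + m ^ 2 - m) = 1 := by rw [f2] at e2; linear_combination e2
      have hzw : z = w := by
        calc z = z * (w * (1 + m ^ 2 - m)) := by rw [g4, mul_one]
          _ = w * (z * (1 + m ^ 2 - m)) := by ring
          _ = w := by rw [g3, mul_one]
      rw [Prod.mk.injEq]
      exact ⟨hzw, by rw [f1, f2, hzw]⟩
  rw [card_compl, card_pair zero_ne_one] at h
  have : 2 ≤ Fintype.card F := Fintype.one_lt_card
  omega

/-- Second moment of `famSum`. Expanding the square and summing over `d` first leaves the pairs of
nonzero `z, z'` with `z(1-z)² = z'(1-z')²`: at most `q - 1` diagonal and `q - 2` off-diagonal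
ones. -/
theorem sum_famSum_sq {F : Type*} [Field F] [Fintype F] [DecidableEq F]
    (hF : ringChar F ≠ 2) :
    ∑ d : F, famSum F d ^ 2 ≤ (Fintype.card F : ℤ) * (2 * Fintype.card F - 3) := by
  set q : ℤ := (Fintype.card F : ℤ) with hq
  set f : F → F := fun z => z * (1 - z) ^ 2 with hf
  have h1 : ∑ d : F, famSum F d ^ 2 = ∑ z : F, ∑ z' : F,
      quadraticChar F z * quadraticChar F z' *
        ∑ d : F, quadraticChar F ((f z - d) * (f z' - d)) := by
    simp_rw [famSum, sq, Finset.sum_mul_sum]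
    rw [Finset.sum_comm]
    refine Finset.sum_congr rfl fun z _ => ?_
    rw [Finset.sum_comm]
    refine Finset.sum_congr rfl fun z' _ => ?_
    rw [Finset.mul_sum]
    refine Finset.sum_congr rfl fun d _ => ?_
    simp only [map_mul, hf, sq]
    ring
  have h2 : ∀ z z' : F, ∑ d : F, quadraticChar F ((f z - d) * (f z' - d))
      = q * (if f z = f z' then 1 else 0) - 1 := by
    intro z z'
    by_cases h : f z = f z'
    · rw [if_pos h, mul_one, h]
      have : ∀ d : F, quadraticChar F ((f z' - d) * (f z' - d))
          = if d ∈ ({f z'} : Finset F)ᶜ then 1 else 0 := by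
        intro d
        by_cases hd : d = f z'
        · simp [hd]
        · rw [← sq, quadraticChar_sq_one' (sub_ne_zero.mpr (Ne.symm hd))]
          simp [hd]
      simp_rw [this]
      rw [Finset.sum_ite_mem, univ_inter, Finset.sum_const, card_compl, card_singleton]
      have : 1 ≤ Fintype.card F := Fintype.card_pos
      simp [hq, Nat.cast_sub this]
    · rw [if_neg h, sum_quadChar_split hF h]; ring
  have h3 : ∑ z : F, ∑ z' : F, quadraticChar F z * quadraticChar F z' = 0 := by
    rw [← Finset.sum_mul_sum, quadraticChar_sum_zero hF, zero_mul]
  have h4 : ∑ d : F, famSum F d ^ 2 = q * ∑ z : F, ∑ z' : F,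
      quadraticChar F z * quadraticChar F z' * (if f z = f z' then 1 else 0) := by
    rw [h1]
    simp_rw [h2, mul_sub, mul_one]
    simp_rw [Finset.sum_sub_distrib]
    rw [h3, sub_zero, Finset.mul_sum]
    refine Finset.sum_congr rfl fun z _ => ?_
    rw [Finset.mul_sum]
    refine Finset.sum_congr rfl fun z' _ => ?_
    ring
  rw [h4]
  refine mul_le_mul_of_nonneg_left ?_ (by positivity)
  have hle : ∀ x : F, quadraticChar F x ≤ 1 ∧ -1 ≤ quadraticChar F x := by
    intro x
    by_cases h0 : x = 0
    · rw [h0]; simp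
    · rcases quadraticChar_dichotomy h0 with h | h <;> rw [h] <;> norm_num
  have h5 : ∀ p : F × F,
      quadraticChar F p.1 * quadraticChar F p.2 * (if f p.1 = f p.2 then (1 : ℤ) else 0)
      ≤ (if p.1 ≠ 0 ∧ p.2 = p.1 then 1 else 0) +
        (if p.1 ≠ 0 ∧ p.2 ≠ 0 ∧ p.1 ≠ p.2 ∧ f p.1 = f p.2 then 1 else 0) := by
    rintro ⟨z, z'⟩
    simp only
    by_cases hz : z = 0
    · simp [hz]
    by_cases hz' : z' = 0
    · simp only [hz', quadraticChar_zero]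
      simp only [mul_zero, zero_mul]; positivity
    have hmul : quadraticChar F z * quadraticChar F z' ≤ 1 := by
      rw [← map_mul]; exact (hle _).1
    by_cases hzz : z' = z
    · rw [hzz, ← sq, quadraticChar_sq_one hz]
      simp [hz]
    by_cases hff : f z = f z'
    · simp only [hff, if_true, mul_one]
      have : z ≠ z' := Ne.symm hzz
      simp [hz, hz', hzz, this]; exact hmul
    · simp only [hff, if_false, mul_zero]; positivity
  calc ∑ z : F, ∑ z' : F,
      quadraticChar F z * quadraticChar F z' * (if f z = f z' then (1 : ℤ) else 0)
      = ∑ p : F × F,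
        quadraticChar F p.1 * quadraticChar F p.2 * (if f p.1 = f p.2 then (1 : ℤ) else 0) :=
        (Fintype.sum_prod_type' _).symm
    _ ≤ ∑ p : F × F, ((if p.1 ≠ 0 ∧ p.2 = p.1 then (1 : ℤ) else 0) +
        (if p.1 ≠ 0 ∧ p.2 ≠ 0 ∧ p.1 ≠ p.2 ∧ f p.1 = f p.2 then 1 else 0)) :=
        Finset.sum_le_sum fun p _ => h5 p
    _ = ((univ.filter fun p : F × F => p.1 ≠ 0 ∧ p.2 = p.1).card : ℤ) +
        ((univ.filter fun p : F × F => p.1 ≠ 0 ∧ p.2 ≠ 0 ∧ p.1 ≠ p.2 ∧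
          f p.1 = f p.2).card : ℤ) := by
        rw [Finset.sum_add_distrib, Finset.sum_boole, Finset.sum_boole]
    _ ≤ (q - 1) + (q - 2) := by
        have hA : (univ.filter fun p : F × F => p.1 ≠ 0 ∧ p.2 = p.1).card
            ≤ (({0} : Finset F)ᶜ).card := by
          refine Finset.card_le_card_of_injOn (fun p => p.1) ?_ ?_
          · rintro ⟨z, z'⟩ hp
            simp at hp ⊢
            exact hp.1
          · rintro ⟨z, z'⟩ hp ⟨w, w'⟩ hq h
            simp at hp hq h ⊢
            exact ⟨h, by rw [hp.2, hq.2, h]⟩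
        rw [card_compl, card_singleton] at hA
        have hB := card_offdiag_le (F := F)
        have : 1 ≤ Fintype.card F := Fintype.card_pos
        have hA' : ((univ.filter fun p : F × F => p.1 ≠ 0 ∧ p.2 = p.1).card : ℤ) ≤ q - 1 := by
          rw [hq]; omega
        have hB' : ((univ.filter fun p : F × F => p.1 ≠ 0 ∧ p.2 ≠ 0 ∧ p.1 ≠ p.2 ∧
          f p.1 = f p.2).card : ℤ) ≤ q - 2 := by
          rw [hq]
          simp only [hf]
          omega
        exact add_le_add hA' hB'
    _ = 2 * q - 3 := by ring

/-! ### Points on symmetric conics and cubics -/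

/-- A set `P` of pairs `(x, y)`, stable under the rotation `(x, y) ↦ (y, s - x - y)` of the triple
`(x, y, s - x - y)`, contains a pair of distinct elements outside `G` as soon as it is large.
If all three pairs of a rotation orbit failed, the triple would show at least two of the
defects an entry lies in `G` and two entries are equal; summing the number of defects over `P`
bounds its size. -/
theorem exists_pair_of_rotation {F : Type*} [Field F] [DecidableEq F]
    (P : Finset (F × F)) (s : F) (G : Finset F)
    (hrot : ∀ p ∈ P, (p.2, s - p.1 - p.2) ∈ P)
    (hfib : ∀ a, (P.filter fun p => p.1 = a).card ≤ 2)
    (hco : (P.filter fun p => p.1 = p.2).card ≤ 3)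
    (hcard : 6 * G.card + 9 < 2 * P.card) :
    ∃ p ∈ P, p.1 ∉ G ∧ p.2 ∉ G ∧ p.1 ≠ p.2 := by
  by_contra! hcon
  let rot : F × F → F × F := fun p => (p.2, s - p.1 - p.2)
  have hinj : Function.Injective rot := by
    rintro ⟨x, y⟩ ⟨x', y'⟩ h
    simp only [rot, Prod.mk.injEq] at h ⊢
    obtain ⟨h1, h2⟩ := h
    subst h1
    exact ⟨by linear_combination -h2, rfl⟩
  -- `w p` counts the defects of a triple seen at one of its three positions
  let w : F × F → ℕ := fun p => (if p.1 ∈ G then 1 else 0) + (if p.1 = p.2 then 1 else 0)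
  have hsum : ∀ h : F × F → ℕ, ∑ p ∈ P, h (rot p) ≤ ∑ p ∈ P, h p := by
    intro h
    rw [← Finset.sum_image (f := h) (g := rot) (hinj.injOn)]
    apply Finset.sum_le_sum_of_subset
    intro p hp
    obtain ⟨p', hp', rfl⟩ := Finset.mem_image.mp hp
    exact hrot p' hp'
  have hpt : ∀ p ∈ P, 2 ≤ w p + w (rot p) + w (rot (rot p)) := by
    rintro ⟨x, y⟩ hp
    have hp2 := hrot _ hp
    have hp3 := hrot _ hp2
    have c1 := hcon _ hp
    have c2 := hcon _ hp2
    have c3 := hcon _ hp3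
    have e : s - y - (s - x - y) = x := by ring
    simp only [e] at c1 c2 c3
    simp only [w, rot, e]
    generalize s - x - y = t at *
    grind
  have h1 : ∑ p ∈ P, 2 ≤ ∑ p ∈ P, (w p + w (rot p) + w (rot (rot p))) :=
    Finset.sum_le_sum hpt
  rw [Finset.sum_const, Finset.sum_add_distrib, Finset.sum_add_distrib, smul_eq_mul] at h1
  have h2 := hsum w
  have h3 := hsum (fun p => w (rot p))
  have h4 : ∑ p ∈ P, w p ≤ 2 * G.card + 3 := by
    simp only [w]
    rw [Finset.sum_add_distrib, ← Finset.card_filter, ← Finset.card_filter]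
    refine add_le_add ?_ hco
    rw [mul_comm]
    have := Finset.card_eq_sum_card_fiberwise (f := Prod.fst) (s := P.filter fun p => p.1 ∈ G)
      (t := G) (by intro p hp; simp at hp ⊢; exact hp.2)
    rw [this]
    refine (Finset.sum_le_card_nsmul _ _ 2 ?_).trans (by simp)
    intro a ha
    refine (Finset.card_le_card ?_).trans (hfib a)
    intro p hp
    simp at hp ⊢
    exact ⟨hp.1.1, hp.2⟩
  omega

theorem card_pairs {F : Type*} [Fintype F] [DecidableEq F] (R : F → F → Prop)
    [∀ x y, Decidable (R x y)] :
    (univ.filter fun p : F × F => R p.1 p.2).card = ∑ x, (univ.filter fun y => R x y).card := by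
  simp_rw [Finset.card_filter]
  rw [Fintype.sum_prod_type]

theorem card_roots_le_of_natDegree {F : Type*} [Field F] [Fintype F] [DecidableEq F]
    {p : F[X]} (hp : p ≠ 0) {n : ℕ} (hn : p.natDegree ≤ n) :
    (univ.filter fun x : F => p.eval x = 0).card ≤ n := by
  refine le_trans ?_ ((Polynomial.card_roots' p).trans hn)
  refine le_trans (Finset.card_le_card ?_) (Multiset.toFinset_card_le p.roots)
  intro x hx
  simp at hx ⊢
  exact ⟨hp, hx⟩

/-- The symmetric conic `e₂(x, y, ρ - x - y) = κ` is nondegenerate when `ρ² ≠ 3κ`, hence has at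
least `q - 1` points. In characteristic `3` the discriminant in `y` is only linear in `x`, and there
are `q` points. -/
theorem exists_conic_pair {F : Type*} [Field F] [Fintype F] [DecidableEq F]
    (hF : ringChar F ≠ 2) (G : Finset F) (ρ κ : F) (hρ : ρ ^ 2 - 3 * κ ≠ 0)
    (hG : 6 * G.card + 9 < 2 * (Fintype.card F - 1)) :
    ∃ x y : F, x ∉ G ∧ y ∉ G ∧ x ≠ y ∧ x * y + (x + y) * (ρ - x - y) = κ := by
  have h2 := two_ne_zero_of_char hF
  let P : Finset (F × F) := univ.filter fun p => p.1 * p.2 + (p.1 + p.2) * (ρ - p.1 - p.2) = κ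
  have hfibeq : ∀ x : F, (univ.filter fun y : F => x * y + (x + y) * (ρ - x - y) = κ)
      = univ.filter fun y : F => (-1) * y ^ 2 + (ρ - x) * y + (x * ρ - x ^ 2 - κ) = 0 := by
    intro x
    ext y
    simp only [mem_filter, mem_univ, true_and]
    constructor <;> intro h <;> linear_combination h
  have hcard : ((P.card : ℕ) : ℤ) ≥ (Fintype.card F : ℤ) - 1 := by
    simp only [P]
    rw [card_pairs (fun x y : F => x * y + (x + y) * (ρ - x - y) = κ)]
    simp_rw [hfibeq]
    push_cast
    simp_rw [card_quadratic_roots hF (neg_ne_zero.mpr (one_ne_zero (α := F)))]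
    rw [Finset.sum_add_distrib]
    have e : ∀ x : F, (ρ - x) ^ 2 - 4 * (-1) * (x * ρ - x ^ 2 - κ)
      = (-3) * x ^ 2 + (2 * ρ) * x + (ρ ^ 2 - 4 * κ) := by intro x; ring
    simp_rw [e]
    have : -1 ≤ ∑ x : F, quadraticChar F ((-3) * x ^ 2 + (2 * ρ) * x + (ρ ^ 2 - 4 * κ)) := by
      by_cases h3 : (3 : F) = 0
      · have hr : ρ ≠ 0 := by rintro rfl; simp [h3] at hρ
        simp_rw [h3, neg_zero, zero_mul, zero_add]
        rw [sum_quadChar_linear hF (mul_ne_zero h2 hr)]; norm_num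
      · apply sum_quadChar_quadratic hF (neg_ne_zero.mpr h3)
        have : (2 * ρ) ^ 2 - 4 * (-3) * (ρ ^ 2 - 4 * κ) = 2 ^ 4 * (ρ ^ 2 - 3 * κ) := by ring
        rw [this]
        exact mul_ne_zero (pow_ne_zero _ h2) hρ
    rw [Finset.sum_const, Finset.card_univ, nsmul_eq_mul, mul_one]
    linarith
  refine Exists.elim (exists_pair_of_rotation P ρ G ?_ ?_ ?_ ?_) ?_
  rotate_left 4
  · rintro p ⟨hp, h⟩
    refine ⟨p.1, p.2, h.1, h.2.1, h.2.2, ?_⟩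
    simpa [P] using hp
  · rintro ⟨x, y⟩ hp
    simp only [P, mem_filter, mem_univ, true_and] at hp ⊢
    linear_combination hp
  · intro a
    refine le_trans (Finset.card_le_card_of_injOn Prod.snd ?_ ?_)
      (card_quadratic_roots_le hF (neg_ne_zero.mpr (one_ne_zero (α := F)))
        (b := ρ - a) (c := a * ρ - a ^ 2 - κ))
    · rintro ⟨x, y⟩ hp
      simp [P] at hp ⊢
      obtain ⟨hp, rfl⟩ := hp
      linear_combination hp
    · rintro ⟨x, y⟩ hp ⟨x', y'⟩ hp' h
      simp at hp hp' h ⊢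
      exact ⟨hp.2.trans hp'.2.symm, h⟩
  · have hp0 : (C (-3) * X ^ 2 + C (2 * ρ) * X + C (-κ) : F[X]) ≠ 0 := by
      intro h
      have c2 := congrArg (fun p => p.coeff 2) h
      have c1 := congrArg (fun p => p.coeff 1) h
      simp [coeff_X, coeff_C] at c1 c2
      have : ρ = 0 := c1.resolve_left h2
      simp [this, c2] at hρ
    refine le_trans (Finset.card_le_card_of_injOn Prod.fst ?_ ?_)
      (card_roots_le_of_natDegree hp0 (n := 3) ?_)
    · rintro ⟨x, y⟩ hp
      simp [P] at hp ⊢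
      obtain ⟨hp, rfl⟩ := hp
      linear_combination hp
    · rintro ⟨x, y⟩ hp ⟨x', y'⟩ hp' h
      simp at hp hp' h ⊢
      exact ⟨h, by rw [← hp.2, ← hp'.2, h]⟩
    · compute_degree!
  · have : 1 ≤ Fintype.card F := Fintype.card_pos
    omega

/-- The cubic `u v (1 - u - v) = c` is quadratic in `v`, so its points are counted by `famSum`. -/
theorem exists_cubic_pair {F : Type*} [Field F] [Fintype F] [DecidableEq F]
    (hF : ringChar F ≠ 2) (G : Finset F) (c : F) (hc : c ≠ 0)
    (hG : 6 * (G.card : ℤ) + 9 < 2 * ((Fintype.card F : ℤ) - 1 + famSum F (4 * c))) :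
    ∃ u v : F, u ∉ G ∧ v ∉ G ∧ u ≠ v ∧ u * v * (1 - u - v) = c := by
  have h2 := two_ne_zero_of_char hF
  let P : Finset (F × F) := univ.filter fun p => p.1 * p.2 * (1 - p.1 - p.2) = c
  have hfibeq : ∀ x : F, (univ.filter fun y : F => x * y * (1 - x - y) = c)
      = univ.filter fun y : F => (-x) * y ^ 2 + (x * (1 - x)) * y + (-c) = 0 := by
    intro x
    ext y
    simp only [mem_filter, mem_univ, true_and]
    constructor <;> intro h <;> linear_combination h
  have hcard : ((P.card : ℕ) : ℤ) = (Fintype.card F : ℤ) - 1 + famSum F (4 * c) := by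
    simp only [P]
    rw [card_pairs (fun x y : F => x * y * (1 - x - y) = c)]
    have e : ∀ x : F, ((univ.filter fun y : F => x * y * (1 - x - y) = c).card : ℤ)
        = (if x ∈ ({0} : Finset F)ᶜ then 1 else 0) +
          quadraticChar F x * quadraticChar F (x * (1 - x) ^ 2 - 4 * c) := by
      intro x
      by_cases hx : x = 0
      · simp [hx, hc.symm]
      rw [hfibeq, card_quadratic_roots hF (neg_ne_zero.mpr hx), ← map_mul]
      have : (x * (1 - x)) ^ 2 - 4 * (-x) * (-c) = x * (x * (1 - x) ^ 2 - 4 * c) := by ring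
      rw [this]
      simp [hx, add_comm]
    push_cast
    simp_rw [e]
    rw [Finset.sum_add_distrib, Finset.sum_ite_mem, univ_inter, Finset.sum_const, card_compl,
      card_singleton, famSum]
    have : 1 ≤ Fintype.card F := Fintype.card_pos
    simp [Nat.cast_sub this]
  refine Exists.elim (exists_pair_of_rotation P 1 G ?_ ?_ ?_ ?_) ?_
  rotate_left 4
  · rintro p ⟨hp, h⟩
    refine ⟨p.1, p.2, h.1, h.2.1, h.2.2, ?_⟩
    simpa [P] using hp
  · rintro ⟨x, y⟩ hp
    simp only [P, mem_filter, mem_univ, true_and] at hp ⊢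
    linear_combination hp
  · intro a
    by_cases ha : a = 0
    · have : (P.filter fun p => p.1 = a) = ∅ := by
        ext ⟨x, y⟩
        simp [P, ha]
        intro h hx
        exact hc (by rw [← h, hx]; ring)
      simp [this]
    refine le_trans (Finset.card_le_card_of_injOn Prod.snd ?_ ?_)
      (card_quadratic_roots_le hF (neg_ne_zero.mpr ha)
        (b := a * (1 - a)) (c := -c))
    · rintro ⟨x, y⟩ hp
      simp [P] at hp ⊢
      obtain ⟨hp, rfl⟩ := hp
      linear_combination hp
    · rintro ⟨x, y⟩ hp ⟨x', y'⟩ hp' h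
      simp at hp hp' h ⊢
      exact ⟨hp.2.trans hp'.2.symm, h⟩
  · have hp0 : (C (-2) * X ^ 3 + X ^ 2 + C (-c) : F[X]) ≠ 0 := by
      intro h
      have c0 := congrArg (fun p => p.coeff 0) h
      simp at c0
      exact hc c0
    refine le_trans (Finset.card_le_card_of_injOn Prod.fst ?_ ?_)
      (card_roots_le_of_natDegree hp0 (n := 3) ?_)
    · rintro ⟨x, y⟩ hp
      simp [P] at hp ⊢
      obtain ⟨hp, rfl⟩ := hp
      linear_combination hp
    · rintro ⟨x, y⟩ hp ⟨x', y'⟩ hp' h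
      simp at hp hp' h ⊢
      exact ⟨h, by rw [← hp.2, ← hp'.2, h]⟩
    · compute_degree!
  · omega

/-! ### The last four roots -/

theorem exists_notMem_eval_ne {F : Type*} [Field F] [Fintype F] [DecidableEq F]
    {p : F[X]} (hp : p ≠ 0) {n : ℕ} (hn : p.natDegree ≤ n) (E : Finset F)
    (hE : E.card + n < Fintype.card F) : ∃ z, z ∉ E ∧ p.eval z ≠ 0 := by
  by_contra! h
  have h1 : (univ : Finset F) ⊆ E ∪ univ.filter fun x : F => p.eval x = 0 := by
    intro x _
    by_cases hx : x ∈ E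
    · simp [hx]
    · simp [h x hx]
  have h2 := (Finset.card_le_card h1).trans (Finset.card_union_le _ _)
  have h3 := card_roots_le_of_natDegree hp hn
  rw [Finset.card_univ] at h2
  omega

/-- There are few bad values `d ≠ 0`, namely those for which the cubic with `4c = d` has too few
points: `famSum` is very negative at each of them, the value `famSum F 0 = q - 2` already uses up
about half of the second moment, and what remains bounds their number. The bad values and the
excluded set of size `N` together leave room for one more element of the field. -/
theorem card_bad_bound {F : Type*} [Field F] [Fintype F] [DecidableEq F]
    (hF : ringChar F ≠ 2) (hs : 5 ≤ √(Fintype.card F : ℝ)) (N : ℕ)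
    (hN : 4 * ((N : ℝ) + 4) ≤ Fintype.card F - 3 * √(Fintype.card F : ℝ) + 7) :
    N + (3 + 6 * (univ.filter fun d : F => d ≠ 0 ∧
      2 * ((Fintype.card F : ℤ) - 1 + famSum F d) ≤ 6 * ((N : ℤ) + 1) + 9).card)
      < Fintype.card F := by
  set D := univ.filter fun d : F => d ≠ 0 ∧
      2 * ((Fintype.card F : ℤ) - 1 + famSum F d) ≤ 6 * ((N : ℤ) + 1) + 9 with hD
  set s : ℝ := √(Fintype.card F : ℝ) with hsdef
  have hsq : (Fintype.card F : ℝ) = s ^ 2 := (Real.sq_sqrt (by positivity)).symm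
  have hall := sum_famSum_sq hF
  have hsub : famSum F 0 ^ 2 + ∑ d ∈ D, famSum F d ^ 2 ≤ ∑ d : F, famSum F d ^ 2 := by
    have h0 : (0 : F) ∉ D := by simp [hD]
    rw [← Finset.sum_insert (f := fun d => famSum F d ^ 2) h0]
    exact Finset.sum_le_sum_of_subset_of_nonneg (Finset.subset_univ _)
      fun _ _ _ => sq_nonneg _
  rw [famSum_zero] at hsub
  have hsubR : (((Fintype.card F : ℝ) - 2) ^ 2 + ∑ d ∈ D, (famSum F d : ℝ) ^ 2)
      ≤ (Fintype.card F : ℝ) * (2 * Fintype.card F - 3) := by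
    exact_mod_cast hsub.trans hall
  have hd : ∀ d ∈ D, ((s ^ 2 + 9 * s - 7) / 4) ^ 2 ≤ (famSum F d : ℝ) ^ 2 := by
    intro d hd
    simp only [hD, mem_filter, mem_univ, true_and] at hd
    have h1 : 2 * ((Fintype.card F : ℝ) - 1 + famSum F d) ≤ 6 * ((N : ℝ) + 1) + 9 := by
      exact_mod_cast hd.2
    rw [hsq] at h1 hN
    rw [← neg_sq (famSum F d : ℝ)]
    exact pow_le_pow_left₀ (by nlinarith) (by linarith) 2
  have hsum := Finset.card_nsmul_le_sum D _ _ hd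
  rw [nsmul_eq_mul] at hsum
  rw [hsq] at hsubR hN
  generalize (D.card) = β at *
  by_contra! hcon
  have hcon' : (s ^ 2 : ℝ) ≤ N + (3 + 6 * β) := by rw [← hsq]; exact_mod_cast hcon
  have h8 : s ^ 2 + s - 1 ≤ 8 * β := by linarith
  have h9 : (s ^ 2 + s - 1) * ((s ^ 2 + 9 * s - 7) / 4) ^ 2
      ≤ 8 * β * ((s ^ 2 + 9 * s - 7) / 4) ^ 2 := mul_le_mul_of_nonneg_right h8 (sq_nonneg _)
  have h10 : (s ^ 2 + s - 1) * ((s ^ 2 + 9 * s - 7) / 4) ^ 2 ≤ 8 * (s ^ 4 + s ^ 2 - 4) := by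
    nlinarith
  -- after the shift `s = 5 + t` the difference of the two sides has positive coefficients in `t`
  obtain ⟨t, hst⟩ : ∃ t, s = 5 + t := ⟨s - 5, by ring⟩
  have ht : 0 ≤ t := by linarith
  rw [hst] at h10
  have : (0 : ℝ) < ((5 + t) ^ 2 + (5 + t) - 1) * (((5 + t) ^ 2 + 9 * (5 + t) - 7) / 4) ^ 2
      - 8 * ((5 + t) ^ 4 + (5 + t) ^ 2 - 4) := by
    ring_nf
    positivity
  linarith

/-- For `c = 0` the line `u + v = 1` is a component of the cubic. -/
theorem exists_pair_cubic_or_zero {F : Type*} [Field F] [Fintype F] [DecidableEq F]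
    (hF : ringChar F ≠ 2) (G : Finset F) (c : F) (hG0 : 2 * G.card + 1 < Fintype.card F)
    (hG : c ≠ 0 →
      6 * (G.card : ℤ) + 9 < 2 * ((Fintype.card F : ℤ) - 1 + famSum F (4 * c))) :
    ∃ u v : F, u ∉ G ∧ v ∉ G ∧ u ≠ v ∧ u * v * (1 - u - v) = c := by
  by_cases hc : c = 0
  · have h2 := two_ne_zero_of_char hF
    have hcard : ((G ∪ G.image fun x => 1 - x) ∪ {(1 / 2 : F)}).card < Fintype.card F := by
      refine lt_of_le_of_lt ((Finset.card_union_le _ _).trans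
        (add_le_add (Finset.card_union_le _ _) le_rfl)) ?_
      have := Finset.card_image_le (s := G) (f := fun x : F => 1 - x)
      rw [card_singleton]
      omega
    obtain ⟨v, hv⟩ : ∃ v, v ∉ (G ∪ G.image fun x => 1 - x) ∪ {(1 / 2 : F)} := by
      by_contra! h
      rw [Finset.eq_univ_iff_forall.mpr h, Finset.card_univ] at hcard
      exact lt_irrefl _ hcard
    simp only [mem_union, mem_image, mem_singleton, not_or, not_exists, not_and] at hv
    refine ⟨v, 1 - v, hv.1.1, fun h => hv.1.2 (1 - v) h (by ring), fun h => hv.2 ?_, ?_⟩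
    · field_simp; linear_combination h
    · rw [hc]; ring
  · exact exists_cubic_pair hF G c hc (hG hc)

/-- The main case of `core_exists`. For fixed `z` put `A = n₁ - n₀z`, `B = n₂ - n₁z` and
`a = A(σ - z) - 3B`. The substitution `x = (B + a u) / A`, `y = (B + a v) / A` turns the equation
into `u v (1 - u - v) = c` with `c = g / a³` for a polynomial `g` in `z`. Since
`deg g < 3 deg a`, the polynomial `4g - d a³` is nonzero for every `d ≠ 0`, so `z` can be chosen
such that `A` and `a` do not vanish and `4c` is not a bad value of `famSum`. -/
theorem core_cubic {F : Type*} [Field F] [Fintype F] [DecidableEq F]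
    (hF : ringChar F ≠ 2) (hs : 5 ≤ √(Fintype.card F : ℝ)) (E : Finset F)
    (hE : 4 * ((E.card : ℝ) + 4) ≤ Fintype.card F - 3 * √(Fintype.card F : ℝ) + 7)
    (n0 n1 n2 n4 σ : F) (hn : n0 ≠ 0 ∨ n1 ≠ 0) :
    ∃ z x y : F, (n1 - n0 * z) * (x * y * (σ - z - x - y)) =
        (n2 - n1 * z) * (x * y + (x + y) * (σ - z - x - y)) + (n4 + n2 * z * (σ - z)) ∧
      z ∉ E ∧ x ∉ E ∧ y ∉ E ∧ x ≠ y ∧ x ≠ z ∧ y ≠ z := by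
  have h2 := two_ne_zero_of_char hF
  set A : F[X] := C n1 - C n0 * X with hA
  set B : F[X] := C n2 - C n1 * X with hB
  set S : F[X] := C σ - X with hS
  set K : F[X] := C n4 + C n2 * X * (C σ - X) with hK
  set a : F[X] := A * S - 3 * B with ha
  set g : F[X] := A ^ 2 * K + A * B ^ 2 * S - B ^ 3 with hg
  have dA : A.natDegree ≤ 1 := by rw [hA]; compute_degree!
  have dB : B.natDegree ≤ 1 := by rw [hB]; compute_degree!
  have dS : S.natDegree ≤ 1 := by rw [hS]; compute_degree!
  have dK : K.natDegree ≤ 2 := by rw [hK]; compute_degree!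
  have da : a.natDegree ≤ 2 := by rw [ha]; compute_degree; omega
  have dg : g.natDegree ≤ 4 := by rw [hg]; compute_degree; omega
  have hA0 : A ≠ 0 := by
    intro h
    have c0 := congrArg (fun p => p.coeff 0) h
    have c1 := congrArg (fun p => p.coeff 1) h
    simp [hA, coeff_C] at c0 c1
    tauto
  -- the degree of `a` exceeds a third of the degree of `g`
  have hag : g.natDegree < 3 * a.natDegree := by
    by_cases h0 : n0 = 0
    · have h1 : n1 ≠ 0 := by tauto
      have e1 : a = C (2 * n1) * X + C (n1 * σ - 3 * n2) := by
        simp only [ha, hA, hB, hS, h0, map_sub, map_mul, map_ofNat, C_0]; ring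
      have e2 : g = C (n1 ^ 2) * (C n4 + C n2 * X * (C σ - X))
          + B ^ 2 * C (n1 * σ - n2) := by
        simp only [hg, hK, hA, hB, hS, h0, map_sub, map_mul, map_pow, C_0]; ring
      have e3 : a.natDegree = 1 := by
        rw [e1]; exact natDegree_linear (mul_ne_zero h2 h1)
      have e4 : g.natDegree ≤ 2 := by rw [e2]; compute_degree!
      omega
    · have e1 : a = C n0 * X ^ 2 + C (2 * n1 - n0 * σ) * X + C (n1 * σ - 3 * n2) := by
        simp only [ha, hA, hB, hS, map_sub, map_mul, map_ofNat]; ring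
      have e3 : a.natDegree = 2 := by rw [e1]; exact natDegree_quadratic h0
      omega
  have ha0 : a ≠ 0 := by rintro h; simp [h] at hag
  set D := univ.filter fun d : F => d ≠ 0 ∧
      2 * ((Fintype.card F : ℤ) - 1 + famSum F d) ≤ 6 * ((E.card : ℤ) + 1) + 9 with hD
  have hfac : ∀ d ∈ D, 4 * g - C d * a ^ 3 ≠ 0 := by
    intro d hd h
    have hd0 : d ≠ 0 := by simp [hD] at hd; exact hd.1
    have e : C d * a ^ 3 = 4 * g := by linear_combination -h
    have e1 := congrArg natDegree e
    rw [natDegree_C_mul hd0, natDegree_pow] at e1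
    have e2 : (4 * g).natDegree ≤ g.natDegree := by
      have : (4 * g) = C 4 * g := by rw [show (C 4 : F[X]) = 4 from map_ofNat C 4]
      rw [this]; exact natDegree_C_mul_le _ _
    omega
  have hdeg : (A * a * ∏ d ∈ D, (4 * g - C d * a ^ 3)).natDegree ≤ 3 + 6 * D.card := by
    refine natDegree_mul_le.trans (add_le_add (natDegree_mul_le.trans ?_) ?_)
    · omega
    · refine (natDegree_prod_le _ _).trans ?_
      refine (Finset.sum_le_card_nsmul _ _ 6 fun d _ => ?_).trans (by simp [mul_comm])
      compute_degree
      omega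
  obtain ⟨z, hzE, hz⟩ := exists_notMem_eval_ne
    (mul_ne_zero (mul_ne_zero hA0 ha0) (Finset.prod_ne_zero_iff.mpr hfac)) hdeg E
    (card_bad_bound hF hs E.card hE)
  rw [eval_mul, eval_mul, eval_prod] at hz
  obtain ⟨hz1, hz3⟩ := mul_ne_zero_iff.mp hz
  obtain ⟨hz1, hz2⟩ := mul_ne_zero_iff.mp hz1
  rw [Finset.prod_ne_zero_iff] at hz3
  have vA : A.eval z = n1 - n0 * z := by simp [hA]
  have vB : B.eval z = n2 - n1 * z := by simp [hB]
  have vK : K.eval z = n4 + n2 * z * (σ - z) := by simp [hK]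
  have va : a.eval z = A.eval z * (σ - z) - 3 * B.eval z := by simp [ha, hS]
  have vg : g.eval z = A.eval z ^ 2 * K.eval z + A.eval z * B.eval z ^ 2 * (σ - z)
      - B.eval z ^ 3 := by simp [hg, hS]
  suffices hgoal : ∃ x y : F, A.eval z * (x * y * (σ - z - x - y)) =
      B.eval z * (x * y + (x + y) * (σ - z - x - y)) + K.eval z ∧
      x ∉ E ∧ y ∉ E ∧ x ≠ y ∧ x ≠ z ∧ y ≠ z by
    obtain ⟨x, y, h, hx, hy, h'⟩ := hgoal
    rw [vA, vB, vK] at h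
    exact ⟨z, x, y, h, hzE, hx, hy, h'⟩
  have hz3' : ∀ d ∈ D, 4 * g.eval z ≠ d * a.eval z ^ 3 := by
    intro d hd h
    apply hz3 d hd
    simp [h]
  clear hz3 hz
  generalize A.eval z = A' at *
  generalize B.eval z = B' at *
  generalize K.eval z = K' at *
  generalize a.eval z = a' at *
  generalize g.eval z = g' at *
  set c := g' / a' ^ 3 with hc
  have hca : c * a' ^ 3 = g' := by rw [hc]; field_simp
  have hcardG : ((insert z E).image fun e => (e * A' - B') / a').card ≤ E.card + 1 :=
    Finset.card_image_le.trans (Finset.card_insert_le _ _)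
  obtain ⟨u, v, hu, hv, huv, hc3⟩ := exists_pair_cubic_or_zero hF
    ((insert z E).image fun e => (e * A' - B') / a') c (by
      have h3 : (2 * ((E.card : ℝ) + 1) + 1 : ℝ) < Fintype.card F := by
        linarith [(Nat.cast_nonneg E.card : (0 : ℝ) ≤ E.card)]
      have h3' : 2 * (E.card + 1) + 1 < Fintype.card F := by exact_mod_cast h3
      omega) (by
      intro hc0
      by_contra! hcon
      have h4 : (4 : F) * c ≠ 0 := by
        have : (4 : F) = 2 * 2 := by norm_num
        rw [this]
        exact mul_ne_zero (mul_ne_zero h2 h2) hc0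
      refine hz3' (4 * c) ?_ (by rw [← hca]; ring)
      simp only [hD, mem_filter, mem_univ, true_and]
      refine ⟨h4, hcon.trans ?_⟩
      have : (((insert z E).image fun e => (e * A' - B') / a').card : ℤ) ≤ E.card + 1 := by
        exact_mod_cast hcardG
      linarith)
  have hmem : ∀ u : F, u ∉ ((insert z E).image fun e => (e * A' - B') / a') →
      (B' + a' * u) / A' ∉ insert z E := by
    intro u hu h
    apply hu
    refine Finset.mem_image.mpr ⟨_, h, ?_⟩
    field_simp
    ring
  have hx := hmem u hu
  have hy := hmem v hv
  simp only [mem_insert, not_or] at hx hy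
  refine ⟨(B' + a' * u) / A', (B' + a' * v) / A', ?_, hx.2, hy.2, ?_, hx.1, hy.1⟩
  · have e : σ - z - (B' + a' * u) / A' - (B' + a' * v) / A' = (B' + a' * (1 - u - v)) / A' := by
      field_simp
      linear_combination -va
    rw [e]
    field_simp
    rw [vg, ← hc3] at hca
    linear_combination hca - B' ^ 2 * va
  · intro h
    field_simp at h
    apply huv
    apply mul_left_cancel₀ hz2
    linear_combination h

/-- The equation says that a linear functional with values `n₀, n₁, n₂` on `1, X, X²` and
`n₄` on `X⁴ - σ X³` kills `(X - z)(X - x)(X - y)(X - t)`, where `t = σ - z - x - y`. It has a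
solution with `x, y, z` distinct and outside the small set `E`. If only `n₂` is nonzero, fixing `z`
leaves a conic; otherwise it leaves a cubic. -/
theorem core_exists {F : Type*} [Field F] [Fintype F] [DecidableEq F]
    (hF : ringChar F ≠ 2) (hs : 5 ≤ √(Fintype.card F : ℝ)) (E : Finset F)
    (hE : 4 * ((E.card : ℝ) + 4) ≤ Fintype.card F - 3 * √(Fintype.card F : ℝ) + 7)
    (n0 n1 n2 n4 σ : F) (hn : n0 ≠ 0 ∨ n1 ≠ 0 ∨ n2 ≠ 0) :
    ∃ z x y : F, (n1 - n0 * z) * (x * y * (σ - z - x - y)) =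
        (n2 - n1 * z) * (x * y + (x + y) * (σ - z - x - y)) + (n4 + n2 * z * (σ - z)) ∧
      z ∉ E ∧ x ∉ E ∧ y ∉ E ∧ x ≠ y ∧ x ≠ z ∧ y ≠ z := by
  by_cases h01 : n0 ≠ 0 ∨ n1 ≠ 0
  · exact core_cubic hF hs E hE n0 n1 n2 n4 σ h01
  push Not at h01
  obtain ⟨rfl, rfl⟩ := h01
  have hn2 : n2 ≠ 0 := by tauto
  have h2 := two_ne_zero_of_char hF
  have hq : 6 * (E.card + 1) + 9 + 2 < 2 * Fintype.card F ∧ E.card + 2 < Fintype.card F := by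
    have h3 : (6 * ((E.card : ℝ) + 1) + 9 + 2 : ℝ) < 2 * Fintype.card F := by
      linarith [(Nat.cast_nonneg E.card : (0 : ℝ) ≤ E.card)]
    have h4 : ((E.card : ℝ) + 2 : ℝ) < Fintype.card F := by
      linarith [(Nat.cast_nonneg E.card : (0 : ℝ) ≤ E.card)]
    exact ⟨by exact_mod_cast h3, by exact_mod_cast h4⟩
  -- `n2` times the quantity `ρ ^ 2 - 3 * κ` of the conic obtained by fixing `z`, as a polynomial
  -- in `z`
  have e1 : C n2 * (C σ - X) ^ 2 + 3 * (C n4 + C n2 * X * (C σ - X))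
      = C (-2 * n2) * X ^ 2 + C (n2 * σ) * X + C (n2 * σ ^ 2 + 3 * n4) := by
    simp only [map_mul, map_add, map_neg, map_pow, map_ofNat]; ring
  have hne : C (-2 * n2) * X ^ 2 + C (n2 * σ) * X + C (n2 * σ ^ 2 + 3 * n4) ≠ 0 := by
    intro h
    have := natDegree_quadratic (b := n2 * σ) (c := n2 * σ ^ 2 + 3 * n4)
      (mul_ne_zero (neg_ne_zero.mpr h2) hn2)
    rw [h] at this
    simp at this
  obtain ⟨z, hzE, hz⟩ := exists_notMem_eval_ne hne natDegree_quadratic_le E hq.2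
  rw [← e1] at hz
  simp at hz
  obtain ⟨x, y, hx, hy, hxy, h⟩ := exists_conic_pair hF (insert z E) (σ - z)
    (-(n4 + n2 * z * (σ - z)) / n2) (by
      intro h
      apply hz
      field_simp at h
      linear_combination h) (by
      have := Finset.card_insert_le z E
      omega)
  simp only [mem_insert, not_or] at hx hy
  refine ⟨z, x, y, ?_, hzE, hx.2, hy.2, hxy, hx.1, hy.1⟩
  rw [h]
  field_simp
  ring

/-! ### Linear functionals and split polynomials -/

/-- For a functional that does not vanish in degree at most `m + 2` there are `m` distinct elements
`E`, avoiding `T`, such that its twist by `∏_{a ∈ E} (X - a)` does not vanish in degree at most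
`2`. They are chosen one at a time: among two candidates at least one keeps the functional
nonzero, as `(X - a) r - (X - b) r = (b - a) r`. -/
theorem exists_twist_ne_zero {F : Type*} [Field F] [Fintype F] [DecidableEq F]
    (m : ℕ) : ∀ (L : F[X] →ₗ[F] F) (T : Finset F),
      (∃ p : F[X], p.natDegree ≤ m + 2 ∧ L p ≠ 0) → T.card + m + 1 ≤ Fintype.card F →
      ∃ E : Finset F, Disjoint E T ∧ E.card = m ∧
        ∃ p : F[X], p.natDegree ≤ 2 ∧ L ((∏ a ∈ E, (X - C a)) * p) ≠ 0 := by
  induction m with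
  | zero =>
    rintro L T ⟨p, hp, hL⟩ -
    exact ⟨∅, by simp, by simp, p, by simpa using hp, by simpa using hL⟩
  | succ m ih =>
    rintro L T ⟨p, hp, hL⟩ hT
    have h1 : 1 < (Tᶜ).card := by rw [card_compl]; omega
    obtain ⟨a, ha, b, hb, hab⟩ := Finset.one_lt_card.mp h1
    rw [mem_compl] at ha hb
    have hstep : ∀ a, a ∉ T →
        (∃ r : F[X], r.natDegree ≤ m + 2 ∧ L ((X - C a) * r) ≠ 0) →
        ∃ E : Finset F, Disjoint E T ∧ E.card = m + 1 ∧
        ∃ p : F[X], p.natDegree ≤ 2 ∧ L ((∏ a ∈ E, (X - C a)) * p) ≠ 0 := by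
      rintro a ha ⟨r, hr, hr'⟩
      obtain ⟨E, hE1, hE2, s, hs, hs'⟩ := ih (L ∘ₗ LinearMap.mulLeft F (X - C a)) (insert a T)
        ⟨r, hr, by simpa using hr'⟩ (by rw [card_insert_of_notMem ha]; omega)
      rw [disjoint_insert_right] at hE1
      refine ⟨insert a E, ?_, ?_, s, hs, ?_⟩
      · rw [disjoint_insert_left]; exact ⟨ha, hE1.2⟩
      · rw [card_insert_of_notMem hE1.1, hE2]
      · rw [prod_insert hE1.1, mul_assoc]
        simpa using hs'
    by_contra hcon
    have hA : ∀ r : F[X], r.natDegree ≤ m + 2 → L ((X - C a) * r) = 0 := by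
      intro r hr
      by_contra h
      exact hcon (hstep a ha ⟨r, hr, h⟩)
    have hB : ∀ r : F[X], r.natDegree ≤ m + 2 → L ((X - C b) * r) = 0 := by
      intro r hr
      by_contra h
      exact hcon (hstep b hb ⟨r, hr, h⟩)
    have h0 : ∀ r : F[X], r.natDegree ≤ m + 2 → L r = 0 := by
      intro r hr
      have e : (X - C a) * r - (X - C b) * r = (b - a) • r := by
        rw [smul_eq_C_mul, map_sub]; ring
      have := congrArg L e
      rw [map_sub, hA r hr, hB r hr, map_smul, sub_zero, smul_eq_mul] at this
      exact (mul_eq_zero.mp this.symm).resolve_left (sub_ne_zero.mpr hab.symm)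
    apply hL
    rw [← modByMonic_add_div p (X - C a), map_add, modByMonic_X_sub_C_eq_C_eval,
      h0 (C _) (by simp), zero_add]
    apply hA
    rw [natDegree_divByMonic _ (monic_X_sub_C a), natDegree_X_sub_C]
    omega

/-- Choose `m` of the roots so that the functional stays nonzero on quadratics, then use the last
four roots `z, x, y, b`, three of which must be new, to kill the product and to prescribe the sum
of all roots. -/
theorem exists_split_annihilated {F : Type*} [Field F] [Fintype F] [DecidableEq F]
    (hF : ringChar F ≠ 2) (hs : 5 ≤ √(Fintype.card F : ℝ)) (m : ℕ)
    (hm : 4 * ((m : ℝ) + 4) ≤ Fintype.card F - 3 * √(Fintype.card F : ℝ) + 7)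
    (L : F[X] →ₗ[F] F) (hL : ∃ p : F[X], p.natDegree ≤ m + 2 ∧ L p ≠ 0) (τ : F) :
    ∃ (W : Finset F) (b : F), W.card = m + 3 ∧ ∑ a ∈ W, a + b = τ ∧
      L ((∏ a ∈ W, (X - C a)) * (X - C b)) = 0 := by
  obtain ⟨E, -, hEm, p, hp, hLp⟩ := exists_twist_ne_zero m L ∅ hL (by
    have : ((0 : ℝ) + m + 1) ≤ Fintype.card F := by
      linarith [(Nat.cast_nonneg m : (0 : ℝ) ≤ m)]
    rw [card_empty]
    exact_mod_cast this)
  set w : F[X] := ∏ a ∈ E, (X - C a) with hw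
  set σ := τ - ∑ a ∈ E, a with hσ
  have hn : L (w * X ^ 0) ≠ 0 ∨ L (w * X ^ 1) ≠ 0 ∨ L (w * X ^ 2) ≠ 0 := by
    by_contra! h
    apply hLp
    have e : w * p = p.coeff 0 • (w * X ^ 0) + p.coeff 1 • (w * X ^ 1)
        + p.coeff 2 • (w * X ^ 2) := by
      conv_lhs => rw [p.as_sum_range_C_mul_X_pow' (n := 3) (by omega)]
      simp only [Finset.sum_range_succ, Finset.sum_range_zero, smul_eq_C_mul]
      ring
    rw [e]
    simp only [map_add, map_smul, h.1, h.2.1, h.2.2, smul_zero, add_zero]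
  rw [← hEm] at hm
  obtain ⟨z, x, y, h, hz, hx, hy, hxy, hxz, hyz⟩ := core_exists hF hs E hm
    _ _ _ (L (w * (X ^ 4 - C σ * X ^ 3))) σ hn
  refine ⟨insert z (insert x (insert y E)), σ - z - x - y, ?_, ?_, ?_⟩
  · rw [card_insert_of_notMem, card_insert_of_notMem, card_insert_of_notMem, hEm] <;>
      simp [*, hxz.symm, hyz.symm]
  · rw [sum_insert, sum_insert, sum_insert]
    · rw [hσ]; ring
    all_goals simp [*, hxz.symm, hyz.symm]
  · rw [prod_insert, prod_insert, prod_insert, ← hw]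
    · have e : (X - C z) * ((X - C x) * ((X - C y) * w)) * (X - C (σ - z - x - y))
          = w * (X ^ 4 - C σ * X ^ 3)
            + (x * y + (x + y) * (σ - z - x - y) + z * (σ - z)) • (w * X ^ 2)
            - (x * y * (σ - z - x - y)
              + z * (x * y + (x + y) * (σ - z - x - y))) • (w * X ^ 1)
            + (z * (x * y * (σ - z - x - y))) • (w * X ^ 0) := by
        simp only [smul_eq_C_mul, map_sub, map_add, map_mul]
        ring
      rw [e]
      simp only [map_add, map_sub, map_smul, smul_eq_mul]
      linear_combination -h
    all_goals simp [*, hxz.symm, hyz.symm]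

/-- For degree at most `q`, only the monomial `X^(q-1)` has a nonzero sum of values. -/
theorem sum_eval_eq {F : Type*} [Field F] [Fintype F]
    (hq : 2 < Fintype.card F) (p : F[X]) (hp : p.natDegree ≤ Fintype.card F) :
    ∑ a : F, p.eval a = - p.coeff (Fintype.card F - 1) := by
  classical
  have hpow : ∀ i, i ≤ Fintype.card F →
      ∑ a : F, a ^ i = if i = Fintype.card F - 1 then -1 else 0 := by
    intro i hi
    split_ifs with h
    · have := FiniteField.sum_pow_units F i
      rw [if_pos (by rw [h])] at this
      rw [← this]
      have h0 : i ≠ 0 := by omega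
      rw [← Finset.sum_subset (Finset.subset_univ ({0}ᶜ : Finset F))]
      · symm
        refine Finset.sum_bij (fun (u : Fˣ) _ => (u : F)) ?_ ?_ ?_ ?_
        · intro u _; simp
        · intro u _ v _ h; exact Units.ext h
        · intro b hb
          exact ⟨Units.mk0 b (by simpa using hb), by simp, rfl⟩
        · intro u _; rfl
      · intro x _ hx
        have : x = 0 := by simpa using hx
        rw [this, zero_pow h0]
    · rcases Nat.lt_or_ge i (Fintype.card F - 1) with h1 | h1
      · exact FiniteField.sum_pow_lt_card_sub_one F i h1
      · have : i = Fintype.card F := by omega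
        rw [this]
        simp_rw [FiniteField.pow_card]
        have := FiniteField.sum_pow_lt_card_sub_one F 1 (by omega)
        simpa using this
  calc ∑ a : F, p.eval a
      = ∑ a : F, ∑ i ∈ range (Fintype.card F + 1), p.coeff i * a ^ i := by
        refine Finset.sum_congr rfl fun a _ => ?_
        exact eval_eq_sum_range' (by omega) a
    _ = ∑ i ∈ range (Fintype.card F + 1),
          p.coeff i * (if i = Fintype.card F - 1 then -1 else 0) := by
        rw [Finset.sum_comm]
        refine Finset.sum_congr rfl fun i hi => ?_
        rw [← Finset.mul_sum, hpow i (by simp at hi; omega)]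
    _ = _ := by
        rw [Finset.sum_eq_single (Fintype.card F - 1)]
        · simp
        · intro i _ hi; simp [hi]
        · intro h; simp at h

theorem coeff_mul_of_natDegree {F : Type*} [Field F] (h v : F[X]) (k r : ℕ) (hk : 1 ≤ k)
    (hr : 1 ≤ r) (hh : h.natDegree ≤ k) (hv : v.natDegree ≤ r) :
    (h * v).coeff (k + r - 1) = h.coeff k * v.coeff (r - 1) + h.coeff (k - 1) * v.coeff r := by
  rw [coeff_mul]
  have hne : ((k, r - 1) : ℕ × ℕ) ≠ (k - 1, r) := by
    intro h; simp at h; omega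
  rw [← Finset.sum_pair (f := fun x : ℕ × ℕ => h.coeff x.1 * v.coeff x.2) hne]
  symm
  apply Finset.sum_subset
  · intro x hx
    simp only [mem_insert, mem_singleton] at hx
    rw [HasAntidiagonal.mem_antidiagonal]
    rcases hx with rfl | rfl <;> simp only <;> omega
  · rintro ⟨i, j⟩ hx hx'
    simp only [mem_insert, mem_singleton, Prod.mk.injEq, not_or] at hx'
    rw [HasAntidiagonal.mem_antidiagonal] at hx
    simp only at hx ⊢
    rcases Nat.lt_or_ge k i with h1 | h1
    · rw [coeff_eq_zero_of_natDegree_lt (by omega), zero_mul]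
    · rw [coeff_eq_zero_of_natDegree_lt (p := v) (by omega), mul_zero]

/-! ### Distances to the twisted Reed–Solomon code -/

theorem natDegree_le_of_degree_lt_succ {F : Type*} [Field F] {p : F[X]} {n : ℕ}
    (h : p.degree < ((n + 1 : ℕ) : WithBot ℕ)) : p.natDegree ≤ n := by
  rw [degree_lt_iff_coeff_zero] at h
  exact natDegree_le_iff_coeff_eq_zero.mpr fun N hN => h N hN

/-- The code polynomials are exactly those of degree at most `k` with
`coeff k = θ * coeff (k - 1)`; this is one direction. -/
theorem natDegree_and_coeff_of_mem_Sset {F : Type*} [Field F] {k : ℕ} (hk : 1 ≤ k) {θ : F}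
    {p : F[X]} (hp : p ∈ Sset F k θ) : p.natDegree ≤ k ∧ p.coeff k = θ * p.coeff (k - 1) := by
  obtain ⟨f, rfl⟩ := hp
  obtain ⟨j, rfl⟩ : ∃ j, k = j + 1 := ⟨k - 1, by omega⟩
  simp only [Nat.add_sub_cancel]
  have hs : (∑ i ∈ range j, C (f i) * X ^ i : F[X]).natDegree ≤ j := by
    refine natDegree_sum_le_of_forall_le _ _ fun i hi => ?_
    exact (natDegree_C_mul_X_pow_le _ _).trans (Finset.mem_range.mp hi).le
  constructor
  · refine (natDegree_add_le _ _).trans (max_le (by omega) ?_)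
    compute_degree
  · simp only [coeff_add, finsetSum_coeff, coeff_C_mul, coeff_X_pow]
    rw [Finset.sum_eq_zero, Finset.sum_eq_zero]
    · simp
      ring
    · intro i hi; simp at hi; simp; omega
    · intro i hi; simp at hi; simp; omega

theorem mem_Sset_of_natDegree_of_coeff {F : Type*} [Field F] {k : ℕ} (hk : 1 ≤ k) {θ : F}
    {p : F[X]} (hd : p.natDegree ≤ k) (hc : p.coeff k = θ * p.coeff (k - 1)) :
    p ∈ Sset F k θ := by
  obtain ⟨j, rfl⟩ : ∃ j, k = j + 1 := ⟨k - 1, by omega⟩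
  refine ⟨p.coeff, ?_⟩
  simp only [Nat.add_sub_cancel] at hc ⊢
  conv_lhs => rw [p.as_sum_range_C_mul_X_pow' (n := j + 1 + 1) (by omega)]
  rw [Finset.sum_range_succ, Finset.sum_range_succ, hc, map_mul]
  ring

theorem zero_mem_Sset {F : Type*} [Field F] {k : ℕ} {θ : F} : (0 : F[X]) ∈ Sset F k θ :=
  ⟨0, by simp⟩

theorem distTo_le_card {F : Type*} [Field F] [DecidableEq F] {q : ℕ}
    {α : Fin q → F} (hα : Function.Bijective α) {k : ℕ} {θ : F} (f : F → F) {h : F[X]}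
    (hh : h ∈ Sset F k θ) (W : Finset F) (hW : ∀ a, a ∉ W → h.eval a = f a) :
    distTo (fun j => f (α j)) (TRS α k θ) ≤ W.card := by
  refine le_trans (Nat.sInf_le ⟨_, ⟨h, hh, rfl⟩, rfl⟩) ?_
  refine Finset.card_le_card_of_injOn α ?_ hα.1.injOn
  intro j hj
  simp only [coe_filter, mem_univ, true_and] at hj
  by_contra hjW
  exact hj (hW _ hjW).symm

/-- Criterion for a word to lie within distance `|W| = q - k - 1` of the code. Let `h` interpolate
`f` off `W`, so that `deg h ≤ k`. Since `v = ∏_{a ∈ W} (X - a) · (X - b)` vanishes on `W`, the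
hypothesis says that `Σ_a (h v)(a) = 0`, that is, the coefficient of `X^(q-1)` in `h v` vanishes.
As `v` has root sum `τ = 1/θ`, this is the twist condition on the top two coefficients of `h`. -/
theorem exists_Sset_of_annihilated {F : Type*} [Field F] [Fintype F] [DecidableEq F]
    (hq : 2 < Fintype.card F) {k : ℕ} (hk : 1 ≤ k) {θ τ : F} (hτ : θ * τ = 1) (f : F → F)
    (W : Finset F) (b : F) (hW : k + 1 + W.card = Fintype.card F) (hb : ∑ a ∈ W, a + b = τ)
    (hL : ∑ a : F, f a * ((∏ a ∈ W, (X - C a)) * (X - C b)).eval a = 0) :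
    ∃ h ∈ Sset F k θ, ∀ a, a ∉ W → h.eval a = f a := by
  have hinj : Set.InjOn (id : F → F) (Wᶜ : Finset F) := Function.injective_id.injOn
  set h := Lagrange.interpolate Wᶜ id f with hh
  have hev : ∀ a, a ∉ W → h.eval a = f a := fun a ha =>
    Lagrange.eval_interpolate_at_node f hinj (by simpa using ha)
  have hdeg : h.natDegree ≤ k := by
    have h1 := Lagrange.degree_interpolate_lt f hinj
    rw [card_compl, show Fintype.card F - W.card = k + 1 by omega, ← hh] at h1
    have := natDegree_le_of_degree_lt_succ h1
    omega
  refine ⟨h, mem_Sset_of_natDegree_of_coeff hk hdeg ?_, hev⟩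
  set w : F[X] := ∏ a ∈ W, (X - C a) with hw
  set v := w * (X - C b) with hv
  have hwm : w.Monic := monic_prod_of_monic _ _ fun a _ => monic_X_sub_C a
  have hwd : w.natDegree = W.card := by
    rw [hw, natDegree_prod_of_monic _ _ fun a _ => monic_X_sub_C a]; simp
  have hvm : v.Monic := hwm.mul (monic_X_sub_C b)
  have hvd : v.natDegree = W.card + 1 := by
    rw [hv, hwm.natDegree_mul (monic_X_sub_C b), hwd, natDegree_X_sub_C]
  have hv1 : v.coeff (W.card + 1) = 1 := by rw [← hvd]; exact hvm
  have hv0 : v.coeff W.card = -τ := by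
    rcases Nat.eq_zero_or_pos W.card with h0 | h0
    · have : W = ∅ := Finset.card_eq_zero.mp h0
      subst this
      simp [hv, hw] at hb ⊢
      exact hb
    · have e1 : w.coeff (W.card - 1) = -∑ a ∈ W, a := prod_X_sub_C_coeff_card_pred W id h0
      have e2 : w.coeff W.card = 1 := by rw [← hwd]; exact hwm
      have e3 := coeff_mul_X_sub_C (p := w) (r := b) (a := W.card - 1)
      rw [Nat.sub_add_cancel h0, e1, e2, ← hv] at e3
      rw [e3, ← hb]; ring
  have hsum : ∑ a : F, (h * v).eval a = 0 := by
    rw [← hL]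
    refine Finset.sum_congr rfl fun a _ => ?_
    rw [eval_mul]
    by_cases ha : a ∈ W
    · have : v.eval a = 0 := by
        rw [hv, hw, eval_mul, eval_prod, Finset.prod_eq_zero ha (by simp), zero_mul]
      rw [this]; simp
    · rw [hev a ha]
  rw [sum_eval_eq hq _ (natDegree_mul_le.trans (by omega)),
    show Fintype.card F - 1 = k + (W.card + 1) - 1 by omega,
    coeff_mul_of_natDegree h v k (W.card + 1) hk (by omega) hdeg hvd.le, Nat.add_sub_cancel,
    hv1, hv0] at hsum
  linear_combination (-h.coeff k) * hτ + θ * hsum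

/-- Every word agrees with a codeword on some `k` points. Interpolation on a set `Z` of `k` points
with `1 + θ Σ Z ≠ 0` leaves the freedom of a multiple of `∏_{z ∈ Z} (X - z)`, which is used to
satisfy the twist condition; one of any two sets differing in a single element is suitable. -/
theorem exists_Sset_agree {F : Type*} [Field F] [Fintype F] [DecidableEq F]
    {k : ℕ} (hk : 1 ≤ k) (hkq : k < Fintype.card F) {θ : F} (hθ : θ ≠ 0) (f : F → F) :
    ∃ h ∈ Sset F k θ, ∃ W : Finset F, W.card = Fintype.card F - k ∧
      ∀ a, a ∉ W → h.eval a = f a := by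
  obtain ⟨T, -, hT⟩ := Finset.exists_subset_card_eq (s := (univ : Finset F)) (n := k - 1)
    (by rw [card_univ]; omega)
  have h1 : 1 < (Tᶜ).card := by rw [card_compl]; omega
  obtain ⟨a, ha, b, hb, hab⟩ := Finset.one_lt_card.mp h1
  rw [mem_compl] at ha hb
  obtain ⟨Z, hZ, hZs⟩ : ∃ Z : Finset F, Z.card = k ∧ 1 + θ * ∑ z ∈ Z, z ≠ 0 := by
    by_contra! h
    have e1 := h (insert a T) (by rw [card_insert_of_notMem ha]; omega)
    have e2 := h (insert b T) (by rw [card_insert_of_notMem hb]; omega)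
    rw [sum_insert ha] at e1
    rw [sum_insert hb] at e2
    apply hab
    apply mul_left_cancel₀ hθ
    linear_combination e1 - e2
  have hinj : Set.InjOn (id : F → F) Z := Function.injective_id.injOn
  set p := Lagrange.interpolate Z id f with hp
  have hdeg : p.natDegree ≤ k - 1 := by
    have h1 := Lagrange.degree_interpolate_lt f hinj
    rw [hZ, ← hp, show k = k - 1 + 1 by omega] at h1
    have := natDegree_le_of_degree_lt_succ h1
    omega
  set w : F[X] := ∏ z ∈ Z, (X - C z) with hw
  have hwm : w.Monic := monic_prod_of_monic _ _ fun a _ => monic_X_sub_C a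
  have hwd : w.natDegree = k := by
    rw [hw, natDegree_prod_of_monic _ _ fun a _ => monic_X_sub_C a]; simp [hZ]
  have e1 : w.coeff (k - 1) = -∑ z ∈ Z, z := by
    have := prod_X_sub_C_coeff_card_pred Z (id : F → F) (by omega)
    rw [hZ] at this; exact this
  have e2 : w.coeff k = 1 := by rw [← hwd]; exact hwm
  set c := θ * p.coeff (k - 1) / (1 + θ * ∑ z ∈ Z, z) with hc
  have hc' : c * (1 + θ * ∑ z ∈ Z, z) = θ * p.coeff (k - 1) := by rw [hc]; field_simp
  refine ⟨p + C c * w, mem_Sset_of_natDegree_of_coeff hk ?_ ?_, Zᶜ, ?_, ?_⟩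
  · refine (natDegree_add_le _ _).trans (max_le (by omega) ?_)
    exact (natDegree_C_mul_le _ _).trans hwd.le
  · rw [coeff_add, coeff_add, coeff_C_mul, coeff_C_mul, e1, e2,
      coeff_eq_zero_of_natDegree_lt (by omega)]
    linear_combination hc'
  · rw [card_compl, hZ]
  · intro a ha
    have ha : a ∈ Z := by simpa using ha
    rw [eval_add, eval_mul, hw, eval_prod, Finset.prod_eq_zero ha (by simp), mul_zero, add_zero]
    exact Lagrange.eval_interpolate_at_node f hinj ha

/-- A word orthogonal to all monomials of degree at most `r - 2` is interpolated by a polynomial of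
degree at most `q - r`: the sums against `X^0, X^1, …` are, up to sign, the coefficients of
`X^(q-1), X^(q-2), …`. -/
theorem exists_poly_of_annihilated {F : Type*} [Field F] [Fintype F] [DecidableEq F]
    (hq : 2 < Fintype.card F) (f : F → F) (r : ℕ) (hr : r ≤ Fintype.card F)
    (hL : ∀ i, i + 2 ≤ r → ∑ a : F, f a * a ^ i = 0) (hr1 : 1 ≤ r) :
    ∃ p : F[X], p.natDegree ≤ Fintype.card F - r ∧ ∀ a, p.eval a = f a := by
  have hinj : Set.InjOn (id : F → F) (univ : Finset F) := Function.injective_id.injOn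
  set p := Lagrange.interpolate univ id f with hp
  have hev : ∀ a, p.eval a = f a := fun a =>
    Lagrange.eval_interpolate_at_node f hinj (mem_univ a)
  refine ⟨p, ?_, hev⟩
  have hind : ∀ i, i + 1 ≤ r → p.natDegree ≤ Fintype.card F - 1 - i := by
    intro i
    induction i with
    | zero =>
      intro _
      have h1 := Lagrange.degree_interpolate_lt f hinj
      rw [card_univ, ← hp, show Fintype.card F = Fintype.card F - 1 + 1 by omega] at h1
      have := natDegree_le_of_degree_lt_succ h1
      omega
    | succ i ih =>
      intro hi
      have h1 := ih (by omega)
      have h2 := hL i (by omega)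
      have h3 : ∑ a : F, (p * X ^ i).eval a = 0 := by
        rw [← h2]
        refine Finset.sum_congr rfl fun a _ => ?_
        rw [eval_mul, hev]; simp
      rw [sum_eval_eq hq _ (natDegree_mul_le.trans (by rw [natDegree_X_pow]; omega)),
        show Fintype.card F - 1 = Fintype.card F - 1 - i + i by omega, coeff_mul_X_pow,
        neg_eq_zero] at h3
      by_contra hcon
      have h4 : p.natDegree = Fintype.card F - 1 - i := by omega
      rw [← h4] at h3
      have h5 : p = 0 := leadingCoeff_eq_zero.mp h3
      rw [h5] at hcon
      simp at hcon
  have := hind (r - 1) (by omega)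
  omega

/-- For `p` in `Sset F k θ`, the polynomial `a X^k + g - p` violates the twist condition, hence is
nonzero, and it has at most `k` roots. -/
theorem le_distTo {F : Type*} [Field F] [Fintype F] [DecidableEq F] {q : ℕ}
    (hq : q = Fintype.card F)
    {α : Fin q → F} (hα : Function.Bijective α) {k : ℕ} (hk : 1 ≤ k) {θ : F}
    {a : F} (ha : a ≠ 0) {g : F[X]} (hg : g ∈ Sset F k θ) :
    q - k ≤ distTo (fun j => (C a * X ^ k + g).eval (α j)) (TRS α k θ) := by
  refine le_csInf ⟨_, _, ⟨0, zero_mem_Sset, rfl⟩, rfl⟩ ?_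
  rintro d ⟨c, ⟨p, hp, rfl⟩, rfl⟩
  obtain ⟨hg1, hg2⟩ := natDegree_and_coeff_of_mem_Sset hk hg
  obtain ⟨hp1, hp2⟩ := natDegree_and_coeff_of_mem_Sset hk hp
  set P := C a * X ^ k + g - p with hP
  have hP0 : P ≠ 0 := by
    intro h
    have c1 : P.coeff k = 0 := by rw [h]; simp
    have c0 : P.coeff (k - 1) = 0 := by rw [h]; simp
    have hne : k - 1 ≠ k := by omega
    rw [hP] at c1 c0
    simp only [coeff_sub, coeff_add, coeff_C_mul, coeff_X_pow, hg2, hp2, if_true, mul_one,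
      hne, if_false, mul_zero, zero_add] at c1 c0
    apply ha
    linear_combination c1 - θ * c0
  have hPd : P.natDegree ≤ k := by
    rw [hP]
    refine (natDegree_sub_le _ _).trans (max_le ((natDegree_add_le _ _).trans (max_le ?_ hg1)) hp1)
    exact natDegree_C_mul_X_pow_le _ _
  have hroots := card_roots_le_of_natDegree hP0 hPd
  have hagree : (univ.filter fun j : Fin q =>
      (C a * X ^ k + g).eval (α j) = p.eval (α j)).card ≤ k := by
    refine le_trans (Finset.card_le_card_of_injOn α ?_ hα.1.injOn) hroots
    intro j hj
    simp only [coe_filter, mem_univ, true_and, Set.mem_ofPred_eq] at hj ⊢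
    rw [hP, eval_sub, hj, sub_self]
  have hsplit := Finset.card_filter_add_card_filter_not (s := (univ : Finset (Fin q)))
    (fun j : Fin q => (C a * X ^ k + g).eval (α j) = p.eval (α j))
  rw [card_univ, Fintype.card_fin] at hsplit
  have : hammingDist (fun j => (C a * X ^ k + g).eval (α j)) (fun j => p.eval (α j))
      = (univ.filter fun j : Fin q =>
      ¬ (C a * X ^ k + g).eval (α j) = p.eval (α j)).card := rfl
  omega

theorem covRad_eq_of_le_of_le {F : Type*} [DecidableEq F] {n : ℕ} {K : Set (Fin n → F)} {R : ℕ}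
    (hle : ∀ u, distTo u K ≤ R) (hge : ∃ u, R ≤ distTo u K) : covRad K = R := by
  obtain ⟨u, hu⟩ := hge
  refine IsGreatest.csSup_eq ⟨⟨u, le_antisymm (hle u) hu⟩, ?_⟩
  rintro d ⟨v, rfl⟩
  exact hle v

/-- Let `q` be odd with `3q + 3√q - 7 ≤ 4k` (in ℝ) and `k ≤ q - 4`. Then
`u ∈ 𝔽_q^q` is a deep hole of `TRS_k(𝔽_q, θ)` iff `u = u_{a x^k + g}` for some `a ≠ 0` and
`g ∈ S_{k,θ}`. -/
theorem deep_holes_odd {F : Type*} [Field F] [Fintype F] [DecidableEq F]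
    (q : ℕ) (hq : q = Fintype.card F) (hodd : Odd q)
    (k : ℕ) (hk3 : 3 * (q : ℝ) + 3 * Real.sqrt (q : ℝ) - 7 ≤ 4 * (k : ℝ)) (hk4 : k ≤ q - 4)
    (θ : F) (hθ : θ ≠ 0) (α : Fin q → F) (hα : Function.Bijective α) (u : Fin q → F) :
    IsDeepHole (TRS α k θ) u ↔
      ∃ a : F, a ≠ 0 ∧ ∃ g ∈ Sset F k θ,
        u = fun j => (Polynomial.C a * Polynomial.X ^ k + g).eval (α j) := by
  have hq2 : 2 ≤ q := by rw [hq]; exact Fintype.one_lt_card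
  have hF : ringChar F ≠ 2 := by
    intro h
    have := (FiniteField.even_card_iff_char_two (F := F)).mp h
    rw [← hq] at this
    exact absurd hodd (by rw [Nat.not_odd_iff]; exact this)
  have hsnn : 0 ≤ √(q : ℝ) := Real.sqrt_nonneg _
  have hsq : √(q : ℝ) ^ 2 = q := Real.sq_sqrt (by positivity)
  have hq4 : 4 ≤ q := by
    by_contra h
    have h0 : k = 0 := by omega
    have h3 : 3 ≤ q := by obtain ⟨j, rfl⟩ := hodd; omega
    have h3' : (3 : ℝ) ≤ q := by exact_mod_cast h3
    rw [h0] at hk3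
    norm_num at hk3
    linarith
  have hk4' : (k : ℝ) + 4 ≤ q := by exact_mod_cast (by omega : k + 4 ≤ q)
  have hq25 : 25 ≤ q := by
    have h24 : 23 < q := by
      have : (23 : ℝ) < q := by nlinarith
      exact_mod_cast this
    obtain ⟨j, rfl⟩ := hodd
    omega
  have hs : 5 ≤ √(Fintype.card F : ℝ) := by
    rw [← hq]
    apply Real.le_sqrt_of_sq_le
    have : (25 : ℝ) ≤ q := by exact_mod_cast hq25
    linarith
  have hk1 : 1 ≤ k := by
    have : (25 : ℝ) ≤ q := by exact_mod_cast hq25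
    have h0 : (0 : ℝ) < k := by linarith
    exact_mod_cast h0
  let e := Equiv.ofBijective α hα
  have hfac : ∀ u : Fin q → F, u = fun j => (u ∘ e.symm) (α j) := by
    intro u
    funext j
    have : e.symm (α j) = j := e.symm_apply_apply j
    simp [this]
  have hle : ∀ u : Fin q → F, distTo u (TRS α k θ) ≤ q - k := by
    intro u
    obtain ⟨h, hh, W, hW, hev⟩ := exists_Sset_agree hk1 (by omega : k < Fintype.card F) hθ
      (u ∘ e.symm)
    have := distTo_le_card hα _ hh W hev
    rw [← hfac u] at this
    omega
  -- the word of `X ^ k` attains the upper bound `q - k`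
  have hcov : covRad (TRS α k θ) = q - k :=
    covRad_eq_of_le_of_le hle ⟨_, le_distTo hq hα hk1 one_ne_zero zero_mem_Sset⟩
  rw [IsDeepHole, hcov]
  constructor
  · intro hu
    set f := u ∘ e.symm with hf
    have huf : u = fun j => f (α j) := hfac u
    let L : F[X] →ₗ[F] F := ∑ a : F, f a • Polynomial.leval a
    have hL : ∀ p, L p = ∑ a : F, f a * p.eval a := by
      intro p; simp [L, LinearMap.sum_apply, leval_apply]
    -- `L` kills all polynomials of degree at most `q - k - 2`
    have hzero : ∀ p : F[X], p.natDegree ≤ q - k - 4 + 2 → L p = 0 := by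
      by_contra! hcon
      obtain ⟨W, b, hW, hb, hLW⟩ := exists_split_annihilated hF hs (q - k - 4) (by
        rw [← hq]
        have : ((q - k - 4 : ℕ) : ℝ) = q - k - 4 := by
          rw [Nat.cast_sub (by omega), Nat.cast_sub (by omega)]; norm_num
        rw [this]
        linarith) L hcon θ⁻¹
      rw [hL] at hLW
      obtain ⟨h, hh, hev⟩ := exists_Sset_of_annihilated (by omega) hk1
        (mul_inv_cancel₀ hθ) f W b (by omega) hb hLW
      have := distTo_le_card hα f hh W hev
      rw [← huf] at this
      omega
    obtain ⟨p, hp, hev⟩ := exists_poly_of_annihilated (by omega) f (q - k) (by omega)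
      (fun i hi => by
        have := hzero (X ^ i) (by rw [natDegree_X_pow]; omega)
        rw [hL] at this
        simpa using this) (by omega)
    have hpk : p.natDegree ≤ k := by omega
    set a := p.coeff k - θ * p.coeff (k - 1) with ha
    have hne : k - 1 ≠ k := by omega
    have hg : p - C a * X ^ k ∈ Sset F k θ := by
      refine mem_Sset_of_natDegree_of_coeff hk1 ?_ ?_
      · exact (natDegree_sub_le _ _).trans (max_le hpk (natDegree_C_mul_X_pow_le _ _))
      · simp only [coeff_sub, coeff_C_mul, coeff_X_pow, if_true, hne, if_false]
        rw [ha]; ring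
    refine ⟨a, ?_, _, hg, ?_⟩
    · intro ha0
      rw [ha0, C_0, zero_mul, sub_zero] at hg
      have := distTo_le_card hα f hg ∅ fun a _ => hev a
      rw [← huf, card_empty] at this
      omega
    · rw [add_sub_cancel]
      rw [huf]
      funext j
      exact (hev _).symm
  · rintro ⟨a, ha, g, hg, rfl⟩
    exact le_antisymm (hle _) (le_distTo hq hα hk1 ha hg)
end
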